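/- arXiv:2103.07650 — 2 statements merged into one kernel-verified Lean document; each statement's English description precedes it below -/
import Mathlib

section
/- Let n ≥ 2 and let σ satisfy 1/2 < 1 − σ < n/2. Define p₁ and p₂ by 1/p₁ = 1/2 + (1−σ)/n and 1/p₂ = 1/2 + (1/2−σ)/(n−1). Then there exists a constant C > 0 such that for all f, g ∈ 𝒮(ℝⁿ), every C^∞ function F on [0,∞) × ℝⁿ Schwartz in x, and every C^∞ function u on [0,∞) × ℝⁿ Schwartz in x solving ∂_t²u − Δu = F with u(0,·) = f and ∂_t u(0,·) = g, one has for all t ≥ 0: ‖|D|^σ u(t,·)‖_{L²} ≤ ‖|D|^σ f‖_{L²} + ‖|D|^{σ−1} g‖_{L²} + C ∫_0^t ‖χ_{1,τ} F(τ,·)‖_{L^{p₁}} dτ + C ∫_0^t ⟨τ⟩^{−n/2+1−σ} ‖χ_{2,τ} F(τ,·)‖_{1,p₂} dτ. -/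
/-!
The proof is by duality. Let `P` be the Fourier transform of a compactly supported smooth `ψ`, and
let `W` be the free wave with `W = 0`, `∂_t W = ψ` at time `t`, evolved backwards. `W(τ)` has
compact support by finite speed of propagation (`wave_eq_zero`, an energy estimate on cones), so
Green's identity may be integrated over `[0, t] × ℝⁿ` without decay assumptions on `u` that are
uniform in time (`pairing_real`):

  `⟨u(t), ψ⟩ = ⟨f, ∂_t W(0)⟩ - ⟨g, W(0)⟩ - ∫_0^t ⟨F(τ), W(τ)⟩ dτ`.

On the Fourier side `∂_t W` and `W` are `ψ̂` times `cos` and `sin / (2 π |ξ|)`, so `∂_t W` is bounded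
in `Ḣ^(-σ)` and `W` in `Ḣ^(1-σ)` by `M = ‖ψ‖_{Ḣ^(-σ)}`. The terms with `f` and `g` are then bounded by
Cauchy–Schwarz with constant one (`norm_pairing_le`). The forcing term is split at `|x| = (1 + τ) / 2`:
inside, the Sobolev embedding `Ḣ^(1-σ) ⊂ L^{p₁'}` is used (`dual_ball`), outside, the trace embedding
of `Ḣ^(1-σ)` into `L^{p₂'}` of each sphere (`dual_sphere`), whose scaling gives the weight in `τ`.

Both embeddings are instances of one inequality, `trace_sobolev`, for measures `μ` of dimension `d`
in the sense that Gaussians of width `1 / R` have `μ`-mass `O(R^(-d))`; Lebesgue measure has `d = n`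
and the surface measure of any sphere has `d = n - 1`, uniformly in the radius. It is proved by
layer-cake integration: at each height the low frequencies are bounded pointwise (`low_freq`), and
the high ones by an `L²` estimate for the Fourier extension operator of `μ` (`extOp_high`).

Finally the functions `|ξ|^(-σ) ψ̂` are dense in `L²` (`wSub_orthogonal`), so the tested inequality
`tested_bound` gives the bound for `‖|D|^σ u(t)‖` (`DsN_le_of_tested`).
-/

open MeasureTheory Real ENNReal FourierTransform
open scoped ContDiff

noncomputable section

/-- Euclidean space ℝⁿ. -/
abbrev Spc (n : ℕ) := EuclideanSpace ℝ (Fin n)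

/-- Space-time ℝ × ℝⁿ. -/
abbrev STn (n : ℕ) := ℝ × Spc n

variable {n : ℕ}

/-- Directional derivative in the space-time direction `v`. -/
def dirD (v : STn n) (f : STn n → ℝ) : STn n → ℝ := fun p => fderiv ℝ f p v

/-- Time derivative ∂_t. -/
def dtD : (STn n → ℝ) → STn n → ℝ := dirD (1, 0)

/-- Spatial derivative ∂_j. -/
def dxD (j : Fin n) : (STn n → ℝ) → STn n → ℝ := dirD (0, EuclideanSpace.single j 1)

/-- Spatial Laplacian. -/
def lapD (f : STn n → ℝ) : STn n → ℝ := fun p => ∑ j, dxD j (dxD j f) p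

/-- d'Alembertian □ = ∂_t² − Δ. -/
def boxD (f : STn n → ℝ) : STn n → ℝ := fun p => dtD (dtD f) p - lapD f p

/-- Lorentz boost L_j = t ∂_j + x_j ∂_t. -/
def LD (j : Fin n) (f : STn n → ℝ) : STn n → ℝ := fun p => p.1 * dxD j f p + p.2 j * dtD f p

/-- Rotation Ω_{jk} = x_j ∂_k − x_k ∂_j. -/
def RotD (j k : Fin n) (f : STn n → ℝ) : STn n → ℝ := fun p => p.2 j * dxD k f p - p.2 k * dxD j f p

/-- Scaling S = t ∂_t + x·∇. -/
def SD (f : STn n → ℝ) : STn n → ℝ := fun p => p.1 * dtD f p + ∑ j, p.2 j * dxD j f p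

/-- Index type for the Klainerman vector fields. -/
def GIdx (n : ℕ) := Option (Fin n) ⊕ Fin n ⊕ (Fin n × Fin n) ⊕ Unit

instance : Fintype (GIdx n) := by unfold GIdx; infer_instance
instance : DecidableEq (GIdx n) := by unfold GIdx; infer_instance

/-- The Klainerman vector field with index `i`. -/
def Gop : GIdx n → (STn n → ℝ) → STn n → ℝ
  | Sum.inl none => dtD
  | Sum.inl (some j) => dxD j
  | Sum.inr (Sum.inl j) => LD j
  | Sum.inr (Sum.inr (Sum.inl jk)) => RotD jk.1 jk.2
  | Sum.inr (Sum.inr (Sum.inr _)) => SD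

/-- Iterated composition Γ^α along a word of indices. -/
def GwL : List (GIdx n) → (STn n → ℝ) → STn n → ℝ
  | [], f => f
  | a :: l, f => Gop a (GwL l f)

/-- Sum of a quantity over all products of at most `N` Klainerman vector fields. -/
def SumW (N : ℕ) (Φ : (STn n → ℝ) → ℝ≥0∞) (f : STn n → ℝ) : ℝ≥0∞ :=
  ∑ m ∈ Finset.range (N + 1), ∑ w : Fin m → GIdx n, Φ (GwL (List.ofFn w) f)

/-- Pointwise norm of the full space-time gradient ∂u = (∂_t u, ∇_x u). -/
def gradN (f : STn n → ℝ) (p : STn n) : ℝ := Real.sqrt ((dtD f p) ^ 2 + ∑ j, (dxD j f p) ^ 2)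

/-- Fourier transform (in space) of a real valued function. -/
def fourierS (g : Spc n → ℝ) : Spc n → ℂ := 𝓕 (fun x => (g x : ℂ))

/-- ‖ |D|^s g ‖_{L²}, i.e. the L² norm of ξ ↦ |ξ|^s (ℱ g)(ξ). -/
def DsN (s : ℝ) (g : Spc n → ℝ) : ℝ≥0∞ :=
  eLpNorm (fun ξ : Spc n => ‖ξ‖ ^ s * ‖fourierS g ξ‖) 2 volume

/-- The surface measure on the unit sphere of ℝⁿ. -/
def sphM (n : ℕ) : Measure (Metric.sphere (0 : Spc n) 1) := (volume : Measure (Spc n)).toSphere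

/-- The L^q norm of g(r ω) over the unit sphere. -/
def sphN (n : ℕ) (q : ℝ) (g : Spc n → ℝ) (r : ℝ) : ℝ≥0∞ :=
  (∫⁻ o, (‖g (r • (o : Spc n))‖₊ : ℝ≥0∞) ^ q ∂(sphM n)) ^ (1 / q)

/-- The mixed norm ‖g‖_{p,q} = (∫_0^∞ ‖g(r·)‖_{L^q(S^{n-1})}^p r^{n-1} dr)^{1/p}. -/
def mixN (n : ℕ) (p q : ℝ) (g : Spc n → ℝ) : ℝ≥0∞ :=
  (∫⁻ r in Set.Ioi (0 : ℝ), (sphN n q g r) ^ p * ENNReal.ofReal (r ^ (n - 1))) ^ (1 / p)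

/-- A space-time function which is Schwartz in the space variable for each fixed time. -/
def SchwartzInX (v : STn n → ℝ) : Prop :=
  ∀ t : ℝ, ∃ φ : SchwartzMap (Spc n) ℝ, ∀ x, v (t, x) = φ x

/-- The space-time partial derivatives ∂_0 = ∂_t, ∂_j (j = 1,2,3) on ℝ × ℝ³. -/
def pd4 (α : Fin 4) : (STn 3 → ℝ) → STn 3 → ℝ := Fin.cases dtD (fun j => dxD j) α

/-- The null condition for a set of coefficients {A^{αβ}}. -/
def NullCond (A : Fin 4 → Fin 4 → ℝ) : Prop :=
  ∀ X : Fin 4 → ℝ, (X 0) ^ 2 = (X 1) ^ 2 + (X 2) ^ 2 + (X 3) ^ 2 →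
    ∑ α, ∑ β, A α β * X α * X β = 0

/-- The null form A^{αβ} (∂_α v)(∂_β w). -/
def QF (A : Fin 4 → Fin 4 → ℝ) (v w : STn 3 → ℝ) (p : STn 3) : ℝ :=
  ∑ α, ∑ β, A α β * pd4 α v p * pd4 β w p

/-- The good derivative T_j = ∂_j + (x_j/|x|) ∂_t. -/
def TD (j : Fin 3) (f : STn 3 → ℝ) (p : STn 3) : ℝ := dxD j f p + (p.2 j / ‖p.2‖) * dtD f p

end

/-! ### Polar coordinates and the Gaussian Frostman condition -/

/-- Integration in polar coordinates for nonnegative functions. -/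
lemma lintegral_polar {n : ℕ} (hn : 1 ≤ n) {f : Spc n → ℝ≥0∞} (hf : Measurable f) :
    ∫⁻ x, f x = ∫⁻ r in Set.Ioi (0 : ℝ),
      (∫⁻ o, f (r • (o : Spc n)) ∂(sphM n)) * ENNReal.ofReal (r ^ (n - 1)) := by
  have : Nonempty (Fin n) := ⟨⟨0, hn⟩⟩
  have hdim : Module.finrank ℝ (Spc n) = n := by simp
  have hmp := (volume : Measure (Spc n)).measurePreserving_homeomorphUnitSphereProd
  rw [hdim] at hmp
  have hg : Measurable (fun z : Metric.sphere (0 : Spc n) 1 × Set.Ioi (0 : ℝ) =>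
      f ((z.2 : ℝ) • (z.1 : Spc n))) := by fun_prop
  calc ∫⁻ x, f x = ∫⁻ x : ({(0 : Spc n)}ᶜ : Set (Spc n)), f x
          ∂((volume : Measure (Spc n)).comap Subtype.val) := by
        rw [lintegral_subtype_comap (measurableSet_singleton _).compl, restrict_compl_singleton]
    _ = ∫⁻ z, f ((z.2 : ℝ) • (z.1 : Spc n)) ∂((volume : Measure (Spc n)).toSphere.prod
          (Measure.volumeIoiPow (n - 1))) := by
        rw [← hmp.lintegral_comp hg]
        refine lintegral_congr fun x => ?_
        have hx : ‖(x : Spc n)‖ ≠ 0 := norm_ne_zero_iff.2 x.2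
        congr 1
        simp [smul_smul, hx]
    _ = ∫⁻ r : Set.Ioi (0 : ℝ), (∫⁻ o, f ((r : ℝ) • (o : Spc n)) ∂(sphM n))
          ∂(Measure.volumeIoiPow (n - 1)) := lintegral_prod_symm' _ hg
    _ = _ := by
        have hm : Measurable fun r : Set.Ioi (0 : ℝ) =>
            (∫⁻ o, f ((r : ℝ) • (o : Spc n)) ∂(sphM n)) := by
          have : IsFiniteMeasure (sphM n) := by unfold sphM; infer_instance
          exact Measurable.lintegral_prod_left' hg
        rw [Measure.volumeIoiPow, lintegral_withDensity_eq_lintegral_mul _ (by fun_prop) hm,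
          ← lintegral_subtype_comap measurableSet_Ioi]
        refine lintegral_congr fun r => ?_
        simp [mul_comm]

/-- The Gaussian integral in the form used below. -/
lemma lintegral_gaussian {n : ℕ} {b : ℝ} (hb : 0 < b) (x : Spc n) :
    ∫⁻ y : Spc n, ENNReal.ofReal (rexp (-b * ‖x - y‖ ^ 2)) =
      ENNReal.ofReal ((π / b) ^ ((n : ℝ) / 2)) := by
  have h1 := GaussianFourier.integral_rexp_neg_mul_sq_norm (V := Spc n) hb
  have h2 : Integrable (fun v : Spc n => rexp (-b * ‖v‖ ^ 2)) := by
    have := (GaussianFourier.integrable_cexp_neg_mul_sq_norm_add (V := Spc n) (b := (b : ℂ))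
      (by simpa using hb) 0 0).re
    refine this.congr (.of_forall fun v => ?_)
    simp [← Complex.ofReal_pow, ← Complex.ofReal_mul, ← Complex.ofReal_neg, Complex.exp_ofReal_re]
  rw [lintegral_sub_left_eq_self (fun v : Spc n => ENNReal.ofReal (rexp (-b * ‖v‖ ^ 2))) x,
    ← ofReal_integral_eq_lintegral_ofReal h2 (.of_forall fun v => (exp_pos _).le), h1]
  simp

/-- The Gaussian form of the Frostman condition of dimension `d`: the Gaussian of width `1 / R`
centred anywhere has `μ`-mass at most `B * R ^ (-d)`. -/
def GaussFrostman {n : ℕ} (μ : Measure (Spc n)) (d B : ℝ) : Prop :=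
  ∀ R : ℝ, 0 < R → ∀ x : Spc n,
    ∫⁻ y, ENNReal.ofReal (rexp (-π * R ^ 2 * ‖x - y‖ ^ 2)) ∂μ ≤ ENNReal.ofReal (B * R ^ (-d))

lemma gaussFrostman_volume (n : ℕ) : GaussFrostman (volume : Measure (Spc n)) n 1 := by
  intro R hR x
  have h := lintegral_gaussian (n := n) (b := π * R ^ 2) (by positivity) x
  simp only [neg_mul] at h ⊢
  rw [h]
  apply le_of_eq
  congr 1
  have : π / (π * R ^ 2) = R ^ (-2 : ℝ) := by
    rw [rpow_neg hR.le, Real.rpow_two]; field_simp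
  rw [this, ← rpow_mul hR.le, one_mul]
  congr 1; ring

/-- The surface measure of the sphere of radius `ρ`, as a measure on the ambient space. -/
noncomputable def sphR (n : ℕ) (ρ : ℝ) : Measure (Spc n) :=
  ENNReal.ofReal (ρ ^ (n - 1)) • (sphM n).map (fun o : Metric.sphere (0 : Spc n) 1 => ρ • (o : Spc n))

lemma lintegral_sphR {n : ℕ} (ρ : ℝ) {f : Spc n → ℝ≥0∞} (hf : Measurable f) :
    ∫⁻ x, f x ∂(sphR n ρ) =
      ENNReal.ofReal (ρ ^ (n - 1)) * ∫⁻ o, f (ρ • (o : Spc n)) ∂(sphM n) := by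
  rw [sphR, lintegral_smul_measure, lintegral_map hf (by fun_prop), smul_eq_mul]

/-- Thickening the unit sphere to the shell `1 ≤ r ≤ 1 + 1 / R` compares the Gaussian mass of
the surface measure with a Gaussian integral over the whole space. -/
lemma gauss_sphere {n : ℕ} (hn : 1 ≤ n) {R : ℝ} (hR : 0 < R) (x : Spc n) :
    ∫⁻ o, ENNReal.ofReal (rexp (-π * R ^ 2 * ‖x - (o : Spc n)‖ ^ 2)) ∂(sphM n) ≤
      ENNReal.ofReal (rexp π * 2 ^ ((n : ℝ) / 2) * R ^ (-((n : ℝ) - 1))) := by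
  set I := ∫⁻ o, ENNReal.ofReal (rexp (-π * R ^ 2 * ‖x - (o : Spc n)‖ ^ 2)) ∂(sphM n) with hI
  have hb : 0 < π * R ^ 2 / 2 := by positivity
  have hpt : ∀ r ∈ Set.Ioc (1 : ℝ) (1 + 1 / R), ∀ o : Metric.sphere (0 : Spc n) 1,
      ENNReal.ofReal (rexp (-π * R ^ 2 * ‖x - (o : Spc n)‖ ^ 2)) ≤
      ENNReal.ofReal (rexp π) *
        ENNReal.ofReal (rexp (-(π * R ^ 2 / 2) * ‖x - r • (o : Spc n)‖ ^ 2)) := by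
    intro r hr o
    rw [← ENNReal.ofReal_mul (exp_pos _).le, ← Real.exp_add]
    apply ENNReal.ofReal_le_ofReal
    apply Real.exp_le_exp.2
    have ho : ‖(o : Spc n)‖ = 1 := by simp
    have h1 : ‖x - r • (o : Spc n)‖ ≤ ‖x - (o : Spc n)‖ + 1 / R := by
      have : x - r • (o : Spc n) = (x - o) - (r - 1) • (o : Spc n) := by
        rw [sub_smul, one_smul]; abel
      rw [this]
      refine (norm_sub_le _ _).trans ?_
      rw [norm_smul, ho, mul_one, Real.norm_eq_abs, abs_of_nonneg (by linarith [hr.1])]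
      linarith [hr.2]
    have h2 : ‖x - r • (o : Spc n)‖ ^ 2 ≤ 2 * ‖x - (o : Spc n)‖ ^ 2 + 2 * (1 / R) ^ 2 := by
      have h0 := norm_nonneg (x - r • (o : Spc n))
      nlinarith [sq_nonneg (‖x - (o : Spc n)‖ - 1 / R)]
    have h3 : π * R ^ 2 / 2 * ‖x - r • (o : Spc n)‖ ^ 2 ≤
        π * R ^ 2 / 2 * (2 * ‖x - (o : Spc n)‖ ^ 2 + 2 * (1 / R) ^ 2) := by gcongr
    have h4 : π * R ^ 2 / 2 * (2 * (1 / R) ^ 2) = π := by field_simp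
    linarith
  have hle : ENNReal.ofReal (1 / R) * I ≤ ENNReal.ofReal (rexp π) *
      ENNReal.ofReal ((π / (π * R ^ 2 / 2)) ^ ((n : ℝ) / 2)) := by
    have hpol := lintegral_polar hn (f := fun y : Spc n => ENNReal.ofReal (rexp π) *
      ENNReal.ofReal (rexp (-(π * R ^ 2 / 2) * ‖x - y‖ ^ 2))) (by fun_prop)
    rw [lintegral_const_mul _ (by fun_prop), lintegral_gaussian hb x] at hpol
    rw [hpol]
    calc ENNReal.ofReal (1 / R) * I = ∫⁻ r in Set.Ioc (1 : ℝ) (1 + 1 / R), I := by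
          rw [setLIntegral_const, Real.volume_Ioc, mul_comm]; congr 2; ring
      _ ≤ ∫⁻ r in Set.Ioc (1 : ℝ) (1 + 1 / R), (∫⁻ o, ENNReal.ofReal (rexp π) *
            ENNReal.ofReal (rexp (-(π * R ^ 2 / 2) * ‖x - r • (o : Spc n)‖ ^ 2)) ∂(sphM n)) *
            ENNReal.ofReal (r ^ (n - 1)) := by
          refine setLIntegral_mono' measurableSet_Ioc fun r hr => ?_
          have h1 : (1 : ℝ≥0∞) ≤ ENNReal.ofReal (r ^ (n - 1)) := by
            rw [ENNReal.one_le_ofReal]; exact one_le_pow₀ hr.1.le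
          calc I = I * 1 := (mul_one _).symm
            _ ≤ _ := mul_le_mul' (lintegral_mono fun o => hpt r hr o) h1
      _ ≤ _ := lintegral_mono_set (fun r hr => Set.mem_Ioi.2 (lt_trans one_pos hr.1))
  have hRI : I = ENNReal.ofReal R * (ENNReal.ofReal (1 / R) * I) := by
    rw [← mul_assoc, ← ENNReal.ofReal_mul hR.le, mul_one_div_cancel hR.ne']; simp
  rw [hRI]
  refine (mul_le_mul_right hle _).trans (le_of_eq ?_)
  rw [← ENNReal.ofReal_mul (exp_pos _).le, ← ENNReal.ofReal_mul hR.le]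
  congr 1
  have h1 : π / (π * R ^ 2 / 2) = 2 * R ^ (-2 : ℝ) := by
    rw [rpow_neg hR.le, Real.rpow_two]; field_simp
  have h2 : R ^ (-((n : ℝ) - 1)) = R * R ^ (-(n : ℝ)) := by
    rw [show -((n : ℝ) - 1) = 1 + -(n : ℝ) by ring, rpow_add hR, Real.rpow_one]
  rw [h1, mul_rpow (by norm_num) (by positivity), ← rpow_mul hR.le, h2,
    show (-2 : ℝ) * ((n : ℝ) / 2) = -(n : ℝ) by ring]
  ring

lemma gaussFrostman_sphR {n : ℕ} (hn : 1 ≤ n) {ρ : ℝ} (hρ : 0 < ρ) :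
    GaussFrostman (sphR n ρ) ((n : ℝ) - 1) (rexp π * 2 ^ ((n : ℝ) / 2)) := by
  intro R hR x
  rw [lintegral_sphR _ (by fun_prop)]
  have h := gauss_sphere hn (mul_pos hR hρ) (ρ⁻¹ • x)
  have he : ∀ o : Metric.sphere (0 : Spc n) 1,
      -π * R ^ 2 * ‖x - ρ • (o : Spc n)‖ ^ 2 = -π * (R * ρ) ^ 2 * ‖ρ⁻¹ • x - (o : Spc n)‖ ^ 2 := by
    intro o
    have : x - ρ • (o : Spc n) = ρ • (ρ⁻¹ • x - (o : Spc n)) := by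
      rw [smul_sub, smul_smul, mul_inv_cancel₀ hρ.ne', one_smul]
    rw [this, norm_smul, Real.norm_eq_abs, abs_of_pos hρ]; ring
  simp_rw [he]
  refine (mul_le_mul_right h _).trans (le_of_eq ?_)
  rw [← ENNReal.ofReal_mul (by positivity)]
  congr 1
  have : ρ ^ (n - 1) = ρ ^ ((n : ℝ) - 1) := by
    rw [← Real.rpow_natCast, Nat.cast_sub hn, Nat.cast_one]
  rw [this, mul_rpow hR.le hρ.le, rpow_neg hρ.le]
  have : ρ ^ ((n : ℝ) - 1) ≠ 0 := by positivity
  field_simp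

/-! ### Fourier extension of measures satisfying the Gaussian Frostman condition -/

/-- The plane wave `exp (2 π i ⟨x, ξ⟩)`. -/
noncomputable def ek {n : ℕ} (x ξ : Spc n) : ℂ :=
  Complex.exp (((2 * π * inner ℝ x ξ : ℝ) : ℂ) * Complex.I)

lemma norm_ek {n : ℕ} (x ξ : Spc n) : ‖ek x ξ‖ = 1 := Complex.norm_exp_ofReal_mul_I _

lemma continuous_ek {n : ℕ} : Continuous fun p : Spc n × Spc n => ek p.1 p.2 := by
  unfold ek; fun_prop

lemma conj_ek {n : ℕ} (x ξ : Spc n) : (starRingEnd ℂ) (ek x ξ) = ek (-x) ξ := by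
  unfold ek
  rw [← Complex.exp_conj, map_mul, Complex.conj_ofReal, Complex.conj_I, inner_neg_left]
  push_cast; ring_nf

lemma ek_mul_ek {n : ℕ} (x y ξ : Spc n) : ek x ξ * ek y ξ = ek (x + y) ξ := by
  unfold ek
  rw [← Complex.exp_add, inner_add_left]
  push_cast; ring_nf

lemma gauss_fourier {n : ℕ} {R : ℝ} (hR : 0 < R) (z : Spc n) :
    ‖∫ ξ : Spc n, ek z ξ * (rexp (-π * ‖ξ‖ ^ 2 / R ^ 2) : ℂ)‖ =
      R ^ (n : ℝ) * rexp (-π * R ^ 2 * ‖z‖ ^ 2) := by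
  have hb : 0 < (((π / R ^ 2 : ℝ)) : ℂ).re := by rw [Complex.ofReal_re]; positivity
  have h := GaussianFourier.integral_cexp_neg_mul_sq_norm_add (V := Spc n) hb
    (2 * π * Complex.I) z
  have he : ∀ ξ : Spc n, ek z ξ * (rexp (-π * ‖ξ‖ ^ 2 / R ^ 2) : ℂ) =
      Complex.exp (-((π / R ^ 2 : ℝ) : ℂ) * (‖ξ‖ : ℂ) ^ 2 +
        2 * π * Complex.I * (inner ℝ z ξ : ℂ)) := by
    intro ξ
    rw [ek, Complex.ofReal_exp, ← Complex.exp_add]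
    push_cast; ring_nf
  simp_rw [he]
  rw [h, norm_mul]
  congr 1
  · have h1 : ((π : ℂ) / ((π / R ^ 2 : ℝ) : ℂ)) = ((R ^ 2 : ℝ) : ℂ) := by
      push_cast
      have : (π : ℂ) ≠ 0 := by exact_mod_cast pi_ne_zero
      have : (R : ℂ) ≠ 0 := by exact_mod_cast hR.ne'
      field_simp
    have hf : ((Module.finrank ℝ (Spc n) : ℂ) / 2) = (((n : ℝ) / 2 : ℝ) : ℂ) := by simp
    rw [h1, hf, ← Complex.ofReal_cpow (by positivity), Complex.norm_real, Real.norm_eq_abs,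
      abs_of_pos (by positivity), ← Real.rpow_two, ← Real.rpow_mul hR.le]
    congr 1; ring
  · have : (2 * π * Complex.I) ^ 2 * (‖z‖ : ℂ) ^ 2 / (4 * ((π / R ^ 2 : ℝ) : ℂ)) =
        ((-π * R ^ 2 * ‖z‖ ^ 2 : ℝ) : ℂ) := by
      push_cast
      have : (π : ℂ) ≠ 0 := by exact_mod_cast pi_ne_zero
      have : (R : ℂ) ≠ 0 := by exact_mod_cast hR.ne'
      field_simp
      rw [Complex.I_sq]; ring
    rw [this, ← Complex.ofReal_exp, Complex.norm_real, Real.norm_eq_abs, abs_of_pos (exp_pos _)]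

lemma integrable_gauss {n : ℕ} {R : ℝ} (hR : 0 < R) :
    Integrable (fun ξ : Spc n => rexp (-π * ‖ξ‖ ^ 2 / R ^ 2)) := by
  refine ⟨by fun_prop, ?_⟩
  have h := lintegral_gaussian (n := n) (b := π / R ^ 2) (by positivity) 0
  rw [HasFiniteIntegral]
  have he : ∀ ξ : Spc n, ‖rexp (-π * ‖ξ‖ ^ 2 / R ^ 2)‖ₑ =
      ENNReal.ofReal (rexp (-(π / R ^ 2) * ‖0 - ξ‖ ^ 2)) := by
    intro ξ
    rw [Real.enorm_of_nonneg (exp_pos _).le, zero_sub, norm_neg]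
    congr 2; ring
  simp_rw [he, h]
  exact ENNReal.ofReal_lt_top

/-- The Fourier extension `ξ ↦ ∫ h(x) exp (2 π i ⟨x, ξ⟩) dμ(x)`. -/
noncomputable def extOp {n : ℕ} (μ : Measure (Spc n)) (h : Spc n → ℂ) (ξ : Spc n) : ℂ :=
  ∫ x, h x * ek x ξ ∂μ

/-- Gaussian-averaged `L²` bound for the Fourier extension; expanding the square turns the
frequency Gaussian into a spatial one, to which the Frostman condition applies. -/
lemma extOp_gauss {n : ℕ} {μ : Measure (Spc n)} [SFinite μ] {d B : ℝ} (hμ : GaussFrostman μ d B)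
    {S : Set (Spc n)} (hS : MeasurableSet S) (hSf : μ S < ⊤) {h : Spc n → ℂ} (hh : Measurable h)
    (hhS : ∀ x, ‖h x‖ₑ ≤ S.indicator 1 x) {R : ℝ} (hR : 0 < R) :
    ∫⁻ ξ, ‖extOp μ h ξ‖ₑ ^ 2 * ENNReal.ofReal (rexp (-π * ‖ξ‖ ^ 2 / R ^ 2)) ≤
      ENNReal.ofReal (B * R ^ ((n : ℝ) - d)) * μ S := by
  set g : Spc n → ℝ := fun ξ => rexp (-π * ‖ξ‖ ^ 2 / R ^ 2) with hg
  have hgint : Integrable g := integrable_gauss hR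
  have h_int : Integrable h μ := by
    refine ⟨hh.aestronglyMeasurable, ?_⟩
    rw [HasFiniteIntegral]
    refine (lintegral_mono hhS).trans_lt ?_
    rw [lintegral_indicator_one hS]; exact hSf
  have hconj : Integrable (fun y => (starRingEnd ℂ) (h y)) μ := by
    refine h_int.congr' (Complex.continuous_conj.measurable.comp hh).aestronglyMeasurable
      (.of_forall fun x => by simp)
  set H : Spc n × Spc n → ℂ := fun z => h z.1 * (starRingEnd ℂ) (h z.2) with hH
  have hH_int : Integrable H (μ.prod μ) := h_int.mul_prod hconj
  set Φ : (Spc n × Spc n) × Spc n → ℂ := fun w => H w.1 * (g w.2 : ℂ) * ek (w.1.1 - w.1.2) w.2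
  have hΦ : Integrable Φ ((μ.prod μ).prod volume) := by
    refine (hH_int.mul_prod hgint.ofReal).mul_bdd (c := 1) ?_ (.of_forall fun w => (norm_ek _ _).le)
    exact (continuous_ek.comp (f := fun w : (Spc n × Spc n) × Spc n => (w.1.1 - w.1.2, w.2))
      (by fun_prop)).aestronglyMeasurable
  have hsq : ∀ ξ, ((‖extOp μ h ξ‖ ^ 2 * g ξ : ℝ) : ℂ) = ∫ z, Φ (z, ξ) ∂(μ.prod μ) := by
    intro ξ
    have h1 : ∀ z : Spc n × Spc n, Φ (z, ξ) =
        (g ξ : ℂ) * ((h z.1 * ek z.1 ξ) * (starRingEnd ℂ) (h z.2 * ek z.2 ξ)) := by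
      intro z
      simp only [Φ, H, map_mul, conj_ek]
      rw [sub_eq_add_neg, ← ek_mul_ek]; ring
    simp_rw [h1]
    rw [integral_const_mul, integral_prod_mul (fun x => h x * ek x ξ)
      (fun y => (starRingEnd ℂ) (h y * ek y ξ)), integral_conj]
    change _ = _ * (extOp μ h ξ * (starRingEnd ℂ) (extOp μ h ξ))
    rw [Complex.mul_conj, Complex.normSq_eq_norm_sq]
    push_cast; ring
  have hLint : Integrable (fun ξ => ‖extOp μ h ξ‖ ^ 2 * g ξ) := by
    have := hΦ.integral_prod_right.re
    refine this.congr (.of_forall fun ξ => ?_)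
    simp only
    rw [← hsq]; exact Complex.ofReal_re _
  have hswap : ((∫ ξ, ‖extOp μ h ξ‖ ^ 2 * g ξ : ℝ) : ℂ) =
      ∫ z, ∫ ξ, Φ (z, ξ) ∂(volume : Measure (Spc n)) ∂(μ.prod μ) := by
    rw [← integral_complex_ofReal]
    simp_rw [hsq]
    rw [← integral_prod_symm _ hΦ, integral_prod _ hΦ]
  have hL : ∫⁻ ξ, ‖extOp μ h ξ‖ₑ ^ 2 * ENNReal.ofReal (g ξ) =
      ENNReal.ofReal (∫ ξ, ‖extOp μ h ξ‖ ^ 2 * g ξ) := by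
    rw [ofReal_integral_eq_lintegral_ofReal hLint
      (.of_forall fun ξ => mul_nonneg (sq_nonneg _) (exp_pos _).le)]
    refine lintegral_congr fun ξ => ?_
    rw [ENNReal.ofReal_mul (sq_nonneg _), ENNReal.ofReal_pow (norm_nonneg _), ofReal_norm]
  rw [hL]
  have hnn : 0 ≤ ∫ ξ, ‖extOp μ h ξ‖ ^ 2 * g ξ :=
    integral_nonneg fun ξ => mul_nonneg (sq_nonneg _) (exp_pos _).le
  rw [show ENNReal.ofReal (∫ ξ, ‖extOp μ h ξ‖ ^ 2 * g ξ) =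
    ‖((∫ ξ, ‖extOp μ h ξ‖ ^ 2 * g ξ : ℝ) : ℂ)‖ₑ by
      rw [← ofReal_norm, Complex.norm_real, Real.norm_of_nonneg hnn], hswap]
  have hz : ∀ z : Spc n × Spc n, ‖∫ ξ, Φ (z, ξ)‖ₑ ≤ S.indicator 1 z.1 *
      (ENNReal.ofReal (R ^ (n : ℝ)) *
        ENNReal.ofReal (rexp (-π * R ^ 2 * ‖z.1 - z.2‖ ^ 2))) := by
    intro z
    have h1 : ∀ ξ, Φ (z, ξ) = H z * (ek (z.1 - z.2) ξ * (g ξ : ℂ)) := fun ξ => by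
      simp only [Φ]; ring
    simp_rw [h1]
    rw [integral_const_mul, enorm_mul, ← ofReal_norm (∫ ξ, _), gauss_fourier hR,
      ENNReal.ofReal_mul (by positivity)]
    refine mul_le_mul' ?_ le_rfl
    simp only [H]
    rw [enorm_mul]
    have h2 : ‖(starRingEnd ℂ) (h z.2)‖ₑ ≤ 1 := by
      rw [← ofReal_norm, RCLike.norm_conj, ofReal_norm]
      refine (hhS z.2).trans ?_
      exact Set.indicator_le_self' (fun _ _ => zero_le) z.2
    calc _ ≤ S.indicator 1 z.1 * (1 : ℝ≥0∞) := mul_le_mul' (hhS _) h2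
      _ = _ := mul_one _
  refine (enorm_integral_le_lintegral_enorm _).trans ((lintegral_mono hz).trans ?_)
  have hmeas : Measurable fun z : Spc n × Spc n => S.indicator (1 : Spc n → ℝ≥0∞) z.1 *
      (ENNReal.ofReal (R ^ (n : ℝ)) *
        ENNReal.ofReal (rexp (-π * R ^ 2 * ‖z.1 - z.2‖ ^ 2))) := by
    refine Measurable.mul ?_ (by fun_prop)
    exact (measurable_one.indicator hS).comp measurable_fst
  rw [lintegral_prod _ hmeas.aemeasurable]
  calc _ ≤ ∫⁻ x, S.indicator 1 x * ENNReal.ofReal (B * R ^ ((n : ℝ) - d)) ∂μ := by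
        refine lintegral_mono fun x => ?_
        simp only
        rw [lintegral_const_mul _ (by fun_prop), lintegral_const_mul _ (by fun_prop)]
        refine mul_le_mul' le_rfl ?_
        refine (mul_le_mul' le_rfl (hμ R hR x)).trans (le_of_eq ?_)
        rw [← ENNReal.ofReal_mul (by positivity)]
        congr 1
        rw [sub_eq_add_neg, Real.rpow_add hR]; ring
    _ = _ := by
        rw [lintegral_mul_const _ (measurable_one.indicator hS), lintegral_indicator_one hS,
          mul_comm]

lemma lintegral_Ioi_rpow {A γ : ℝ} (hA : 0 < A) (hγ : 0 < γ) :
    ∫⁻ R in Set.Ioi A, ENNReal.ofReal (R ^ (-γ - 1)) = ENNReal.ofReal (A ^ (-γ) / γ) := by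
  have h1 : IntegrableOn (fun R : ℝ => R ^ (-γ - 1)) (Set.Ioi A) :=
    integrableOn_Ioi_rpow_of_lt (by linarith) hA
  rw [← ofReal_integral_eq_lintegral_ofReal h1, integral_Ioi_rpow_of_lt (by linarith) hA]
  · congr 1
    rw [show -γ - 1 + 1 = -γ by ring]
    field_simp
  · filter_upwards [self_mem_ae_restrict measurableSet_Ioi] with R hR
    exact Real.rpow_nonneg (hA.le.trans (le_of_lt hR)) _

lemma lintegral_Ioc_rpow {A b : ℝ} (hA : 0 ≤ A) (hb : -1 < b) :
    ∫⁻ r in Set.Ioc 0 A, ENNReal.ofReal (r ^ b) = ENNReal.ofReal (A ^ (b + 1) / (b + 1)) := by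
  have h1 : IntegrableOn (fun r : ℝ => r ^ b) (Set.Ioc 0 A) :=
    (intervalIntegral.intervalIntegrable_rpow' hb).1
  rw [← ofReal_integral_eq_lintegral_ofReal h1, ← intervalIntegral.integral_of_le hA,
    integral_rpow (Or.inl hb)]
  · congr 1
    rw [Real.zero_rpow (by linarith), sub_zero]
  · filter_upwards [self_mem_ae_restrict measurableSet_Ioc] with R hR
    exact Real.rpow_nonneg hR.1.le _

lemma measurable_extOp {n : ℕ} {μ : Measure (Spc n)} [SFinite μ] {h : Spc n → ℂ}
    (hh : Measurable h) : Measurable (extOp μ h) := by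
  have : StronglyMeasurable (fun p : Spc n × Spc n => h p.2 * ek p.2 p.1) := by
    refine Measurable.stronglyMeasurable ?_
    refine (hh.comp measurable_snd).mul ?_
    exact (continuous_ek.comp continuous_swap).measurable
  exact (this.integral_prod_right (ν := μ)).measurable

/-- High-frequency weighted `L²` bound for the Fourier extension, by superposition of
Gaussian averages over scales `R > A`. -/
lemma extOp_high {n : ℕ} {μ : Measure (Spc n)} [SFinite μ] {d B : ℝ} (hB : 0 ≤ B)
    (hμ : GaussFrostman μ d B)
    {S : Set (Spc n)} (hS : MeasurableSet S) (hSf : μ S < ⊤) {h : Spc n → ℂ} (hh : Measurable h)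
    (hhS : ∀ x, ‖h x‖ₑ ≤ S.indicator 1 x) {A β : ℝ} (hA : 0 < A) (hβ : 0 < β)
    (hβd : (n : ℝ) - d < β) :
    ∫⁻ ξ in {ξ : Spc n | A ≤ ‖ξ‖}, ‖extOp μ h ξ‖ₑ ^ 2 * ENNReal.ofReal (‖ξ‖ ^ (-β)) ≤
      ENNReal.ofReal (β * rexp π * B / (β - (n - d)) * A ^ ((n : ℝ) - d - β)) * μ S := by
  have hSA : MeasurableSet {ξ : Spc n | A ≤ ‖ξ‖} := measurableSet_le measurable_const measurable_norm
  have hE := measurable_extOp (μ := μ) hh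
  have hpt : ∀ ξ : Spc n, A ≤ ‖ξ‖ → ENNReal.ofReal (‖ξ‖ ^ (-β)) ≤
      ENNReal.ofReal (β * rexp π) * ∫⁻ R in Set.Ioi A, ENNReal.ofReal (R ^ (-β - 1)) *
        ENNReal.ofReal (rexp (-π * ‖ξ‖ ^ 2 / R ^ 2)) := by
    intro ξ hξ
    have hξ0 : 0 < ‖ξ‖ := hA.trans_le hξ
    calc ENNReal.ofReal (‖ξ‖ ^ (-β)) = ENNReal.ofReal (β * rexp π) *
          (ENNReal.ofReal (‖ξ‖ ^ (-β) / β) * ENNReal.ofReal (rexp (-π))) := by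
          rw [← ENNReal.ofReal_mul (by positivity), ← ENNReal.ofReal_mul (by positivity)]
          congr 1
          rw [Real.exp_neg]
          have := (exp_pos π).ne'
          field_simp
      _ = ENNReal.ofReal (β * rexp π) * ∫⁻ R in Set.Ioi ‖ξ‖, ENNReal.ofReal (R ^ (-β - 1)) *
            ENNReal.ofReal (rexp (-π)) := by
          rw [lintegral_mul_const _ (by fun_prop), lintegral_Ioi_rpow hξ0 hβ]
      _ ≤ ENNReal.ofReal (β * rexp π) * ∫⁻ R in Set.Ioi ‖ξ‖, ENNReal.ofReal (R ^ (-β - 1)) *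
            ENNReal.ofReal (rexp (-π * ‖ξ‖ ^ 2 / R ^ 2)) := by
          refine mul_le_mul' le_rfl (setLIntegral_mono' measurableSet_Ioi fun R hR => ?_)
          refine mul_le_mul' le_rfl (ENNReal.ofReal_le_ofReal (Real.exp_le_exp.2 ?_))
          have hR' : ‖ξ‖ < R := hR
          have : ‖ξ‖ ^ 2 / R ^ 2 ≤ 1 := by
            rw [div_le_one (by have := hξ0.trans hR'; positivity)]
            gcongr
          rw [mul_div_assoc]
          nlinarith [pi_pos]
      _ ≤ _ := mul_le_mul' le_rfl (lintegral_mono_set (Set.Ioi_subset_Ioi hξ))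
  calc _ ≤ ∫⁻ ξ in {ξ : Spc n | A ≤ ‖ξ‖}, ∫⁻ R in Set.Ioi A,
        ENNReal.ofReal (β * rexp π) * (ENNReal.ofReal (R ^ (-β - 1)) * (‖extOp μ h ξ‖ₑ ^ 2 *
          ENNReal.ofReal (rexp (-π * ‖ξ‖ ^ 2 / R ^ 2)))) := by
        refine setLIntegral_mono' hSA fun ξ hξ => ?_
        refine (mul_le_mul' le_rfl (hpt ξ hξ)).trans (le_of_eq ?_)
        rw [← lintegral_const_mul _ (by fun_prop), ← lintegral_const_mul _ (by fun_prop)]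
        refine lintegral_congr fun R => ?_
        ring
    _ ≤ ∫⁻ ξ, ∫⁻ R in Set.Ioi A,
        ENNReal.ofReal (β * rexp π) * (ENNReal.ofReal (R ^ (-β - 1)) * (‖extOp μ h ξ‖ₑ ^ 2 *
          ENNReal.ofReal (rexp (-π * ‖ξ‖ ^ 2 / R ^ 2)))) := setLIntegral_le_lintegral _ _
    _ = ∫⁻ R in Set.Ioi A, ∫⁻ ξ,
        ENNReal.ofReal (β * rexp π) * (ENNReal.ofReal (R ^ (-β - 1)) * (‖extOp μ h ξ‖ₑ ^ 2 *
          ENNReal.ofReal (rexp (-π * ‖ξ‖ ^ 2 / R ^ 2)))) := by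
        apply lintegral_lintegral_swap
        apply Measurable.aemeasurable
        unfold Function.uncurry
        fun_prop
    _ ≤ ∫⁻ R in Set.Ioi A, ENNReal.ofReal (R ^ (-(β - (n - d)) - 1)) *
          (ENNReal.ofReal (β * rexp π * B) * μ S) := by
        refine setLIntegral_mono' measurableSet_Ioi fun R hR => ?_
        have hR0 : 0 < R := hA.trans hR
        rw [lintegral_const_mul _ (by fun_prop), lintegral_const_mul _ (by fun_prop)]
        calc _ ≤ ENNReal.ofReal (β * rexp π) * (ENNReal.ofReal (R ^ (-β - 1)) *
              (ENNReal.ofReal (B * R ^ ((n : ℝ) - d)) * μ S)) :=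
              mul_le_mul' le_rfl (mul_le_mul' le_rfl (extOp_gauss hμ hS hSf hh hhS hR0))
          _ = _ := by
              rw [← mul_assoc, ← mul_assoc, ← mul_assoc, ← ENNReal.ofReal_mul (by positivity),
                ← ENNReal.ofReal_mul (by positivity), ← ENNReal.ofReal_mul (by positivity)]
              congr 2
              rw [show -(β - (n - d)) - 1 = (-β - 1) + ((n : ℝ) - d) by ring, Real.rpow_add hR0]
              ring
    _ = _ := by
        rw [lintegral_mul_const _ (by fun_prop), lintegral_Ioi_rpow hA (by linarith), ← mul_assoc,
          ← ENNReal.ofReal_mul (div_nonneg (by positivity) (by linarith))]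
        congr 2
        rw [show -(β - ((n : ℝ) - d)) = n - d - β by ring]
        ring

/-! ### The trace Sobolev inequality -/

lemma lintegral_cs {α : Type*} [MeasurableSpace α] {μ : Measure α} {f g : α → ℝ≥0∞}
    (hf : AEMeasurable f μ) (hg : AEMeasurable g μ) :
    (∫⁻ x, f x * g x ∂μ) ^ 2 ≤ (∫⁻ x, f x ^ 2 ∂μ) * ∫⁻ x, g x ^ 2 ∂μ := by
  have h := ENNReal.lintegral_mul_le_Lp_mul_Lq μ Real.HolderConjugate.two_two hf hg
  simp only [Pi.mul_apply, ENNReal.rpow_two] at h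
  calc _ ≤ ((∫⁻ x, f x ^ 2 ∂μ) ^ (1 / 2 : ℝ) * (∫⁻ x, g x ^ 2 ∂μ) ^ (1 / 2 : ℝ)) ^ 2 :=
        pow_le_pow_left' h 2
    _ = _ := by
      rw [mul_pow, ← ENNReal.rpow_two, ← ENNReal.rpow_two, ← ENNReal.rpow_mul, ← ENNReal.rpow_mul]
      norm_num

lemma sphM_univ_pos {n : ℕ} (hn : 1 ≤ n) : 0 < (sphM n Set.univ).toReal := by
  have : Nonempty (Fin n) := ⟨⟨0, hn⟩⟩
  have : IsFiniteMeasure (sphM n) := by unfold sphM; infer_instance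
  refine ENNReal.toReal_pos ?_ (measure_ne_top _ _)
  rw [Measure.measure_univ_ne_zero]
  unfold sphM
  exact Measure.toSphere_ne_zero _

instance {n : ℕ} : IsFiniteMeasure (sphM n) := by unfold sphM; infer_instance

lemma lintegral_ball_rpow {n : ℕ} (hn : 1 ≤ n) {A b : ℝ} (hA : 0 < A) (hb : -(n : ℝ) < b) :
    ∫⁻ ξ in {ξ : Spc n | ‖ξ‖ < A}, ENNReal.ofReal (‖ξ‖ ^ b) ≤
      ENNReal.ofReal ((sphM n Set.univ).toReal / (n + b) * A ^ (n + b)) := by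
  have hS : MeasurableSet {ξ : Spc n | ‖ξ‖ < A} := measurableSet_lt measurable_norm measurable_const
  rw [← lintegral_indicator hS, lintegral_polar hn (by
    refine Measurable.indicator ?_ hS; fun_prop)]
  calc _ ≤ ∫⁻ r in Set.Ioi (0 : ℝ), (Set.Ioc 0 A).indicator
        (fun r => sphM n Set.univ * ENNReal.ofReal (r ^ (n + b - 1))) r := by
        refine setLIntegral_mono' measurableSet_Ioi fun r hr => ?_
        have hr0 : 0 < r := hr
        have hnorm : ∀ o : Metric.sphere (0 : Spc n) 1, ‖r • (o : Spc n)‖ = r := fun o => by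
          rw [norm_smul, Real.norm_of_nonneg hr0.le]; simp
        by_cases hrA : r < A
        · have hmem : r ∈ Set.Ioc 0 A := ⟨hr0, hrA.le⟩
          rw [Set.indicator_of_mem hmem]
          have : ∀ o : Metric.sphere (0 : Spc n) 1, {ξ : Spc n | ‖ξ‖ < A}.indicator
              (fun ξ => ENNReal.ofReal (‖ξ‖ ^ b)) (r • (o : Spc n)) = ENNReal.ofReal (r ^ b) := by
            intro o
            rw [Set.indicator_of_mem (by simpa [hnorm o] using hrA), hnorm]
          simp_rw [this]
          rw [lintegral_const, mul_comm _ (sphM n Set.univ), mul_assoc,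
            ← ENNReal.ofReal_mul (by positivity)]
          refine mul_le_mul' le_rfl (le_of_eq ?_)
          rw [← Real.rpow_natCast, ← Real.rpow_add hr0, Nat.cast_sub hn]
          congr 2; push_cast; ring
        · have : ∀ o : Metric.sphere (0 : Spc n) 1, {ξ : Spc n | ‖ξ‖ < A}.indicator
              (fun ξ => ENNReal.ofReal (‖ξ‖ ^ b)) (r • (o : Spc n)) = 0 := by
            intro o
            rw [Set.indicator_of_notMem]
            simpa [hnorm o] using hrA
          simp_rw [this]
          simp
    _ ≤ ∫⁻ r, (Set.Ioc 0 A).indicator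
        (fun r => sphM n Set.univ * ENNReal.ofReal (r ^ (n + b - 1))) r :=
        setLIntegral_le_lintegral _ _
    _ = _ := by
        rw [lintegral_indicator measurableSet_Ioc, lintegral_const_mul _ (by fun_prop),
          lintegral_Ioc_rpow hA.le (by linarith), ← ENNReal.ofReal_toReal (measure_ne_top (sphM n) _),
          ← ENNReal.ofReal_mul ENNReal.toReal_nonneg, ENNReal.toReal_ofReal ENNReal.toReal_nonneg]
        congr 1
        rw [show (n : ℝ) + b - 1 + 1 = n + b by ring]; ring

lemma ae_ne_zero {n : ℕ} (hn : 1 ≤ n) : ∀ᵐ ξ : Spc n, ξ ≠ 0 := by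
  have : Nonempty (Fin n) := ⟨⟨0, hn⟩⟩
  exact Measure.ae_ne volume 0

/-- Low frequencies are bounded uniformly (Bernstein). -/
lemma low_freq {n : ℕ} (hn : 1 ≤ n) {s : ℝ} (hs2 : s < n / 2) {G : Spc n → ℂ}
    (hG : Measurable G) {M : ℝ} (hM : 0 < M)
    (hGM : ∫⁻ ξ, ‖G ξ‖ₑ ^ 2 * ENNReal.ofReal (‖ξ‖ ^ (2 * s)) ≤ ENNReal.ofReal (M ^ 2))
    {A : ℝ} (hA : 0 < A) :
    ∫⁻ ξ in {ξ : Spc n | ‖ξ‖ < A}, ‖G ξ‖ₑ ≤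
      ENNReal.ofReal (√((sphM n Set.univ).toReal / (n - 2 * s)) * A ^ ((n : ℝ) / 2 - s) * M) := by
  set c := (sphM n Set.univ).toReal / (n - 2 * s) with hc
  have hc0 : 0 ≤ c := div_nonneg ENNReal.toReal_nonneg (by linarith)
  have h1 : ∫⁻ ξ in {ξ : Spc n | ‖ξ‖ < A}, ‖G ξ‖ₑ = ∫⁻ ξ in {ξ : Spc n | ‖ξ‖ < A},
      (‖G ξ‖ₑ * ENNReal.ofReal (‖ξ‖ ^ s)) * ENNReal.ofReal (‖ξ‖ ^ (-s)) := by
    refine lintegral_congr_ae ?_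
    filter_upwards [ae_restrict_of_ae (ae_ne_zero hn)] with ξ hξ
    have : 0 < ‖ξ‖ := norm_pos_iff.2 hξ
    rw [mul_assoc, ← ENNReal.ofReal_mul (by positivity), ← Real.rpow_add this]
    simp
  rw [h1]
  have h2 : (∫⁻ ξ in {ξ : Spc n | ‖ξ‖ < A},
      (‖G ξ‖ₑ * ENNReal.ofReal (‖ξ‖ ^ s)) * ENNReal.ofReal (‖ξ‖ ^ (-s))) ^ 2 ≤
      (ENNReal.ofReal (√c * A ^ ((n : ℝ) / 2 - s) * M)) ^ 2 := by
    refine (lintegral_cs (by fun_prop) (by fun_prop)).trans ?_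
    have h3 : ∀ ξ : Spc n, (‖G ξ‖ₑ * ENNReal.ofReal (‖ξ‖ ^ s)) ^ 2 =
        ‖G ξ‖ₑ ^ 2 * ENNReal.ofReal (‖ξ‖ ^ (2 * s)) := by
      intro ξ
      rw [mul_pow, ← ENNReal.ofReal_pow (by positivity), ← Real.rpow_natCast, ← Real.rpow_mul
        (norm_nonneg _)]
      push_cast; rw [mul_comm s]
    have h4 : ∀ ξ : Spc n, (ENNReal.ofReal (‖ξ‖ ^ (-s))) ^ 2 =
        ENNReal.ofReal (‖ξ‖ ^ (-(2 * s))) := by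
      intro ξ
      rw [← ENNReal.ofReal_pow (by positivity), ← Real.rpow_natCast, ← Real.rpow_mul
        (norm_nonneg _)]
      push_cast; ring_nf
    simp_rw [h3, h4]
    refine (mul_le_mul' ((setLIntegral_le_lintegral _ _).trans hGM)
      (lintegral_ball_rpow hn hA (b := -(2 * s)) (by linarith))).trans (le_of_eq ?_)
    rw [← ENNReal.ofReal_mul (by positivity), ← ENNReal.ofReal_pow (by positivity)]
    congr 1
    rw [mul_pow, mul_pow, Real.sq_sqrt hc0, ← sub_eq_add_neg, ← hc, ← Real.rpow_natCast (A ^ _),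
      ← Real.rpow_mul hA.le]
    rw [show ((n : ℝ) / 2 - s) * ((2 : ℕ) : ℝ) = n - 2 * s by push_cast; ring]
    ring
  exact (ENNReal.pow_le_pow_left_iff (by norm_num)).1 h2

lemma GaussFrostman.closedBall_lt_top {n : ℕ} {μ : Measure (Spc n)} {d B : ℝ}
    (hμ : GaussFrostman μ d B) (k : ℝ) : μ (Metric.closedBall 0 k) < ⊤ := by
  have h := hμ 1 one_pos 0
  have hle : ENNReal.ofReal (rexp (-π * k ^ 2)) * μ (Metric.closedBall 0 k) ≤
      ∫⁻ y, ENNReal.ofReal (rexp (-π * 1 ^ 2 * ‖0 - y‖ ^ 2)) ∂μ := by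
    rw [← setLIntegral_const]
    refine (setLIntegral_mono' Metric.isClosed_closedBall.measurableSet fun y hy => ?_).trans
      (setLIntegral_le_lintegral _ _)
    refine ENNReal.ofReal_le_ofReal (Real.exp_le_exp.2 ?_)
    have hy' : ‖y‖ ≤ k := by simpa using hy
    have : ‖y‖ ^ 2 ≤ k ^ 2 := by gcongr
    rw [zero_sub, norm_neg]
    nlinarith [pi_pos]
  have := (hle.trans h).trans_lt ENNReal.ofReal_lt_top
  rcases ENNReal.mul_lt_top_iff.1 this with h | h | h
  · exact h.2
  · exact absurd (ENNReal.ofReal_eq_zero.1 h) (not_le.2 (exp_pos _))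
  · rw [h]; exact ENNReal.zero_lt_top

/-- Inverse Fourier transform of an integrable symbol, as a function on `ℝⁿ`. -/
noncomputable def synth {n : ℕ} (G : Spc n → ℂ) (x : Spc n) : ℂ := ∫ ξ, G ξ * ek x ξ

lemma continuous_synth {n : ℕ} {G : Spc n → ℂ} (hG : Integrable G) : Continuous (synth G) := by
  refine continuous_of_dominated (bound := fun ξ => ‖G ξ‖) ?_ ?_ hG.norm ?_
  · intro x
    refine hG.1.mul ?_
    exact (continuous_ek.comp (Continuous.prodMk_right x)).aestronglyMeasurable
  · intro x; refine .of_forall fun ξ => ?_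
    rw [norm_mul, norm_ek, mul_one]
  · refine .of_forall fun ξ => ?_
    exact continuous_const.mul (continuous_ek.comp (Continuous.prodMk_left ξ))

/-- Weak-type estimate: the low frequencies being at most `lam / 2`, the superlevel set at height
`lam` is controlled by the high frequencies, tested against a unimodular function. -/
lemma meas_bound {n : ℕ} {μ : Measure (Spc n)} [SFinite μ] {d B : ℝ} (hB : 0 ≤ B)
    (hμ : GaussFrostman μ d B) {G : Spc n → ℂ} (hG : Measurable G) (hGi : Integrable G)
    {A β lam : ℝ} (hA : 0 < A) (hβ : 0 < β) (hβd : (n : ℝ) - d < β) (hlam : 0 < lam)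
    (hlow : ∫⁻ ξ in {ξ : Spc n | ‖ξ‖ < A}, ‖G ξ‖ₑ ≤ ENNReal.ofReal (lam / 2)) :
    μ {x | lam < ‖synth G x‖} ≤
      ENNReal.ofReal (4 / lam ^ 2 * (β * rexp π * B / (β - (n - d)) * A ^ ((n : ℝ) - d - β))) *
        ∫⁻ ξ in {ξ : Spc n | A ≤ ‖ξ‖}, ‖G ξ‖ₑ ^ 2 * ENNReal.ofReal (‖ξ‖ ^ β) := by
  set hi : Set (Spc n) := {ξ : Spc n | A ≤ ‖ξ‖} with hhi
  have hhim : MeasurableSet hi := measurableSet_le measurable_const measurable_norm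
  set cc := β * rexp π * B / (β - (n - d)) * A ^ ((n : ℝ) - d - β) with hcc
  have hcc0 : 0 ≤ cc := mul_nonneg (div_nonneg (by positivity) (by linarith)) (by positivity)
  set X := ∫⁻ ξ in hi, ‖G ξ‖ₑ ^ 2 * ENNReal.ofReal (‖ξ‖ ^ β) with hX
  set V : Spc n → ℂ := synth (hi.indicator G) with hV
  have hWc := continuous_synth hGi
  have hVc : Continuous V := continuous_synth (hGi.indicator hhim)
  have hVle : ∀ x, lam < ‖synth G x‖ → lam / 2 ≤ ‖V x‖ := by
    intro x hx
    have hdec : synth G x = synth (hiᶜ.indicator G) x + V x := by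
      simp only [synth, V]
      rw [← integral_add]
      · refine integral_congr_ae (.of_forall fun ξ => ?_)
        simp only
        rw [← add_mul, add_comm, Set.indicator_self_add_compl_apply]
      · refine (hGi.indicator hhim.compl).mul_bdd (c := 1) ?_ (.of_forall fun _ => (norm_ek _ _).le)
        exact (continuous_ek.comp (Continuous.prodMk_right x)).aestronglyMeasurable
      · refine (hGi.indicator hhim).mul_bdd (c := 1) ?_ (.of_forall fun _ => (norm_ek _ _).le)
        exact (continuous_ek.comp (Continuous.prodMk_right x)).aestronglyMeasurable
    have hl : ‖synth (hiᶜ.indicator G) x‖ ≤ lam / 2 := by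
      have hc : hiᶜ = {ξ : Spc n | ‖ξ‖ < A} := by ext ξ; simp [hi]
      rw [← ENNReal.ofReal_le_ofReal_iff (by positivity), ofReal_norm]
      refine (enorm_integral_le_lintegral_enorm _).trans (le_trans (le_of_eq ?_) hlow)
      rw [← hc, ← lintegral_indicator hhim.compl]
      refine lintegral_congr fun ξ => ?_
      rw [enorm_mul, ← ofReal_norm (ek x ξ), norm_ek, ENNReal.ofReal_one, mul_one,
        enorm_indicator_eq_indicator_enorm]
    have := norm_add_le (synth (hiᶜ.indicator G) x) (V x)
    rw [← hdec] at this
    linarith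
  have key : ∀ k : ℕ, μ ({x | lam < ‖synth G x‖} ∩ Metric.closedBall 0 k) ≤
      ENNReal.ofReal (4 / lam ^ 2 * cc) * X := by
    intro k
    set S := {x | lam < ‖synth G x‖} ∩ Metric.closedBall (0 : Spc n) k with hSdef
    have hS : MeasurableSet S := (measurableSet_lt measurable_const hWc.norm.measurable).inter
      Metric.isClosed_closedBall.measurableSet
    have hSf : μ S < ⊤ := (measure_mono Set.inter_subset_right).trans_lt (hμ.closedBall_lt_top k)
    set h : Spc n → ℂ := S.indicator (fun x => (starRingEnd ℂ) (V x) / (‖V x‖ : ℂ)) with hh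
    have hhm : Measurable h := by
      refine Measurable.indicator ?_ hS
      exact (Complex.continuous_conj.comp hVc).measurable.div
        (Complex.continuous_ofReal.comp hVc.norm).measurable
    have hhS : ∀ x, ‖h x‖ₑ ≤ S.indicator 1 x := by
      intro x
      by_cases hx : x ∈ S
      · rw [Set.indicator_of_mem hx, hh, Set.indicator_of_mem hx, ← ofReal_norm]
        simp only [norm_div, RCLike.norm_conj, Complex.norm_real, norm_norm, Pi.one_apply]
        rw [← ENNReal.ofReal_one]
        exact ENNReal.ofReal_le_ofReal (div_self_le_one _)
      · rw [Set.indicator_of_notMem hx, hh, Set.indicator_of_notMem hx]; simp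
    have hhint : Integrable h μ := by
      refine ⟨hhm.aestronglyMeasurable, ?_⟩
      rw [HasFiniteIntegral]
      refine (lintegral_mono hhS).trans_lt ?_
      rw [lintegral_indicator_one hS]; exact hSf
    set Ψ : Spc n × Spc n → ℂ := fun p => h p.1 * hi.indicator G p.2 * ek p.1 p.2 with hΨ
    have hΨint : Integrable Ψ (μ.prod volume) :=
      (hhint.mul_prod (hGi.indicator hhim)).mul_bdd (c := 1) continuous_ek.aestronglyMeasurable
        (.of_forall fun _ => (norm_ek _ _).le)
    have hx1 : ∀ x, ∫ ξ, Ψ (x, ξ) = ((S.indicator (fun x => ‖V x‖) x : ℝ) : ℂ) := by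
      intro x
      have : ∀ ξ, Ψ (x, ξ) = h x * (hi.indicator G ξ * ek x ξ) := fun ξ => by
        simp only [Ψ]; ring
      simp_rw [this]
      rw [integral_const_mul]
      change h x * V x = _
      by_cases hx : x ∈ S
      · rw [Set.indicator_of_mem hx, hh, Set.indicator_of_mem hx, div_mul_eq_mul_div, mul_comm,
          Complex.mul_conj, Complex.normSq_eq_norm_sq]
        have : ‖V x‖ ≠ 0 := (lt_of_lt_of_le (by positivity) (hVle x hx.1)).ne'
        push_cast
        rw [sq, mul_div_assoc, div_self (by exact_mod_cast this), mul_one]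
      · rw [Set.indicator_of_notMem hx, hh, Set.indicator_of_notMem hx]; simp
    have hξ1 : ∀ ξ, ∫ x, Ψ (x, ξ) ∂μ = hi.indicator G ξ * extOp μ h ξ := by
      intro ξ
      have : ∀ x, Ψ (x, ξ) = hi.indicator G ξ * (h x * ek x ξ) := fun x => by
        simp only [Ψ]; ring
      simp_rw [this]
      rw [integral_const_mul, extOp]
    have hswap : ((∫ x, S.indicator (fun x => ‖V x‖) x ∂μ : ℝ) : ℂ) =
        ∫ ξ, hi.indicator G ξ * extOp μ h ξ := by
      rw [← integral_complex_ofReal]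
      simp_rw [← hx1, ← hξ1]
      rw [integral_integral_swap hΨint]
    have hVint : Integrable (fun x => S.indicator (fun x => ‖V x‖) x) μ := by
      have := hΨint.integral_prod_left.re
      refine this.congr (.of_forall fun x => ?_)
      simp only
      rw [hx1]; exact Complex.ofReal_re _
    have hlow' : ENNReal.ofReal (lam / 2) * μ S ≤
        ∫⁻ ξ in hi, (‖G ξ‖ₑ * ENNReal.ofReal (‖ξ‖ ^ (β / 2))) *
          (‖extOp μ h ξ‖ₑ * ENNReal.ofReal (‖ξ‖ ^ (-β / 2))) := by
      calc _ = ∫⁻ x in S, ENNReal.ofReal (lam / 2) ∂μ := by rw [setLIntegral_const]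
        _ ≤ ∫⁻ x in S, ENNReal.ofReal ‖V x‖ ∂μ :=
            setLIntegral_mono' hS fun x hx => ENNReal.ofReal_le_ofReal (hVle x hx.1)
        _ = ∫⁻ x, ENNReal.ofReal (S.indicator (fun x => ‖V x‖) x) ∂μ := by
            rw [← lintegral_indicator hS]
            refine lintegral_congr fun x => ?_
            by_cases hx : x ∈ S <;> simp [hx]
        _ = ‖((∫ x, S.indicator (fun x => ‖V x‖) x ∂μ : ℝ) : ℂ)‖ₑ := by
            have hnn : ∀ x, 0 ≤ S.indicator (fun x => ‖V x‖) x :=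
              fun x => Set.indicator_nonneg (fun _ _ => norm_nonneg _) _
            rw [← ofReal_integral_eq_lintegral_ofReal hVint (.of_forall hnn),
              ← ofReal_norm, Complex.norm_real, Real.norm_of_nonneg (integral_nonneg hnn)]
        _ ≤ ∫⁻ ξ, ‖hi.indicator G ξ * extOp μ h ξ‖ₑ := by
            rw [hswap]; exact enorm_integral_le_lintegral_enorm _
        _ = ∫⁻ ξ in hi, ‖G ξ‖ₑ * ‖extOp μ h ξ‖ₑ := by
            rw [← lintegral_indicator hhim]
            refine lintegral_congr fun ξ => ?_
            by_cases hx : ξ ∈ hi <;> simp [hx, enorm_mul]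
        _ = _ := by
            refine setLIntegral_congr_fun hhim fun ξ hξ => ?_
            have hξ0 : 0 < ‖ξ‖ := hA.trans_le hξ
            have : ENNReal.ofReal (‖ξ‖ ^ (β / 2)) * ENNReal.ofReal (‖ξ‖ ^ (-β / 2)) = 1 := by
              rw [← ENNReal.ofReal_mul (by positivity), ← Real.rpow_add hξ0]
              rw [show β / 2 + -β / 2 = 0 by ring]; simp
            rw [mul_mul_mul_comm, this, mul_one]
    have hEm := measurable_extOp (μ := μ) hhm
    have hsq : (ENNReal.ofReal (lam / 2) * μ S) ^ 2 ≤ X * (ENNReal.ofReal cc * μ S) := by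
      refine (pow_le_pow_left' hlow' 2).trans ((lintegral_cs (by fun_prop) (by fun_prop)).trans ?_)
      have h3 : ∀ (γ : ℝ) (z : ℂ) (ξ : Spc n), (‖z‖ₑ * ENNReal.ofReal (‖ξ‖ ^ (γ / 2))) ^ 2 =
          ‖z‖ₑ ^ 2 * ENNReal.ofReal (‖ξ‖ ^ γ) := by
        intro γ z ξ
        rw [mul_pow, ← ENNReal.ofReal_pow (by positivity), ← Real.rpow_natCast, ← Real.rpow_mul
          (norm_nonneg _)]
        push_cast; rw [div_mul_cancel₀ _ (by norm_num)]
      simp_rw [h3]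
      exact mul_le_mul' le_rfl (extOp_high hB hμ hS hSf hhm hhS hA hβ hβd)
    by_cases hm0 : μ S = 0
    · rw [hm0]; exact zero_le
    have hstep : ENNReal.ofReal (lam ^ 2 / 4) * μ S ≤ ENNReal.ofReal cc * X := by
      have h5 : (ENNReal.ofReal (lam ^ 2 / 4) * μ S) * μ S ≤ (ENNReal.ofReal cc * X) * μ S := by
        calc _ = (ENNReal.ofReal (lam / 2) * μ S) ^ 2 := by
              rw [mul_pow, ← ENNReal.ofReal_pow (by positivity), sq (μ S), mul_assoc]
              congr 2; ring
          _ ≤ _ := hsq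
          _ = _ := by ring
      exact (ENNReal.mul_le_mul_iff_left hm0 hSf.ne).1 h5
    calc μ S = ENNReal.ofReal (4 / lam ^ 2) * (ENNReal.ofReal (lam ^ 2 / 4) * μ S) := by
          rw [← mul_assoc, ← ENNReal.ofReal_mul (by positivity)]
          rw [show 4 / lam ^ 2 * (lam ^ 2 / 4) = 1 by field_simp]; simp
      _ ≤ ENNReal.ofReal (4 / lam ^ 2) * (ENNReal.ofReal cc * X) := mul_le_mul' le_rfl hstep
      _ = _ := by rw [← mul_assoc, ← ENNReal.ofReal_mul (by positivity)]
  have hmono : Monotone fun k : ℕ => {x | lam < ‖synth G x‖} ∩ Metric.closedBall (0 : Spc n) k := by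
    intro i j hij
    exact Set.inter_subset_inter_right _ (Metric.closedBall_subset_closedBall (by exact_mod_cast hij))
  have hU : {x | lam < ‖synth G x‖} =
      ⋃ k : ℕ, {x | lam < ‖synth G x‖} ∩ Metric.closedBall (0 : Spc n) k := by
    rw [← Set.inter_iUnion, Metric.iUnion_closedBall_nat, Set.inter_univ]
  rw [hU, hmono.measure_iUnion]
  exact iSup_le key

/-- **Trace Sobolev inequality**: if the measure `μ` is `d`-dimensional (in the Gaussian sense), then
for `(n - d) / 2 < s < n / 2` the space `Ḣ^s(ℝⁿ)` embeds into `L^q(μ)` with `q = 2 d / (n - 2 s)`.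
The level set at height `t` is estimated by splitting the frequencies at `A_t`, where `A_t` is chosen
so that the low frequencies contribute at most `t / 2`. -/
lemma trace_sobolev {n : ℕ} (hn : 1 ≤ n) {s d B : ℝ} (hd : d ≤ n) (hs1 : ((n : ℝ) - d) / 2 < s)
    (hs2 : s < n / 2) (hB : 0 < B) :
    ∃ C : ℝ, 0 < C ∧ ∀ (μ : Measure (Spc n)) [SFinite μ], GaussFrostman μ d B →
      ∀ (G : Spc n → ℂ), Measurable G → Integrable G → ∀ M : ℝ, 0 < M →
      ∫⁻ ξ, ‖G ξ‖ₑ ^ 2 * ENNReal.ofReal (‖ξ‖ ^ (2 * s)) ≤ ENNReal.ofReal (M ^ 2) →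
      ∫⁻ x, ENNReal.ofReal (‖synth G x‖ ^ (2 * d / (n - 2 * s))) ∂μ ≤
        ENNReal.ofReal (C * M ^ (2 * d / (n - 2 * s))) := by
  obtain ⟨a, ha⟩ : ∃ a, a = (n : ℝ) / 2 - s := ⟨_, rfl⟩
  obtain ⟨κ, hκ⟩ : ∃ κ, κ = (n : ℝ) - d := ⟨_, rfl⟩
  obtain ⟨β, hβ⟩ : ∃ β, β = s + κ / 2 := ⟨_, rfl⟩
  obtain ⟨q, hq⟩ : ∃ q, q = 2 * d / (n - 2 * s) := ⟨_, rfl⟩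
  obtain ⟨b, hb⟩ : ∃ b, b = q - 3 + (κ - β) / a := ⟨_, rfl⟩
  have ha0 : 0 < a := by rw [ha]; linarith
  have hκ0 : 0 ≤ κ := by rw [hκ]; linarith
  have hβκ : κ < β := by rw [hβ]; linarith
  have hβ0 : 0 < β := by linarith
  have hqa : q * a = d := by
    rw [hq, ha]; field_simp [show (n : ℝ) - 2 * s ≠ 0 by linarith]
  have hb1 : (b + 1) * a = 2 * s - β := by
    rw [hb]; field_simp; rw [hβ]; nlinarith
  have hb0 : 0 < b + 1 := by
    have : 0 < (b + 1) * a := by rw [hb1, hβ]; linarith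
    exact pos_of_mul_pos_left this ha0.le
  have hq2 : (β - κ) / a + (b + 1) = q - 2 := by rw [hb]; ring
  have hq2' : 0 < q - 2 := by
    rw [← hq2]; have : 0 < (β - κ) / a := div_pos (by linarith) ha0
    linarith
  have hσ := sphM_univ_pos hn
  obtain ⟨c, hc⟩ : ∃ c, c = √((sphM n Set.univ).toReal / (n - 2 * s)) := ⟨_, rfl⟩
  have hc0 : 0 < c := by rw [hc]; exact Real.sqrt_pos.2 (div_pos hσ (by linarith))
  obtain ⟨C2, hC2⟩ : ∃ C2, C2 = β * rexp π * B / (β - κ) := ⟨_, rfl⟩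
  have hC20 : 0 < C2 := by rw [hC2]; exact div_pos (by positivity) (by linarith)
  refine ⟨q * (4 * C2 * (2 * c) ^ (q - 2) / (b + 1)), by
    have : 0 < q := by linarith
    positivity, ?_⟩
  intro μ _ hμ G hG hGi M hM hGM
  rw [← hq]
  obtain ⟨K, hK⟩ : ∃ K, K = 2 * c * M := ⟨_, rfl⟩
  have hK0 : 0 < K := by rw [hK]; positivity
  have hWc := continuous_synth hGi
  rw [lintegral_rpow_eq_lintegral_meas_lt_mul μ (.of_forall fun _ => norm_nonneg _)
    hWc.norm.measurable.aemeasurable (by linarith)]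
  obtain ⟨D, hD⟩ : ∃ D, D = 4 * C2 * K ^ ((β - κ) / a) := ⟨_, rfl⟩
  have hD0 : 0 < D := by rw [hD]; positivity
  have hpt : ∀ t ∈ Set.Ioi (0 : ℝ), μ {x | t < ‖synth G x‖} * ENNReal.ofReal (t ^ (q - 1)) ≤
      ∫⁻ ξ, (if t ≤ K * ‖ξ‖ ^ a then ENNReal.ofReal (D * t ^ b) else 0) *
        (‖G ξ‖ₑ ^ 2 * ENNReal.ofReal (‖ξ‖ ^ β)) := by
    intro t ht
    have ht0 : 0 < t := ht
    obtain ⟨A, hA⟩ : ∃ A, A = (t / K) ^ (1 / a) := ⟨_, rfl⟩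
    have hA0 : 0 < A := by rw [hA]; positivity
    have hAa : A ^ a = t / K := by
      rw [hA, ← Real.rpow_mul (by positivity), one_div_mul_cancel ha0.ne', Real.rpow_one]
    have hlow : ∫⁻ ξ in {ξ : Spc n | ‖ξ‖ < A}, ‖G ξ‖ₑ ≤ ENNReal.ofReal (t / 2) := by
      refine (low_freq hn hs2 hG hM hGM hA0).trans (le_of_eq ?_)
      rw [← hc, ← ha, hAa, hK]
      congr 1; field_simp
    have hmb := meas_bound hB.le hμ hG hGi hA0 hβ0 (by rw [← hκ]; exact hβκ) ht0 hlow
    have hset : ∀ ξ : Spc n, t ≤ K * ‖ξ‖ ^ a ↔ A ≤ ‖ξ‖ := by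
      intro ξ
      rw [← Real.rpow_le_rpow_iff hA0.le (norm_nonneg ξ) ha0, hAa, div_le_iff₀' hK0]
    have hm : MeasurableSet {ξ : Spc n | A ≤ ‖ξ‖} :=
      measurableSet_le measurable_const measurable_norm
    calc _ ≤ _ := mul_le_mul' hmb le_rfl
      _ = ENNReal.ofReal (D * t ^ b) *
          ∫⁻ ξ in {ξ : Spc n | A ≤ ‖ξ‖}, ‖G ξ‖ₑ ^ 2 * ENNReal.ofReal (‖ξ‖ ^ β) := by
        rw [mul_right_comm, ← ENNReal.ofReal_mul (by
          rw [← hκ, ← hC2]; positivity)]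
        congr 2
        rw [← hκ, ← hC2, hD, show κ - β = -(β - κ) by ring, hA, ← Real.rpow_mul (by positivity),
          show 1 / a * (-(β - κ)) = -((β - κ) / a) by ring, Real.rpow_neg (by positivity),
          Real.div_rpow ht0.le hK0.le, hb, show q - 3 + (κ - β) / a = (q - 1) - 2 - (β - κ) / a by ring,
          Real.rpow_sub ht0 (q - 1 - 2), Real.rpow_sub ht0 (q - 1) 2, Real.rpow_two]
        have h1 : t ^ ((β - κ) / a) ≠ 0 := by positivity
        have h2 : K ^ ((β - κ) / a) ≠ 0 := by positivity
        field_simp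
      _ = _ := by
        rw [← lintegral_const_mul _ (by fun_prop), ← lintegral_indicator hm]
        refine lintegral_congr fun ξ => ?_
        by_cases h : A ≤ ‖ξ‖
        · rw [if_pos ((hset ξ).2 h), Set.indicator_of_mem (by exact h)]
        · rw [if_neg (mt (hset ξ).1 h), Set.indicator_of_notMem (by exact h), zero_mul]
  have hmeas : Measurable fun p : ℝ × Spc n =>
      (if p.1 ≤ K * ‖p.2‖ ^ a then ENNReal.ofReal (D * p.1 ^ b) else 0) *
        (‖G p.2‖ₑ ^ 2 * ENNReal.ofReal (‖p.2‖ ^ β)) := by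
    refine Measurable.mul (Measurable.ite ?_ (by fun_prop) measurable_const) (by fun_prop)
    exact measurableSet_le (by fun_prop) (by fun_prop)
  have hin : ∀ ξ : Spc n, ∫⁻ t in Set.Ioi (0 : ℝ),
      (if t ≤ K * ‖ξ‖ ^ a then ENNReal.ofReal (D * t ^ b) else 0) *
        (‖G ξ‖ₑ ^ 2 * ENNReal.ofReal (‖ξ‖ ^ β)) =
      ENNReal.ofReal (D * K ^ (b + 1) / (b + 1)) *
        (‖G ξ‖ₑ ^ 2 * ENNReal.ofReal (‖ξ‖ ^ (2 * s))) := by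
    intro ξ
    rw [lintegral_mul_const _ (Measurable.ite (measurableSet_le (by fun_prop) (by fun_prop))
      (by fun_prop) measurable_const)]
    have : ∫⁻ t in Set.Ioi (0 : ℝ), (if t ≤ K * ‖ξ‖ ^ a then ENNReal.ofReal (D * t ^ b) else 0) =
        ∫⁻ t in Set.Ioc 0 (K * ‖ξ‖ ^ a), ENNReal.ofReal D * ENNReal.ofReal (t ^ b) := by
      rw [← lintegral_indicator measurableSet_Ioi, ← lintegral_indicator measurableSet_Ioc]
      refine lintegral_congr fun t => ?_
      by_cases h0 : 0 < t <;> by_cases h1 : t ≤ K * ‖ξ‖ ^ a <;>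
        simp [Set.indicator, h0, h1, ENNReal.ofReal_mul hD0.le]
    rw [this, lintegral_const_mul _ (by fun_prop), lintegral_Ioc_rpow (by positivity) (by linarith),
      mul_comm (‖G ξ‖ₑ ^ 2), ← mul_assoc, ← ENNReal.ofReal_mul hD0.le, ← ENNReal.ofReal_mul
      (by positivity), mul_comm (‖G ξ‖ₑ ^ 2), ← mul_assoc, ← ENNReal.ofReal_mul (by positivity)]
    congr 2
    rw [Real.mul_rpow hK0.le (by positivity), ← Real.rpow_mul (norm_nonneg _), mul_comm a, hb1,
      show 2 * s = (2 * s - β) + β by ring, Real.rpow_add_of_nonneg (norm_nonneg _)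
        (by rw [hβ]; linarith) hβ0.le]
    ring_nf
  calc _ ≤ ENNReal.ofReal q * ∫⁻ t in Set.Ioi (0 : ℝ), ∫⁻ ξ,
        (if t ≤ K * ‖ξ‖ ^ a then ENNReal.ofReal (D * t ^ b) else 0) *
          (‖G ξ‖ₑ ^ 2 * ENNReal.ofReal (‖ξ‖ ^ β)) :=
        mul_le_mul' le_rfl (setLIntegral_mono' measurableSet_Ioi hpt)
    _ = ENNReal.ofReal q * (ENNReal.ofReal (D * K ^ (b + 1) / (b + 1)) *
        ∫⁻ ξ, ‖G ξ‖ₑ ^ 2 * ENNReal.ofReal (‖ξ‖ ^ (2 * s))) := by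
        rw [lintegral_lintegral_swap hmeas.aemeasurable]
        simp_rw [hin]
        rw [lintegral_const_mul _ (by fun_prop)]
    _ ≤ ENNReal.ofReal q * (ENNReal.ofReal (D * K ^ (b + 1) / (b + 1)) * ENNReal.ofReal (M ^ 2)) := by
        gcongr
    _ = _ := by
        rw [← ENNReal.ofReal_mul (by positivity), ← ENNReal.ofReal_mul (by linarith)]
        congr 1
        have h1 : K ^ ((β - κ) / a) * K ^ (b + 1) = (2 * c) ^ (q - 2) * M ^ (q - 2) := by
          rw [← Real.rpow_add hK0, hq2, hK, Real.mul_rpow (by positivity) hM.le]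
        have h2 : M ^ q = M ^ (q - 2) * M ^ 2 := by
          rw [← Real.rpow_two, ← Real.rpow_add hM]; ring_nf
        rw [hD, h2]
        linear_combination (q * 4 * C2 / (b + 1) * M ^ 2) * h1

/-! ### Dual estimates against the forcing term -/

lemma holder_synth {n : ℕ} {μ : Measure (Spc n)} {p q : ℝ} (hpq : p.HolderConjugate q)
    {f : Spc n → ℝ} (hf : Measurable f) {G : Spc n → ℂ} (hGi : Integrable G) {K : ℝ} (hK : 0 ≤ K)
    (h : ∫⁻ x, ENNReal.ofReal (‖synth G x‖ ^ q) ∂μ ≤ ENNReal.ofReal (K ^ q)) :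
    ∫⁻ x, ‖f x‖ₑ * ‖synth G x‖ₑ ∂μ ≤
      (∫⁻ x, ‖f x‖ₑ ^ p ∂μ) ^ (1 / p) * ENNReal.ofReal K := by
  have hq := hpq.symm.pos
  have hWc := (continuous_synth hGi).measurable
  refine (ENNReal.lintegral_mul_le_Lp_mul_Lq μ hpq (f := fun x => ‖f x‖ₑ)
    (g := fun x => ‖synth G x‖ₑ) (by fun_prop) (by fun_prop)).trans ?_
  refine mul_le_mul' le_rfl ?_
  have h1 : ∀ x, ‖synth G x‖ₑ ^ q = ENNReal.ofReal (‖synth G x‖ ^ q) := fun x => by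
    rw [← ofReal_norm, ENNReal.ofReal_rpow_of_nonneg (norm_nonneg _) hq.le]
  simp_rw [h1]
  calc _ ≤ (ENNReal.ofReal (K ^ q)) ^ (1 / q) := ENNReal.rpow_le_rpow h (by positivity)
    _ = _ := by
      rw [← ENNReal.ofReal_rpow_of_nonneg hK hq.le, ← ENNReal.rpow_mul, mul_one_div_cancel hq.ne',
        ENNReal.rpow_one]

/-- Dual form of the Sobolev embedding `Ḣ^s ⊂ L^q(ℝⁿ)`, i.e. of `trace_sobolev` for Lebesgue
measure. -/
lemma dual_ball {n : ℕ} (hn : 2 ≤ n) {s p : ℝ} (hs1 : 1 / 2 < s) (hs2 : s < n / 2)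
    (hp : 1 / p = 1 / 2 + s / n) :
    ∃ C : ℝ, 0 < C ∧ ∀ (G : Spc n → ℂ), Measurable G → Integrable G → ∀ M : ℝ, 0 < M →
      ∫⁻ ξ, ‖G ξ‖ₑ ^ 2 * ENNReal.ofReal (‖ξ‖ ^ (2 * s)) ≤ ENNReal.ofReal (M ^ 2) →
      ∀ f : Spc n → ℝ, Measurable f → ∫⁻ x, ‖f x‖ₑ * ‖synth G x‖ₑ ≤
        ENNReal.ofReal (C * M) * eLpNorm f (ENNReal.ofReal p) volume := by
  obtain ⟨C, hC, H⟩ := trace_sobolev (n := n) (s := s) (d := n) (B := 1) (by omega) le_rfl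
    (by linarith) hs2 one_pos
  have hn0 : (0 : ℝ) < n := by positivity
  obtain ⟨q, hq⟩ : ∃ q, q = 2 * (n : ℝ) / (n - 2 * s) := ⟨_, rfl⟩
  have hq0 : 0 < q := by rw [hq]; exact div_pos (by positivity) (by linarith)
  have hpi : 0 < p⁻¹ := by rw [← one_div, hp]; positivity
  have hp0 : 0 < p := inv_pos.1 hpi
  have hpq : p.HolderConjugate q := by
    refine Real.holderConjugate_iff.2 ⟨?_, ?_⟩
    · have : 1 / p < 1 := by
        rw [hp]
        have : s / n < 1 / 2 := by rw [div_lt_iff₀ hn0]; linarith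
        linarith
      rwa [div_lt_one hp0] at this
    · rw [← one_div p, hp, hq, inv_div]; field_simp; ring
  refine ⟨C ^ (1 / q), by positivity, fun G hG hGi M hM hGM f hf => ?_⟩
  have h := H volume (gaussFrostman_volume n) G hG hGi M hM hGM
  rw [← hq] at h
  have h2 := holder_synth (K := C ^ (1 / q) * M) hpq hf hGi (by positivity) (h.trans (le_of_eq (by
    rw [Real.mul_rpow (by positivity) hM.le, ← Real.rpow_mul hC.le, one_div_mul_cancel hq0.ne',
      Real.rpow_one])))
  rw [mul_comm, eLpNorm_eq_lintegral_rpow_enorm_toReal (by simpa using hp0) ENNReal.ofReal_ne_top,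
    ENNReal.toReal_ofReal hp0.le]
  exact h2

/-- Dual form of the trace embeddings of `Ḣ^s` into `L^q` of the spheres `|x| = r`, integrated over
`r ≥ (1 + τ) / 2`. Since the embedding constant for the surface measure is independent of `r`,
scaling produces the factor `r ^ (s - n / 2)`, which is at most a multiple of `⟨τ⟩ ^ (s - n / 2)`. -/
lemma dual_sphere {n : ℕ} (hn : 2 ≤ n) {s p : ℝ} (hs1 : 1 / 2 < s) (hs2 : s < n / 2)
    (hp : 1 / p = 1 / 2 + (s - 1 / 2) / (n - 1)) :
    ∃ C : ℝ, 0 < C ∧ ∀ (G : Spc n → ℂ), Measurable G → Integrable G → ∀ M : ℝ, 0 < M →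
      ∫⁻ ξ, ‖G ξ‖ₑ ^ 2 * ENNReal.ofReal (‖ξ‖ ^ (2 * s)) ≤ ENNReal.ofReal (M ^ 2) →
      ∀ f : Spc n → ℝ, Measurable f → ∀ τ : ℝ, 0 ≤ τ →
        ∫⁻ x, ‖Set.indicator {x : Spc n | (1 + τ) / 2 ≤ ‖x‖} f x‖ₑ * ‖synth G x‖ₑ ≤
          ENNReal.ofReal (C * M) * (ENNReal.ofReal ((√(1 + τ ^ 2)) ^ (-((n : ℝ) / 2 - s))) *
            mixN n 1 p (Set.indicator {x : Spc n | (1 + τ) / 2 ≤ ‖x‖} f)) := by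
  obtain ⟨C, hC, H⟩ := trace_sobolev (n := n) (s := s) (d := (n : ℝ) - 1)
    (B := rexp π * 2 ^ ((n : ℝ) / 2)) (by omega) (by linarith) (by linarith) hs2 (by positivity)
  have hn1 : (0 : ℝ) < n - 1 := by
    have : (2 : ℝ) ≤ n := by exact_mod_cast hn
    linarith
  obtain ⟨q, hq⟩ : ∃ q, q = 2 * ((n : ℝ) - 1) / (n - 2 * s) := ⟨_, rfl⟩
  have hns : (0 : ℝ) < n - 2 * s := by linarith
  have hq0 : 0 < q := by rw [hq]; exact div_pos (by positivity) (by linarith)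
  have hpi : 0 < p⁻¹ := by
    rw [← one_div, hp]; have : 0 < (s - 1 / 2) / ((n : ℝ) - 1) := div_pos (by linarith) hn1
    linarith
  have hp0 : 0 < p := inv_pos.1 hpi
  have hpq : p.HolderConjugate q := by
    refine Real.holderConjugate_iff.2 ⟨?_, ?_⟩
    · have : 1 / p < 1 := by
        rw [hp]
        have : (s - 1 / 2) / ((n : ℝ) - 1) < 1 / 2 := by rw [div_lt_iff₀ hn1]; linarith
        linarith
      rwa [div_lt_one hp0] at this
    · rw [← one_div p, hp, hq, inv_div]; field_simp; ring
  obtain ⟨a, ha⟩ : ∃ a, a = (n : ℝ) / 2 - s := ⟨_, rfl⟩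
  have ha0 : 0 < a := by rw [ha]; linarith
  refine ⟨C ^ (1 / q) * 2 ^ a, by positivity, fun G hG hGi M hM hGM f hf τ hτ => ?_⟩
  set S := {x : Spc n | (1 + τ) / 2 ≤ ‖x‖} with hSdef
  have hS : MeasurableSet S := measurableSet_le measurable_const measurable_norm
  set f' := S.indicator f with hf'
  have hf'm : Measurable f' := hf.indicator hS
  have hWc := (continuous_synth hGi).measurable
  have hpt : ∀ r ∈ Set.Ioi (0 : ℝ), (∫⁻ o, ‖f' (r • (o : Spc n))‖ₑ *
      ‖synth G (r • (o : Spc n))‖ₑ ∂(sphM n)) * ENNReal.ofReal (r ^ (n - 1)) ≤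
      ENNReal.ofReal (C ^ (1 / q) * 2 ^ a * M) * ENNReal.ofReal ((√(1 + τ ^ 2)) ^ (-a)) *
        (sphN n p f' r * ENNReal.ofReal (r ^ (n - 1))) := by
    intro r hr
    have hr0 : 0 < r := hr
    by_cases hrR : (1 + τ) / 2 ≤ r
    · have : SFinite (sphR n r) := by unfold sphR; infer_instance
      have h := H (sphR n r) (gaussFrostman_sphR (by omega) hr0) G hG hGi M hM hGM
      rw [← hq] at h
      have h2 := holder_synth (K := C ^ (1 / q) * M) hpq hf'm hGi (by positivity)
        (h.trans (le_of_eq (by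
          rw [Real.mul_rpow (by positivity) hM.le, ← Real.rpow_mul hC.le,
            one_div_mul_cancel hq0.ne', Real.rpow_one])))
      rw [lintegral_sphR _ (by fun_prop), lintegral_sphR _ (by fun_prop), mul_comm] at h2
      refine h2.trans ?_
      have hsph : (∫⁻ o, ‖f' (r • (o : Spc n))‖ₑ ^ p ∂(sphM n)) ^ (1 / p) = sphN n p f' r := rfl
      rw [ENNReal.mul_rpow_of_nonneg _ _ (by positivity), hsph,
        ENNReal.ofReal_rpow_of_nonneg (by positivity) (by positivity)]
      have hkey : (r ^ (n - 1)) ^ (1 / p) * (C ^ (1 / q) * M) ≤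
          (C ^ (1 / q) * 2 ^ a * M * (√(1 + τ ^ 2)) ^ (-a)) * r ^ (n - 1) := by
        have hrn : (r ^ (n - 1)) ^ (1 / p) = r ^ (-a) * r ^ (n - 1) := by
          rw [← Real.rpow_natCast, ← Real.rpow_mul hr0.le, ← Real.rpow_add hr0,
            Nat.cast_sub (by omega), hp, ha]
          congr 1; push_cast; field_simp; ring
        have hra : r ^ (-a) ≤ 2 ^ a * (√(1 + τ ^ 2)) ^ (-a) := by
          have hsq : √(1 + τ ^ 2) / 2 ≤ r := by
            refine le_trans ?_ hrR
            have : √(1 + τ ^ 2) ≤ 1 + τ := by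
              rw [Real.sqrt_le_left (by positivity)]; nlinarith
            linarith
          have hpos : 0 < √(1 + τ ^ 2) := Real.sqrt_pos.2 (by positivity)
          calc r ^ (-a) ≤ (√(1 + τ ^ 2) / 2) ^ (-a) :=
                Real.rpow_le_rpow_of_nonpos (by positivity) hsq (by linarith)
            _ = _ := by
                rw [Real.div_rpow hpos.le (by norm_num), Real.rpow_neg (by norm_num : (0:ℝ) ≤ 2)]
                field_simp
        rw [hrn]
        calc _ = r ^ (-a) * (r ^ (n - 1) * (C ^ (1 / q) * M)) := by ring
          _ ≤ (2 ^ a * (√(1 + τ ^ 2)) ^ (-a)) * (r ^ (n - 1) * (C ^ (1 / q) * M)) := by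
              gcongr
          _ = _ := by ring
      calc _ = ENNReal.ofReal ((r ^ (n - 1)) ^ (1 / p) * (C ^ (1 / q) * M)) * sphN n p f' r := by
            rw [ENNReal.ofReal_mul (p := (r ^ (n - 1)) ^ (1 / p)) (by positivity)]; ring
        _ ≤ ENNReal.ofReal ((C ^ (1 / q) * 2 ^ a * M * (√(1 + τ ^ 2)) ^ (-a)) * r ^ (n - 1)) *
            sphN n p f' r := mul_le_mul' (ENNReal.ofReal_le_ofReal hkey) le_rfl
        _ = _ := by
            rw [ENNReal.ofReal_mul (by positivity), ENNReal.ofReal_mul (by positivity)]; ring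
    · have h0 : ∀ o : Metric.sphere (0 : Spc n) 1, f' (r • (o : Spc n)) = 0 := by
        intro o
        refine Set.indicator_of_notMem ?_ _
        have : ‖r • (o : Spc n)‖ = r := by
          rw [norm_smul, Real.norm_of_nonneg hr0.le]; simp
        simpa [S, this] using hrR
      simp [h0]
  rw [lintegral_polar (by omega) (by fun_prop), ← ha, ← mul_assoc]
  refine (setLIntegral_mono' measurableSet_Ioi hpt).trans ?_
  rw [lintegral_const_mul' _ _ (ENNReal.mul_ne_top ENNReal.ofReal_ne_top ENNReal.ofReal_ne_top)]
  simp [mixN]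

/-! ### Superpositions of plane waves -/

/-- Measurable symbols all of whose moments are integrable. -/
def Mom {n : ℕ} (h : Spc n → ℂ) : Prop :=
  Measurable h ∧ ∀ k : ℕ, Integrable fun ξ => ‖ξ‖ ^ k * ‖h ξ‖

/-- The half wave `(s, x) ↦ ∫ h(ξ) exp (2 π i (ε s |ξ| + ⟨x, ξ⟩)) dξ`. -/
noncomputable def hw {n : ℕ} (ε : ℝ) (h : Spc n → ℂ) (p : STn n) : ℂ :=
  ∫ ξ, h ξ * (Complex.exp ((2 * π * (ε * p.1 * ‖ξ‖) : ℝ) * Complex.I) * ek p.2 ξ)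

/-- The Euclidean inner product as an `ℝ`-bilinear map. -/
noncomputable def innerB (n : ℕ) : Spc n →L[ℝ] Spc n →L[ℝ] ℝ := innerSL ℝ

/-- Minus the Euclidean inner product of space-time, as a bilinear map. The sign turns the kernel
`exp (-2 π i ·)` of the library's Fourier integral into the kernel of `hw`. -/
noncomputable def stL (n : ℕ) : STn n →L[ℝ] STn n →L[ℝ] ℝ :=
  -((ContinuousLinearMap.mul ℝ ℝ).bilinearComp (ContinuousLinearMap.fst ℝ ℝ (Spc n))
      (ContinuousLinearMap.fst ℝ ℝ (Spc n)) +
    (innerB n).bilinearComp (ContinuousLinearMap.snd ℝ ℝ (Spc n))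
      (ContinuousLinearMap.snd ℝ ℝ (Spc n)))

lemma stL_apply {n : ℕ} (v w : STn n) : stL n v w = -(v.1 * w.1 + inner ℝ v.2 w.2) := by
  simp [stL, innerB]; rfl

lemma stL_apply' {n : ℕ} (v w : STn n) :
    (stL n).toLinearMap₁₂ v w = -(v.1 * w.1 + inner ℝ v.2 w.2) := stL_apply v w

lemma Mom.integrable {n : ℕ} {h : Spc n → ℂ} (hh : Mom h) : Integrable h := by
  have := hh.2 0
  simp only [pow_zero, one_mul] at this
  exact (integrable_norm_iff hh.1.aestronglyMeasurable).1 this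

lemma Mom.of_le {n : ℕ} {h h' : Spc n → ℂ} (hh : Mom h) (hm : Measurable h') {C : ℝ} (j : ℕ)
    (hle : ∀ ξ, ‖h' ξ‖ ≤ C * (‖ξ‖ ^ j * ‖h ξ‖)) : Mom h' := by
  refine ⟨hm, fun k => ?_⟩
  refine ((hh.2 (k + j)).const_mul C).mono' (by fun_prop) (.of_forall fun ξ => ?_)
  rw [norm_mul, norm_norm, norm_pow, norm_norm]
  calc _ ≤ ‖ξ‖ ^ k * (C * (‖ξ‖ ^ j * ‖h ξ‖)) := by gcongr; exact hle ξ
    _ = _ := by ring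

/-- The symbol of the directional derivative of a half wave. -/
noncomputable def hwSym {n : ℕ} (ε : ℝ) (v : STn n) (ξ : Spc n) : ℂ :=
  ((2 * π * (ε * ‖ξ‖ * v.1 + inner ℝ v.2 ξ) : ℝ) : ℂ) * Complex.I

lemma measurable_hwSym {n : ℕ} (ε : ℝ) (v : STn n) : Measurable (hwSym ε v) := by
  unfold hwSym; fun_prop

lemma Mom.hwSym_mul {n : ℕ} {h : Spc n → ℂ} (hh : Mom h) {ε : ℝ} (hε : |ε| = 1) (v : STn n) :
    Mom fun ξ => hwSym ε v ξ * h ξ := by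
  refine hh.of_le ((measurable_hwSym ε v).mul hh.1) (C := 2 * π * (|v.1| + ‖v.2‖)) 1 fun ξ => ?_
  rw [norm_mul, hwSym, norm_mul, Complex.norm_I, mul_one, Complex.norm_real, norm_mul, norm_mul,
    Real.norm_of_nonneg pi_pos.le, Real.norm_ofNat, pow_one, ← mul_assoc]
  refine mul_le_mul_of_nonneg_right ?_ (norm_nonneg _)
  rw [mul_assoc (2 * π)]
  gcongr
  refine (norm_add_le _ _).trans ?_
  rw [add_mul]
  refine add_le_add (le_of_eq ?_) (norm_inner_le_norm _ _)
  rw [norm_mul, norm_mul, norm_norm, Real.norm_eq_abs, hε, one_mul, Real.norm_eq_abs, mul_comm]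

lemma hw_eq_fourier {n : ℕ} {h : Spc n → ℂ} (hh : Measurable h) (ε : ℝ) :
    hw ε h = VectorFourier.fourierIntegral 𝐞
      ((volume : Measure (Spc n)).map fun ξ => ((ε * ‖ξ‖, ξ) : STn n)) (stL n).toLinearMap₁₂
      (fun v => h v.2) := by
  ext p
  rw [hw, VectorFourier.fourierIntegral, integral_map (by fun_prop)]
  · refine integral_congr_ae (.of_forall fun ξ => ?_)
    simp only [stL_apply', neg_neg, Circle.smul_def,
      Real.fourierChar_apply, smul_eq_mul, ek]
    rw [mul_comm, ← Complex.exp_add, real_inner_comm]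
    push_cast; ring_nf
  · refine Measurable.aestronglyMeasurable ?_
    simp only [Circle.smul_def, smul_eq_mul]
    refine Measurable.mul ?_ (hh.comp measurable_snd)
    simp only [stL_apply']
    exact (continuous_subtype_val.comp (continuous_fourierChar.comp (by fun_prop))).measurable

lemma norm_lift {n : ℕ} {ε : ℝ} (hε : |ε| = 1) (ξ : Spc n) : ‖((ε * ‖ξ‖, ξ) : STn n)‖ = ‖ξ‖ := by
  rw [Prod.norm_mk, norm_mul, Real.norm_eq_abs, hε, norm_norm, one_mul, max_self]

lemma Mom.lift_integrable {n : ℕ} {h : Spc n → ℂ} (hh : Mom h) {ε : ℝ} (hε : |ε| = 1) (k : ℕ) :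
    Integrable (fun v : STn n => ‖v‖ ^ k * ‖h v.2‖)
      ((volume : Measure (Spc n)).map fun ξ => ((ε * ‖ξ‖, ξ) : STn n)) := by
  have hm : Measurable fun v : STn n => ‖v‖ ^ k * ‖h v.2‖ := by
    have := hh.1
    fun_prop
  rw [integrable_map_measure hm.aestronglyMeasurable (by fun_prop)]
  refine (hh.2 k).congr (.of_forall fun ξ => ?_)
  simp [norm_lift hε]

lemma contDiff_hw {n : ℕ} {h : Spc n → ℂ} (hh : Mom h) {ε : ℝ} (hε : |ε| = 1) :
    ContDiff ℝ ∞ (hw ε h) := by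
  rw [hw_eq_fourier hh.1]
  exact VectorFourier.contDiff_fourierIntegral _ fun k _ => hh.lift_integrable hε k

lemma fderiv_hw {n : ℕ} {h : Spc n → ℂ} (hh : Mom h) {ε : ℝ} (hε : |ε| = 1) (p v : STn n) :
    fderiv ℝ (hw ε h) p v = hw ε (fun ξ => hwSym ε v ξ * h ξ) p := by
  have hi : Integrable (fun v : STn n => h v.2)
      ((volume : Measure (Spc n)).map fun ξ => ((ε * ‖ξ‖, ξ) : STn n)) := by
    have := hh.lift_integrable hε 0
    simp only [pow_zero, one_mul] at this
    exact (integrable_norm_iff (hh.1.comp measurable_snd).aestronglyMeasurable).1 this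
  have hi1 := hh.lift_integrable hε 1
  simp only [pow_one] at hi1
  have hmu := (hh.hwSym_mul hε v).1
  rw [hw_eq_fourier hh.1, VectorFourier.fderiv_fourierIntegral _ hi hi1]
  have hF : Integrable (VectorFourier.fourierSMulRight (stL n) (fun v : STn n => h v.2))
      ((volume : Measure (Spc n)).map fun ξ => ((ε * ‖ξ‖, ξ) : STn n)) := by
    refine (hi1.const_mul (2 * π * ‖stL n‖)).mono' hi.1.fourierSMulRight (.of_forall fun w => ?_)
    refine (VectorFourier.norm_fourierSMulRight_le _ _ _).trans (le_of_eq (by ring))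
  rw [VectorFourier.fourierIntegral, ContinuousLinearMap.integral_apply]
  · rw [hw, integral_map (by fun_prop)]
    · refine integral_congr_ae (.of_forall fun ξ => ?_)
      simp only [stL_apply', stL_apply, neg_neg, Circle.smul_def,
        Real.fourierChar_apply, ek, smul_apply, hwSym,
        VectorFourier.fourierSMulRight_apply]
      simp only [smul_eq_mul, Complex.real_smul]
      rw [← Complex.exp_add, real_inner_comm p.2 ξ, real_inner_comm v.2 ξ]
      push_cast; ring_nf
    · refine AEStronglyMeasurable.apply_continuousLinearMap ?_ _
      exact ((VectorFourier.fourierIntegral_convergent_iff continuous_fourierChar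
        (by apply (stL n).continuous₂) p).2 hF).1
  · exact (VectorFourier.fourierIntegral_convergent_iff continuous_fourierChar
      (by apply (stL n).continuous₂) p).2 hF

lemma hw_congr {n : ℕ} {h h' : Spc n → ℂ} (hhh : h =ᵐ[volume] h') (ε : ℝ) : hw ε h = hw ε h' := by
  ext p
  refine integral_congr_ae ?_
  filter_upwards [hhh] with ξ hξ
  rw [hξ]

/-! ### The free wave with initial data `(0, ψ)` -/

lemma schwartz_rpow_integrable {n : ℕ} (hn : 1 ≤ n) (P : SchwartzMap (Spc n) ℂ) {b : ℝ}
    (hb : -(n : ℝ) < b) : Integrable fun ξ => ‖ξ‖ ^ b * ‖P ξ‖ := by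
  have hPm : Measurable P := P.continuous.measurable
  have hm : Measurable fun ξ => ‖ξ‖ ^ b * ‖P ξ‖ := by fun_prop
  have hS : MeasurableSet {ξ : Spc n | ‖ξ‖ < 1} := measurableSet_lt measurable_norm measurable_const
  rw [← integrableOn_univ, ← Set.union_compl_self {ξ : Spc n | ‖ξ‖ < 1}]
  refine IntegrableOn.union ?_ ?_
  · obtain ⟨C, hC⟩ := P.decay 0 0
    have hC' : ∀ ξ, ‖P ξ‖ ≤ C := fun ξ => by simpa using hC.2 ξ
    refine ⟨hm.aestronglyMeasurable, ?_⟩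
    rw [HasFiniteIntegral]
    calc _ ≤ ∫⁻ ξ in {ξ : Spc n | ‖ξ‖ < 1}, ENNReal.ofReal C * ENNReal.ofReal (‖ξ‖ ^ b) := by
          refine lintegral_mono fun ξ => ?_
          rw [Real.enorm_of_nonneg (by positivity), ← ENNReal.ofReal_mul hC.1.le, mul_comm]
          exact ENNReal.ofReal_le_ofReal (mul_le_mul_of_nonneg_right (hC' ξ) (by positivity))
      _ = ENNReal.ofReal C * ∫⁻ ξ in {ξ : Spc n | ‖ξ‖ < 1}, ENNReal.ofReal (‖ξ‖ ^ b) :=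
          lintegral_const_mul _ (by fun_prop)
      _ < ⊤ := ENNReal.mul_lt_top ENNReal.ofReal_lt_top
          ((lintegral_ball_rpow hn one_pos hb).trans_lt ENNReal.ofReal_lt_top)
  · obtain ⟨k, hk⟩ := exists_nat_ge b
    refine ((P.integrable_pow_mul volume k).integrableOn).mono' hm.aestronglyMeasurable ?_
    refine (ae_restrict_iff' hS.compl).2 (.of_forall fun ξ hξ => ?_)
    have h1 : 1 ≤ ‖ξ‖ := by simpa using hξ
    rw [Real.norm_of_nonneg (by positivity), ← Real.rpow_natCast]
    gcongr

lemma mom_schwartz {n : ℕ} (P : SchwartzMap (Spc n) ℂ) : Mom (P : Spc n → ℂ) :=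
  ⟨P.continuous.measurable, fun k => P.integrable_pow_mul volume k⟩

/-- The symbol `P(ξ) / (4 π i |ξ|)`. -/
noncomputable def hSym {n : ℕ} (P : Spc n → ℂ) (ξ : Spc n) : ℂ :=
  P ξ / (4 * π * Complex.I * ‖ξ‖)

lemma norm_hSym {n : ℕ} (P : Spc n → ℂ) (ξ : Spc n) :
    ‖hSym P ξ‖ = (4 * π)⁻¹ * (‖ξ‖⁻¹ * ‖P ξ‖) := by
  rw [hSym, norm_div, norm_mul, norm_mul, norm_mul, Complex.norm_I, Complex.norm_real,
    Complex.norm_real, norm_norm, Real.norm_of_nonneg pi_pos.le, Complex.norm_ofNat, mul_one,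
    div_eq_mul_inv, mul_inv]
  ring

lemma mom_hSym {n : ℕ} (hn : 2 ≤ n) (P : SchwartzMap (Spc n) ℂ) : Mom (hSym P) := by
  have hPm : Measurable P := P.continuous.measurable
  refine ⟨by unfold hSym; fun_prop, fun k => ?_⟩
  have hn' : (2 : ℝ) ≤ n := by exact_mod_cast hn
  have h := (schwartz_rpow_integrable (by omega) P (b := (k : ℝ) - 1) (by
    have : (0 : ℝ) ≤ k := by positivity
    linarith)).const_mul (4 * π)⁻¹
  refine h.congr ?_
  filter_upwards [ae_ne_zero (n := n) (by omega)] with ξ hξ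
  have : 0 < ‖ξ‖ := norm_pos_iff.2 hξ
  rw [norm_hSym, Real.rpow_sub this, Real.rpow_one, Real.rpow_natCast]
  ring

/-- Sum of a forward and a backward half wave. -/
noncomputable def U2 {n : ℕ} (h₁ h₂ : Spc n → ℂ) (p : STn n) : ℂ := hw 1 h₁ p + hw (-1) h₂ p

lemma contDiff_U2 {n : ℕ} {h₁ h₂ : Spc n → ℂ} (H₁ : Mom h₁) (H₂ : Mom h₂) :
    ContDiff ℝ ∞ (U2 h₁ h₂) :=
  (contDiff_hw H₁ (by simp)).add (contDiff_hw H₂ (by simp))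

lemma fderiv_U2 {n : ℕ} {h₁ h₂ : Spc n → ℂ} (H₁ : Mom h₁) (H₂ : Mom h₂) (p v : STn n) :
    fderiv ℝ (U2 h₁ h₂) p v =
      U2 (fun ξ => hwSym 1 v ξ * h₁ ξ) (fun ξ => hwSym (-1) v ξ * h₂ ξ) p := by
  have d1 := (contDiff_hw H₁ (ε := 1) (by simp)).differentiable (by simp) p
  have d2 := (contDiff_hw H₂ (ε := -1) (by simp)).differentiable (by simp) p
  unfold U2
  rw [fderiv_fun_add d1 d2, add_apply, fderiv_hw H₁ (by simp), fderiv_hw H₂ (by simp)]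

lemma dirD_U2 {n : ℕ} (L : ℂ →L[ℝ] ℝ) {h₁ h₂ : Spc n → ℂ} (H₁ : Mom h₁) (H₂ : Mom h₂)
    (v : STn n) :
    dirD v (fun p => L (U2 h₁ h₂ p)) = fun p => L (U2 (fun ξ => hwSym 1 v ξ * h₁ ξ)
      (fun ξ => hwSym (-1) v ξ * h₂ ξ) p) := by
  ext p
  have d := (contDiff_U2 H₁ H₂).differentiable (by simp) p
  rw [dirD, ← fderiv_U2 H₁ H₂]
  have := (L.hasFDerivAt.comp p d.hasFDerivAt).fderiv
  change fderiv ℝ (L ∘ U2 h₁ h₂) p v = _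
  rw [this]; rfl

lemma integrable_hw {n : ℕ} {h : Spc n → ℂ} (hh : Integrable h) (ε : ℝ) (p : STn n) :
    Integrable fun ξ =>
      h ξ * (Complex.exp ((2 * π * (ε * p.1 * ‖ξ‖) : ℝ) * Complex.I) * ek p.2 ξ) := by
  refine hh.mul_bdd (c := 1) ?_ (.of_forall fun ξ => ?_)
  · refine Continuous.aestronglyMeasurable ?_
    refine Continuous.mul (by fun_prop) (continuous_ek.comp (Continuous.prodMk_right _))
  · rw [norm_mul, norm_ek, Complex.norm_exp_ofReal_mul_I, mul_one]

lemma hw_box {n : ℕ} {h : Spc n → ℂ} (H : Mom h) {ε : ℝ} (hε : |ε| = 1) (p : STn n) :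
    hw ε (fun ξ => hwSym ε (1, 0) ξ * (hwSym ε (1, 0) ξ * h ξ)) p =
      ∑ j, hw ε (fun ξ => hwSym ε (0, EuclideanSpace.single j 1) ξ *
        (hwSym ε (0, EuclideanSpace.single j 1) ξ * h ξ)) p := by
  unfold hw
  rw [← integral_finsetSum _ fun j _ => integrable_hw
    ((H.hwSym_mul hε _).hwSym_mul hε _).integrable ε p]
  refine integral_congr_ae (.of_forall fun ξ => ?_)
  have hε2 : ε ^ 2 = 1 := by rw [← sq_abs, hε, one_pow]
  have hsum : ∑ j, ((ξ j : ℝ) : ℂ) ^ 2 = ((‖ξ‖ ^ 2 : ℝ) : ℂ) := by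
    rw [EuclideanSpace.real_norm_sq_eq]; push_cast; rfl
  simp only [hwSym, inner_zero_left, EuclideanSpace.inner_single_left, mul_zero, mul_one, zero_add,
    add_zero, conj_trivial, one_mul]
  set e := Complex.exp ((2 * π * (ε * p.1 * ‖ξ‖) : ℝ) * Complex.I) * ek p.2 ξ
  have hε2' : (ε : ℂ) ^ 2 = 1 := by exact_mod_cast hε2
  calc _ = (2 * π * Complex.I) ^ 2 * ((‖ξ‖ ^ 2 : ℝ) : ℂ) * h ξ * e * (ε : ℂ) ^ 2 := by
        push_cast; ring
    _ = ∑ j, (2 * π * Complex.I) ^ 2 * ((ξ j : ℝ) : ℂ) ^ 2 * h ξ * e := by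
        rw [hε2', mul_one, ← hsum, Finset.mul_sum, Finset.sum_mul, Finset.sum_mul]
    _ = _ := by
        refine Finset.sum_congr rfl fun j _ => ?_
        push_cast; ring

lemma boxD_U2 {n : ℕ} (L : ℂ →L[ℝ] ℝ) {h₁ h₂ : Spc n → ℂ} (H₁ : Mom h₁) (H₂ : Mom h₂)
    (p : STn n) : boxD (fun p => L (U2 h₁ h₂ p)) p = 0 := by
  have e1 : |(1 : ℝ)| = 1 := by simp
  have e2 : |(-1 : ℝ)| = 1 := by simp
  have hd : ∀ v, dirD v (dirD v (fun p => L (U2 h₁ h₂ p))) = _ := fun v => by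
    rw [dirD_U2 L H₁ H₂, dirD_U2 L (H₁.hwSym_mul e1 v) (H₂.hwSym_mul e2 v)]
  rw [boxD, lapD, sub_eq_zero]
  simp only [dtD, dxD, hd]
  rw [← map_sum]
  congr 1
  simp only [U2, Finset.sum_add_distrib]
  rw [hw_box H₁ e1, hw_box H₂ e2]

/-- The free wave `∫ sin (2 π s |ξ|) / (2 π |ξ|) P(ξ) exp (2 π i ⟨x, ξ⟩) dξ`. -/
noncomputable def Wv {n : ℕ} (P : Spc n → ℂ) : STn n → ℂ := U2 (hSym P) fun ξ => -hSym P ξ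

/-- The time derivative of `Wv P`. -/
noncomputable def Wt {n : ℕ} (P : Spc n → ℂ) : STn n → ℂ :=
  U2 (fun ξ => P ξ / 2) fun ξ => P ξ / 2

lemma mom_neg_hSym {n : ℕ} (hn : 2 ≤ n) (P : SchwartzMap (Spc n) ℂ) :
    Mom fun ξ => -hSym P ξ :=
  (mom_hSym hn P).of_le (mom_hSym hn P).1.neg (C := 1) 0 fun ξ => by simp

lemma dtD_Wv {n : ℕ} (hn : 2 ≤ n) (L : ℂ →L[ℝ] ℝ) (P : SchwartzMap (Spc n) ℂ) :
    dtD (fun p => L (Wv P p)) = fun p => L (Wt P p) := by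
  rw [dtD, Wv, dirD_U2 L (mom_hSym hn P) (mom_neg_hSym hn P)]
  ext p
  congr 1
  rw [Wt, U2, U2]
  have hpi : (π : ℂ) ≠ 0 := by exact_mod_cast pi_ne_zero
  congr 1
  · refine congrFun (hw_congr ?_ _) p
    filter_upwards [ae_ne_zero (n := n) (by omega)] with ξ hξ
    have : (‖ξ‖ : ℂ) ≠ 0 := by exact_mod_cast norm_ne_zero_iff.2 hξ
    simp only [hwSym, hSym, inner_zero_left]
    push_cast
    field_simp
    ring
  · refine congrFun (hw_congr ?_ _) p
    filter_upwards [ae_ne_zero (n := n) (by omega)] with ξ hξ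
    have : (‖ξ‖ : ℂ) ≠ 0 := by exact_mod_cast norm_ne_zero_iff.2 hξ
    simp only [hwSym, hSym, inner_zero_left]
    push_cast
    field_simp
    ring

/-- The spatial Fourier transform of `Wv P` at time `s`. -/
noncomputable def Gs {n : ℕ} (P : Spc n → ℂ) (s : ℝ) (ξ : Spc n) : ℂ :=
  hSym P ξ * (Complex.exp ((2 * π * (1 * s * ‖ξ‖) : ℝ) * Complex.I) -
    Complex.exp ((2 * π * ((-1) * s * ‖ξ‖) : ℝ) * Complex.I))

/-- The spatial Fourier transform of `Wt P` at time `s`. -/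
noncomputable def Gc {n : ℕ} (P : Spc n → ℂ) (s : ℝ) (ξ : Spc n) : ℂ :=
  P ξ / 2 * (Complex.exp ((2 * π * (1 * s * ‖ξ‖) : ℝ) * Complex.I) +
    Complex.exp ((2 * π * ((-1) * s * ‖ξ‖) : ℝ) * Complex.I))

lemma Wv_eq_synth {n : ℕ} (hn : 2 ≤ n) (P : SchwartzMap (Spc n) ℂ) (s : ℝ) (x : Spc n) :
    Wv P (s, x) = synth (Gs P s) x := by
  rw [Wv, U2, hw, hw, synth, ← integral_add (integrable_hw (mom_hSym hn P).integrable _ _)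
    (integrable_hw (mom_neg_hSym hn P).integrable _ _)]
  refine integral_congr_ae (.of_forall fun ξ => ?_)
  simp only [Gs]; ring

lemma Wt_eq_synth {n : ℕ} (P : SchwartzMap (Spc n) ℂ) (s : ℝ) (x : Spc n) :
    Wt P (s, x) = synth (Gc P s) x := by
  have hi : Integrable fun ξ => P ξ / 2 := P.integrable.div_const 2
  rw [Wt, U2, hw, hw, synth, ← integral_add (integrable_hw hi _ _) (integrable_hw hi _ _)]
  refine integral_congr_ae (.of_forall fun ξ => ?_)
  simp only [Gc]; ring

lemma norm_Gs_le {n : ℕ} (P : Spc n → ℂ) (s : ℝ) (ξ : Spc n) :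
    ‖Gs P s ξ‖ ≤ ‖ξ‖⁻¹ * ‖P ξ‖ := by
  rw [Gs, norm_mul, norm_hSym]
  have h1 : ‖Complex.exp ((2 * π * (1 * s * ‖ξ‖) : ℝ) * Complex.I) -
    Complex.exp ((2 * π * ((-1) * s * ‖ξ‖) : ℝ) * Complex.I)‖ ≤ 2 := by
    refine (norm_sub_le _ _).trans ?_
    rw [Complex.norm_exp_ofReal_mul_I, Complex.norm_exp_ofReal_mul_I]; norm_num
  have h2 : (4 * π)⁻¹ * 2 ≤ 1 := by
    rw [inv_mul_le_iff₀ (by positivity)]; nlinarith [pi_gt_three]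
  have h3 : 0 ≤ ‖ξ‖⁻¹ * ‖P ξ‖ := by positivity
  calc _ ≤ (4 * π)⁻¹ * (‖ξ‖⁻¹ * ‖P ξ‖) * 2 := by gcongr
    _ = ((4 * π)⁻¹ * 2) * (‖ξ‖⁻¹ * ‖P ξ‖) := by ring
    _ ≤ 1 * (‖ξ‖⁻¹ * ‖P ξ‖) := by gcongr
    _ = _ := one_mul _

lemma norm_Gc_le {n : ℕ} (P : Spc n → ℂ) (s : ℝ) (ξ : Spc n) : ‖Gc P s ξ‖ ≤ ‖P ξ‖ := by
  rw [Gc, norm_mul, norm_div, Complex.norm_ofNat]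
  have h1 : ‖Complex.exp ((2 * π * (1 * s * ‖ξ‖) : ℝ) * Complex.I) +
    Complex.exp ((2 * π * ((-1) * s * ‖ξ‖) : ℝ) * Complex.I)‖ ≤ 2 := by
    refine (norm_add_le _ _).trans ?_
    rw [Complex.norm_exp_ofReal_mul_I, Complex.norm_exp_ofReal_mul_I]; norm_num
  calc _ ≤ ‖P ξ‖ / 2 * 2 := by gcongr
    _ = _ := by ring

lemma measurable_Gs {n : ℕ} {P : Spc n → ℂ} (hP : Measurable P) (s : ℝ) : Measurable (Gs P s) := by
  unfold Gs hSym; fun_prop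

lemma measurable_Gc {n : ℕ} {P : Spc n → ℂ} (hP : Measurable P) (s : ℝ) : Measurable (Gc P s) := by
  unfold Gc; fun_prop

lemma integrable_Gs {n : ℕ} (hn : 2 ≤ n) (P : SchwartzMap (Spc n) ℂ) (s : ℝ) :
    Integrable (Gs P s) := by
  refine ((mom_hSym hn P).integrable.norm.const_mul (4 * π)).mono'
    (measurable_Gs P.continuous.measurable s).aestronglyMeasurable (.of_forall fun ξ => ?_)
  refine (norm_Gs_le P s ξ).trans (le_of_eq ?_)
  rw [norm_hSym]; field_simp

lemma integrable_Gc {n : ℕ} (P : SchwartzMap (Spc n) ℂ) (s : ℝ) : Integrable (Gc P s) :=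
  P.integrable.norm.mono' (measurable_Gc P.continuous.measurable s).aestronglyMeasurable
    (.of_forall fun ξ => norm_Gc_le P s ξ)

lemma Wv_zero {n : ℕ} (hn : 2 ≤ n) (P : SchwartzMap (Spc n) ℂ) (x : Spc n) :
    Wv P (0, x) = 0 := by
  rw [Wv_eq_synth hn]; simp [synth, Gs]

lemma Wt_zero {n : ℕ} (P : SchwartzMap (Spc n) ℂ) (x : Spc n) :
    Wt P (0, x) = 𝓕⁻ P x := by
  rw [Wt_eq_synth, SchwartzMap.fourierInv_coe, Real.fourierInv_eq', synth]
  refine integral_congr_ae (.of_forall fun ξ => ?_)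
  simp only [Gc, ek, smul_eq_mul, real_inner_comm ξ x]
  simp
  ring

/-! ### Differentiation of space integrals and a divergence identity -/

lemma contDiff_dirD {n : ℕ} {f : STn n → ℝ} (hf : ContDiff ℝ ∞ f) (v : STn n) :
    ContDiff ℝ ∞ (dirD v f) :=
  (hf.fderiv_right (m := ∞) (by simp)).clm_apply contDiff_const

lemma dirD_comm {n : ℕ} {f : STn n → ℝ} (hf : ContDiff ℝ ∞ f) (v w : STn n) (p : STn n) :
    dirD v (dirD w f) p = dirD w (dirD v f) p := by
  have hd : DifferentiableAt ℝ (fderiv ℝ f) p :=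
    (hf.fderiv_right (m := ∞) (by simp)).differentiable (by simp) p
  have h1 : ∀ a b : STn n, dirD a (dirD b f) p = fderiv ℝ (fderiv ℝ f) p a b := by
    intro a b
    change fderiv ℝ (fun q => fderiv ℝ f q b) p a = _
    rw [fderiv_clm_apply hd (differentiableAt_const b)]
    simp
  rw [h1, h1]
  refine (hf.contDiffAt.isSymmSndFDerivAt ?_) v w
  rw [minSmoothness_of_isRCLikeNormedField]
  exact WithTop.coe_le_coe.2 (le_top : (2 : ℕ∞) ≤ ⊤)

lemma dirD_mul {n : ℕ} {f g : STn n → ℝ} (hf : Differentiable ℝ f) (hg : Differentiable ℝ g)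
    (v p : STn n) : dirD v (fun q => f q * g q) p = dirD v f p * g p + f p * dirD v g p := by
  rw [dirD, fderiv_fun_mul (hf p) (hg p)]
  simp [dirD]; ring

lemma dirD_sub {n : ℕ} {f g : STn n → ℝ} (hf : Differentiable ℝ f) (hg : Differentiable ℝ g)
    (v p : STn n) : dirD v (fun q => f q - g q) p = dirD v f p - dirD v g p := by
  rw [dirD, fderiv_fun_sub (hf p) (hg p)]; rfl

lemma dirD_translate {n : ℕ} (f : STn n → ℝ) (v a : STn n) :
    dirD v (fun q => f (q - a)) = fun p => dirD v f (p - a) := by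
  ext p
  rw [dirD, fderiv_comp_sub]; rfl

/-- Space supports are bounded, locally uniformly in time. -/
def LocSupp {n : ℕ} (H : STn n → ℝ) : Prop :=
  ∀ s₀ : ℝ, ∃ R : ℝ, ∀ s, |s - s₀| < 1 → ∀ x, R < ‖x‖ → H (s, x) = 0

lemma LocSupp.dirD {n : ℕ} {H : STn n → ℝ} (h : LocSupp H) (v : STn n) : LocSupp (dirD v H) := by
  intro s₀
  obtain ⟨R, hR⟩ := h s₀
  refine ⟨R, fun s hs x hx => ?_⟩
  have : H =ᶠ[nhds (s, x)] fun _ => 0 := by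
    have ho : IsOpen {p : STn n | |p.1 - s₀| < 1 ∧ R < ‖p.2‖} :=
      (isOpen_lt (f := fun p : STn n => |p.1 - s₀|) (g := fun _ => 1) (by fun_prop)
        continuous_const).inter
      (isOpen_lt (f := fun _ => R) (g := fun p : STn n => ‖p.2‖) continuous_const (by fun_prop))
    filter_upwards [ho.mem_nhds (show (s, x) ∈ _ from ⟨hs, hx⟩)] with p hp
    exact hR p.1 hp.1 p.2 hp.2
  rw [_root_.dirD, this.fderiv_eq]; simp

lemma LocSupp.mul_right {n : ℕ} {H : STn n → ℝ} (h : LocSupp H) (K : STn n → ℝ) :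
    LocSupp fun p => K p * H p := by
  intro s₀
  obtain ⟨R, hR⟩ := h s₀
  exact ⟨R, fun s hs x hx => by simp [hR s hs x hx]⟩

lemma LocSupp.sub {n : ℕ} {H K : STn n → ℝ} (h : LocSupp H) (k : LocSupp K) :
    LocSupp fun p => H p - K p := by
  intro s₀
  obtain ⟨R, hR⟩ := h s₀
  obtain ⟨R', hR'⟩ := k s₀
  refine ⟨max R R', fun s hs x hx => ?_⟩
  simp [hR s hs x ((le_max_left _ _).trans_lt hx), hR' s hs x ((le_max_right _ _).trans_lt hx)]

lemma LocSupp.hasCompactSupport {n : ℕ} {H : STn n → ℝ} (h : LocSupp H) (s : ℝ) :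
    HasCompactSupport fun x => H (s, x) := by
  obtain ⟨R, hR⟩ := h s
  refine HasCompactSupport.intro (isCompact_closedBall 0 R) fun x hx => hR s (by simp) x ?_
  simpa using hx

lemma LocSupp.integrable {n : ℕ} {H : STn n → ℝ} (h : LocSupp H) (hc : Continuous H) (s : ℝ) :
    Integrable fun x => H (s, x) :=
  (hc.comp (Continuous.prodMk_right s)).integrable_of_hasCompactSupport (h.hasCompactSupport s)

lemma hasDerivAt_integral_space {n : ℕ} {H : STn n → ℝ} (hH : ContDiff ℝ 1 H) (h : LocSupp H)
    (s : ℝ) : HasDerivAt (fun s => ∫ x, H (s, x)) (∫ x, dtD H (s, x)) s := by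
  have hcont : Continuous (dtD H) := (hH.continuous_fderiv (by simp)).clm_apply continuous_const
  obtain ⟨R, hR⟩ := h.dirD (1, 0) s
  obtain ⟨C, hC⟩ := ((isCompact_closedBall s 1).prod (isCompact_closedBall (0 : Spc n) R)).exists_bound_of_continuousOn
    hcont.continuousOn
  have hball : Metric.ball s 1 ∈ nhds s := Metric.ball_mem_nhds s one_pos
  refine (hasDerivAt_integral_of_dominated_loc_of_deriv_le (μ := volume)
    (F := fun s x => H (s, x)) (F' := fun s x => dtD H (s, x)) (s := Metric.ball s 1)
    (bound := (Metric.closedBall (0 : Spc n) R).indicator fun _ => C)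
    hball (.of_forall fun s' => ?_) (h.integrable hH.continuous s) ?_ ?_ ?_ ?_).2
  · exact (hH.continuous.comp (Continuous.prodMk_right s')).aestronglyMeasurable
  · exact (hcont.comp (Continuous.prodMk_right s)).aestronglyMeasurable
  · refine .of_forall fun x s' hs' => ?_
    by_cases hx : ‖x‖ ≤ R
    · rw [Set.indicator_of_mem (by simpa using hx)]
      exact hC (s', x) ⟨Metric.ball_subset_closedBall hs', by simpa using hx⟩
    · rw [Set.indicator_of_notMem (by simpa using hx)]
      have := hR s' (by simpa [Real.dist_eq] using hs') x (not_le.1 hx)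
      rw [dtD, this, norm_zero]
  · exact (integrable_indicator_iff Metric.isClosed_closedBall.measurableSet).2
      (integrableOn_const (isCompact_closedBall _ _).measure_lt_top.ne)
  · refine .of_forall fun x s' _ => ?_
    have h1 := (hH.differentiable (by simp) (s', x)).hasFDerivAt
    have h2 : HasDerivAt (fun s : ℝ => ((s, x) : STn n)) (1, 0) s' :=
      (hasDerivAt_id s').prodMk (hasDerivAt_const s' x)
    exact h1.comp_hasDerivAt s' h2

lemma integral_dxD {n : ℕ} {K : STn n → ℝ} (hK : ContDiff ℝ 1 K) (h : LocSupp K) (j : Fin n)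
    (s : ℝ) : ∫ x, dxD j K (s, x) = 0 := by
  have hcont : Continuous (dxD j K) := (hK.continuous_fderiv (by simp)).clm_apply continuous_const
  have hi : Integrable fun x => dxD j K (s, x) := (h.dirD _).integrable hcont s
  have h1 := integral_bilinear_hasLineDerivAt_right_eq_neg_left_of_integrable (μ := volume)
    (f := fun _ : Spc n => (1 : ℝ)) (f' := fun _ => 0) (g := fun x => K (s, x))
    (g' := fun x => dxD j K (s, x)) (v := EuclideanSpace.single j 1)
    (B := ContinuousLinearMap.mul ℝ ℝ) (by simp) (by simpa using hi)
    (by simpa using h.integrable hK.continuous s)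
    (fun x _ => by
      simpa using ((hasFDerivAt_const (1 : ℝ) x).hasLineDerivAt (EuclideanSpace.single j 1)))
    (fun x _ => by
      have h1 := (hK.differentiable (by simp) (s, x)).hasFDerivAt
      have h2 := h1.comp x ((hasFDerivAt_const s x).prodMk (hasFDerivAt_id x))
      exact h2.hasLineDerivAt (EuclideanSpace.single j 1))
  simpa using h1

/-- Divergence identity: spatial divergences do not contribute to the derivative of a space
integral. -/
lemma hasDerivAt_divergence {n : ℕ} {H : STn n → ℝ} {K : Fin n → STn n → ℝ} (hH : ContDiff ℝ 1 H)
    (h : LocSupp H) (hK : ∀ j, ContDiff ℝ 1 (K j)) (k : ∀ j, LocSupp (K j)) (s : ℝ) :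
    HasDerivAt (fun s => ∫ x, H (s, x)) (∫ x, (dtD H (s, x) - ∑ j, dxD j (K j) (s, x))) s := by
  have hc : ∀ {G : STn n → ℝ} (v : STn n), ContDiff ℝ 1 G → Continuous (dirD v G) :=
    fun v hG => (hG.continuous_fderiv (by simp)).clm_apply continuous_const
  have hi : ∀ j, Integrable fun x => dxD j (K j) (s, x) :=
    fun j => ((k j).dirD _).integrable (hc _ (hK j)) s
  have hHi : Integrable fun x => dtD H (s, x) := (h.dirD _).integrable (hc _ hH) s
  rw [integral_sub hHi (integrable_finsetSum _ fun j _ => hi j),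
    integral_finsetSum _ fun j _ => hi j]
  simp only [integral_dxD (hK _) (k _), Finset.sum_const_zero, sub_zero]
  exact hasDerivAt_integral_space hH h s

/-! ### Finite speed of propagation -/

lemma dirD_add {n : ℕ} {f g : STn n → ℝ} (hf : Differentiable ℝ f) (hg : Differentiable ℝ g)
    (v p : STn n) : dirD v (fun q => f q + g q) p = dirD v f p + dirD v g p := by
  rw [dirD, fderiv_fun_add (hf p) (hg p)]; rfl

lemma dirD_sum {n : ℕ} {f : Fin n → STn n → ℝ} (hf : ∀ j, Differentiable ℝ (f j))
    (v p : STn n) : dirD v (fun q => ∑ j, f j q) p = ∑ j, dirD v (f j) p := by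
  rw [dirD, fderiv_fun_sum fun j _ => hf j p]; simp [dirD]

lemma dxD_mul {n : ℕ} {f g : STn n → ℝ} (hf : Differentiable ℝ f) (hg : Differentiable ℝ g)
    (j : Fin n) (p : STn n) :
    dxD j (fun q => f q * g q) p = dxD j f p * g p + f p * dxD j g p := dirD_mul hf hg _ p

/-- Smooth cutoff to the solid double light cone with vertex `(ρ, x₀)`. Only times up to `ρ`,
where the cone is the backward one, matter below. -/
noncomputable def coneC {n : ℕ} (ρ : ℝ) (x₀ : Spc n) (p : STn n) : ℝ :=
  expNegInvGlue ((ρ - p.1) ^ 2 - ‖p.2 - x₀‖ ^ 2)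

lemma contDiff_coneC {n : ℕ} (ρ : ℝ) (x₀ : Spc n) : ContDiff ℝ ∞ (coneC ρ x₀) := by
  unfold coneC
  refine (expNegInvGlue.contDiff (n := ⊤)).comp (ContDiff.sub ?_ ?_)
  · exact (contDiff_const.sub contDiff_fst).pow 2
  · exact (contDiff_snd.sub contDiff_const).norm_sq ℝ

lemma dirD_coneC {n : ℕ} (ρ : ℝ) (x₀ : Spc n) (v p : STn n) :
    dirD v (coneC ρ x₀) p = deriv expNegInvGlue ((ρ - p.1) ^ 2 - ‖p.2 - x₀‖ ^ 2) *
      (-2 * (ρ - p.1) * v.1 - 2 * inner ℝ (p.2 - x₀) v.2) := by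
  have h1 : HasDerivAt expNegInvGlue (deriv expNegInvGlue ((ρ - p.1) ^ 2 - ‖p.2 - x₀‖ ^ 2))
      ((ρ - p.1) ^ 2 - ‖p.2 - x₀‖ ^ 2) :=
    (((expNegInvGlue.contDiff (n := 1)).differentiable (by simp)) _).hasDerivAt
  have h2 : HasFDerivAt (fun p : STn n => (ρ - p.1) ^ 2) _ p :=
    (HasFDerivAt.sub (hasFDerivAt_const ρ p) (hasFDerivAt_fst (𝕜 := ℝ))).pow 2
  have h3 : HasFDerivAt (fun p : STn n => ‖p.2 - x₀‖ ^ 2) _ p :=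
    (HasFDerivAt.sub (hasFDerivAt_snd (𝕜 := ℝ)) (hasFDerivAt_const x₀ p)).norm_sq
  have h4 := (h1.comp_hasFDerivAt p (h2.sub h3)).fderiv
  change fderiv ℝ (expNegInvGlue ∘ ((fun p : STn n => (ρ - p.1) ^ 2) - fun p => ‖p.2 - x₀‖ ^ 2))
    p v = _
  rw [h4]
  simp [inner_sub_left]

lemma locSupp_coneC {n : ℕ} (ρ : ℝ) (x₀ : Spc n) : LocSupp (coneC ρ x₀) := by
  intro s₀
  refine ⟨‖x₀‖ + |ρ| + |s₀| + 1, fun s hs x hx => expNegInvGlue.zero_of_nonpos ?_⟩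
  have h1 : |ρ - s| ≤ ‖x - x₀‖ := by
    have h2 : |ρ - s| ≤ |ρ| + |s₀| + 1 := by
      have : ρ - s = ρ - s₀ - (s - s₀) := by ring
      rw [this]
      have h5 := abs_sub (ρ - s₀) (s - s₀)
      have h6 := abs_sub ρ s₀
      linarith
    have := norm_sub_norm_le x x₀
    linarith
  have := sq_le_sq' (by linarith [abs_nonneg (ρ - s), norm_nonneg (x - x₀)]) h1
  rw [sq_abs] at this
  simpa using this

/-- Energy density `|∂w|²`. -/
noncomputable def enD {n : ℕ} (w : STn n → ℝ) (p : STn n) : ℝ :=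
  dtD w p * dtD w p + ∑ j, dxD j w p * dxD j w p

/-- Pointwise energy inequality: on the cone cutoff, which decreases in time inside the backward
cone at least as fast as it varies in space, the energy flux has a sign. -/
lemma energy_pointwise {n : ℕ} {w : STn n → ℝ} (hw : ContDiff ℝ ∞ w) (hbox : ∀ p, boxD w p = 0)
    (ρ : ℝ) (x₀ : Spc n) (p : STn n) (hp : p.1 ≤ ρ) :
    dtD (fun p => enD w p * coneC ρ x₀ p) p -
      ∑ j, dxD j (fun p => (2 * (dtD w p * dxD j w p)) * coneC ρ x₀ p) p ≤ 0 := by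
  have dd : ∀ {f : STn n → ℝ}, ContDiff ℝ ∞ f → Differentiable ℝ f :=
    fun h => h.differentiable (by simp)
  have hdt : ContDiff ℝ ∞ (dtD w) := contDiff_dirD hw _
  have hdx : ∀ j, ContDiff ℝ ∞ (dxD j w) := fun j => contDiff_dirD hw _
  have hc := dd (contDiff_coneC ρ x₀)
  have hsum : ContDiff ℝ ∞ fun q => ∑ j, dxD j w q * dxD j w q :=
    ContDiff.sum fun j _ => (hdx j).mul (hdx j)
  have hen : ContDiff ℝ ∞ (enD w) := (hdt.mul hdt).add hsum
  have e1 : dtD (fun p => enD w p * coneC ρ x₀ p) p =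
      (2 * dtD w p * dtD (dtD w) p + ∑ j, 2 * dxD j w p * dtD (dxD j w) p) * coneC ρ x₀ p +
        enD w p * dtD (coneC ρ x₀) p := by
    rw [dtD, dirD_mul (dd hen) hc]
    congr 2
    change dirD (1, 0) (fun q => dtD w q * dtD w q + ∑ j, dxD j w q * dxD j w q) p = _
    rw [dirD_add (dd (hdt.mul hdt)) (dd hsum), dirD_mul (dd hdt) (dd hdt),
      dirD_sum fun j => dd ((hdx j).mul (hdx j))]
    congr 1
    · unfold dtD; ring
    · refine Finset.sum_congr rfl fun j _ => ?_
      rw [dirD_mul (dd (hdx j)) (dd (hdx j))]; ring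
  have e2 : ∀ j, dxD j (fun p => (2 * (dtD w p * dxD j w p)) * coneC ρ x₀ p) p =
      (2 * (dtD (dxD j w) p * dxD j w p + dtD w p * dxD j (dxD j w) p)) * coneC ρ x₀ p +
        2 * (dtD w p * dxD j w p) * dxD j (coneC ρ x₀) p := by
    intro j
    have hm := hdt.mul (hdx j)
    rw [dxD_mul (dd (contDiff_const.mul hm)) hc,
      dxD_mul (f := fun _ => (2 : ℝ)) (differentiable_const _) (dd hm),
      dxD_mul (dd hdt) (dd (hdx j))]
    have : dxD j (fun _ : STn n => (2 : ℝ)) p = 0 := by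
      simp [dxD, dirD]
    rw [this, zero_mul, zero_add]
    have hcm : dxD j (dtD w) p = dtD (dxD j w) p := dirD_comm hw _ _ p
    rw [hcm]
  have hb := hbox p
  rw [boxD, lapD, sub_eq_zero] at hb
  have e3 : ∑ j, dxD j (fun p => (2 * (dtD w p * dxD j w p)) * coneC ρ x₀ p) p =
      (∑ j, 2 * dxD j w p * dtD (dxD j w) p + 2 * dtD w p * dtD (dtD w) p) * coneC ρ x₀ p +
        2 * dtD w p * ∑ j, dxD j w p * dxD j (coneC ρ x₀) p := by
    simp only [e2]
    rw [hb, Finset.mul_sum, ← Finset.sum_add_distrib, Finset.sum_mul, Finset.mul_sum,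
      ← Finset.sum_add_distrib]
    refine Finset.sum_congr rfl fun j _ => by ring
  rw [e1, e3]
  set y := (ρ - p.1) ^ 2 - ‖p.2 - x₀‖ ^ 2 with hy
  set d := deriv expNegInvGlue y with hd
  have f1 : dtD (coneC ρ x₀) p = d * (-2 * (ρ - p.1)) := by
    rw [dtD, dirD_coneC]; simp [← hy, ← hd]
  have f2 : ∀ j, dxD j (coneC ρ x₀) p = d * (-2 * (p.2 - x₀) j) := by
    intro j
    rw [dxD, dirD_coneC]
    simp [← hy, ← hd, EuclideanSpace.inner_single_right]
  set S := ∑ j, dxD j w p * (p.2 - x₀) j with hS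
  have f3 : ∑ j, dxD j w p * dxD j (coneC ρ x₀) p = d * (-2 * S) := by
    rw [hS, Finset.mul_sum, Finset.mul_sum]
    refine Finset.sum_congr rfl fun j _ => by rw [f2]; ring
  rw [f1, f3]
  have hd0 : 0 ≤ d := expNegInvGlue.monotone.deriv_nonneg
  have key : d * (-2 * (ρ - p.1) * enD w p + 4 * dtD w p * S) ≤ 0 := by
    rcases le_or_gt y 0 with hy0 | hy0
    · have : d = 0 := by
        rcases hy0.lt_or_eq with h | h
        · have : expNegInvGlue =ᶠ[nhds y] fun _ => 0 := by
            filter_upwards [Iio_mem_nhds h] with z hz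
            exact expNegInvGlue.zero_of_nonpos (le_of_lt hz)
          rw [hd, this.deriv_eq]; simp
        · -- `0` is a minimum of the nonnegative cutoff profile
          rw [hd, h]
          refine IsLocalMin.deriv_eq_zero (Filter.Eventually.of_forall fun z => ?_)
          simpa using expNegInvGlue.nonneg z
      simp [this]
    · refine mul_nonpos_of_nonneg_of_nonpos hd0 ?_
      set A := ∑ j, dxD j w p * dxD j w p with hA
      have hA0 : 0 ≤ A := Finset.sum_nonneg fun j _ => mul_self_nonneg _
      have hcs : S ^ 2 ≤ A * ‖p.2 - x₀‖ ^ 2 := by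
        have := Finset.sum_mul_sq_le_sq_mul_sq Finset.univ (fun j => dxD j w p)
          (fun j => (p.2 - x₀) j)
        rw [EuclideanSpace.real_norm_sq_eq, hA, hS]
        simpa only [sq] using this
      have hR : 0 ≤ ρ - p.1 := by linarith
      have hS2 : S ^ 2 ≤ (√A * (ρ - p.1)) ^ 2 := by
        rw [mul_pow, Real.sq_sqrt hA0]
        exact hcs.trans (mul_le_mul_of_nonneg_left (by linarith) hA0)
      have hS3 := abs_le_of_sq_le_sq hS2 (by positivity)
      have h4 : dtD w p * S ≤ |dtD w p| * (√A * (ρ - p.1)) := by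
        refine (le_abs_self _).trans ?_
        rw [abs_mul]
        exact mul_le_mul_of_nonneg_left hS3 (abs_nonneg _)
      have h5 : |dtD w p| * √A * 2 ≤ dtD w p * dtD w p + A := by
        nlinarith [sq_nonneg (|dtD w p| - √A), Real.sq_sqrt hA0, sq_abs (dtD w p)]
      have h6 : enD w p = dtD w p * dtD w p + A := rfl
      rw [h6]
      nlinarith [mul_le_mul_of_nonneg_left h5 hR]
  calc _ = d * (-2 * (ρ - p.1) * enD w p + 4 * dtD w p * S) := by ring
    _ ≤ 0 := key

/-- A smooth solution of the homogeneous wave equation vanishes at the points whose domain of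
dependence meets the initial surface inside the zero set of the data. -/
lemma wave_eq_zero {n : ℕ} {w : STn n → ℝ} (hw : ContDiff ℝ ∞ w) (hbox : ∀ p, boxD w p = 0)
    {ρ : ℝ} {x₀ : Spc n} (h0 : ∀ x, ‖x - x₀‖ < ρ → w (0, x) = 0)
    (h1 : ∀ x, ‖x - x₀‖ < ρ → dtD w (0, x) = 0) {s : ℝ} (hs : 0 ≤ s) (hsρ : s < ρ) :
    w (s, x₀) = 0 := by
  have hdt : ContDiff ℝ ∞ (dtD w) := contDiff_dirD hw _
  have hdx : ∀ j, ContDiff ℝ ∞ (dxD j w) := fun j => contDiff_dirD hw _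
  have hen : ContDiff ℝ ∞ (enD w) :=
    (hdt.mul hdt).add (ContDiff.sum fun j _ => (hdx j).mul (hdx j))
  have hc := contDiff_coneC ρ x₀
  have hl := locSupp_coneC ρ x₀
  have le1 : (1 : WithTop ℕ∞) ≤ ((⊤ : ℕ∞) : WithTop ℕ∞) :=
    WithTop.coe_le_coe.2 (le_top : (1 : ℕ∞) ≤ ⊤)
  have hH := hen.mul hc
  have hHl := hl.mul_right (enD w)
  have hder := fun s => hasDerivAt_divergence (H := fun p => enD w p * coneC ρ x₀ p)
    (K := fun j p => (2 * (dtD w p * dxD j w p)) * coneC ρ x₀ p) (hH.of_le le1) hHl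
    (fun j => ((contDiff_const.mul (hdt.mul (hdx j))).mul hc).of_le le1)
    (fun j => hl.mul_right _) s
  have hnn : ∀ p, 0 ≤ enD w p * coneC ρ x₀ p := fun p =>
    mul_nonneg (add_nonneg (mul_self_nonneg _) (Finset.sum_nonneg fun j _ => mul_self_nonneg _))
      (expNegInvGlue.nonneg _)
  have hdata : ∀ x, enD w (0, x) * coneC ρ x₀ (0, x) = 0 := by
    intro x
    by_cases hx : ‖x - x₀‖ < ρ
    · have hj : ∀ j, dxD j w (0, x) = 0 := by
        intro j
        have e : (fun y => w (0, y)) =ᶠ[nhds x] fun _ => 0 := by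
          have ho : IsOpen {y : Spc n | ‖y - x₀‖ < ρ} :=
            isOpen_lt (by fun_prop) continuous_const
          filter_upwards [ho.mem_nhds hx] with y hy using h0 y hy
        have h2 := (hw.differentiable (by simp) ((0 : ℝ), x)).hasFDerivAt.comp x
          ((hasFDerivAt_const (0 : ℝ) x).prodMk (hasFDerivAt_id x))
        have h3 := h2.fderiv
        change fderiv ℝ (fun y => w (0, y)) x = _ at h3
        rw [e.fderiv_eq] at h3
        have h4 := congrArg (fun L => L (EuclideanSpace.single j 1)) h3
        simp at h4
        exact h4.symm
      simp [enD, h1 x hx, hj]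
    · rw [coneC, expNegInvGlue.zero_of_nonpos, mul_zero]
      have : ρ ^ 2 ≤ ‖x - x₀‖ ^ 2 := by
        have : 0 ≤ ρ := hs.trans hsρ.le
        exact pow_le_pow_left₀ this (not_lt.1 hx) 2
      simpa using this
  have hzero : ∀ r ∈ Set.Icc 0 s, dtD w (r, x₀) = 0 := by
    intro r hr
    have hanti : AntitoneOn (fun s => ∫ x, enD w (s, x) * coneC ρ x₀ (s, x)) (Set.Icc 0 r) := by
      refine antitoneOn_of_deriv_nonpos (convex_Icc 0 r)
        (fun q _ => (hder q).continuousAt.continuousWithinAt)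
        (fun q _ => (hder q).differentiableAt.differentiableWithinAt) fun q hq => ?_
      rw [(hder q).deriv]
      rw [interior_Icc] at hq
      exact integral_nonpos fun x => energy_pointwise hw hbox ρ x₀ (q, x)
        ((hq.2.le.trans hr.2).trans hsρ.le)
    have hle := hanti (Set.left_mem_Icc.2 hr.1) (Set.right_mem_Icc.2 hr.1) hr.1
    simp only [hdata, integral_zero] at hle
    by_contra hne
    have hpos := Continuous.integral_pos_of_hasCompactSupport_nonneg_nonzero (μ := volume)
      (f := fun x => enD w (r, x) * coneC ρ x₀ (r, x)) (x := x₀)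
      (hH.continuous.comp (Continuous.prodMk_right r)) (hHl.hasCompactSupport r)
      (fun x => hnn (r, x)) (by
        refine (mul_pos ?_ (expNegInvGlue.pos_of_pos ?_)).ne'
        · exact add_pos_of_pos_of_nonneg (mul_self_pos.2 hne)
            (Finset.sum_nonneg fun j _ => mul_self_nonneg _)
        · have : 0 < ρ - r := by linarith [hr.2]
          simpa using pow_pos this 2)
    linarith
  have hcst := constant_of_has_deriv_right_zero (f := fun r => w (r, x₀)) (a := 0) (b := s)
    (hw.continuous.comp (Continuous.prodMk_left x₀)).continuousOn (fun r hr => by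
      have h1 := (hw.differentiable (by simp) (r, x₀)).hasFDerivAt
      have h2 : HasDerivAt (fun s : ℝ => ((s, x₀) : STn n)) (1, 0) r :=
        (hasDerivAt_id r).prodMk (hasDerivAt_const r x₀)
      have h3 := h1.comp_hasDerivAt r h2
      have h4 : fderiv ℝ w (r, x₀) (1, 0) = 0 := hzero r ⟨hr.1, hr.2.le⟩
      rw [h4] at h3
      exact h3.hasDerivWithinAt)
  rw [hcst s (Set.right_mem_Icc.2 hs)]
  exact h0 x₀ (by simpa using hs.trans_lt hsρ)

lemma Wv_neg {n : ℕ} (hn : 2 ≤ n) (P : SchwartzMap (Spc n) ℂ) (s : ℝ) (x : Spc n) :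
    Wv P (-s, x) = -Wv P (s, x) := by
  rw [Wv_eq_synth hn, Wv_eq_synth hn, synth, synth, ← integral_neg]
  refine integral_congr_ae (.of_forall fun ξ => ?_)
  simp only [Gs]
  have e1 : (2 * π * (1 * -s * ‖ξ‖) : ℝ) = 2 * π * (-1 * s * ‖ξ‖) := by ring
  have e2 : (2 * π * (-1 * -s * ‖ξ‖) : ℝ) = 2 * π * (1 * s * ‖ξ‖) := by ring
  rw [e1, e2]; ring

lemma contDiff_Wv {n : ℕ} (hn : 2 ≤ n) (L : ℂ →L[ℝ] ℝ) (P : SchwartzMap (Spc n) ℂ) :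
    ContDiff ℝ ∞ fun p => L (Wv P p) :=
  L.contDiff.comp (contDiff_U2 (mom_hSym hn P) (mom_neg_hSym hn P))

lemma Wv_eq_zero {n : ℕ} (hn : 2 ≤ n) (L : ℂ →L[ℝ] ℝ) (P : SchwartzMap (Spc n) ℂ) {R : ℝ}
    (hR : ∀ x, R < ‖x‖ → 𝓕⁻ P x = 0) (s : ℝ) (x : Spc n) (hx : R + |s| < ‖x‖) :
    L (Wv P (s, x)) = 0 := by
  have key : ∀ s, 0 ≤ s → R + s < ‖x‖ → L (Wv P (s, x)) = 0 := by
    intro s hs hx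
    refine wave_eq_zero (w := fun p => L (Wv P p)) (ρ := ‖x‖ - R) (contDiff_Wv hn L P)
      (boxD_U2 L (mom_hSym hn P) (mom_neg_hSym hn P)) (fun y _ => by simp [Wv_zero hn])
      (fun y hy => ?_) hs (by linarith)
    rw [dtD_Wv hn]
    have : R < ‖y‖ := by
      have := norm_sub_norm_le x y
      rw [norm_sub_rev] at this
      linarith
    simp [Wt_zero, hR y this]
  rcases le_total 0 s with h | h
  · exact key s h (by rwa [abs_of_nonneg h] at hx)
  · rw [abs_of_nonpos h] at hx
    have := key (-s) (by linarith) hx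
    rw [Wv_neg hn, map_neg, neg_eq_zero] at this
    exact this

lemma locSupp_Wv {n : ℕ} (hn : 2 ≤ n) (L : ℂ →L[ℝ] ℝ) (P : SchwartzMap (Spc n) ℂ) {R : ℝ}
    (hR : ∀ x, R < ‖x‖ → 𝓕⁻ P x = 0) (t : ℝ) :
    LocSupp fun p : STn n => L (Wv P (p - (t, 0))) := by
  intro s₀
  refine ⟨R + (1 + |s₀ - t|), fun s hs x hx => ?_⟩
  have := Wv_eq_zero hn L P hR (s - t) x (by
    have h1 : s - t = (s - s₀) + (s₀ - t) := by ring
    have h2 := abs_add_le (s - s₀) (s₀ - t)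
    rw [← h1] at h2
    linarith)
  simpa using this

/-! ### Pairing a solution with a backward free wave -/

lemma pairing_pointwise {n : ℕ} {u v : STn n → ℝ} (hu : ContDiff ℝ ∞ u) (hv : ContDiff ℝ ∞ v)
    (p : STn n) :
    dtD (fun p => dtD u p * v p - u p * dtD v p) p -
      ∑ j, dxD j (fun p => dxD j u p * v p - u p * dxD j v p) p =
    boxD u p * v p - u p * boxD v p := by
  have dd : ∀ {f : STn n → ℝ}, ContDiff ℝ ∞ f → Differentiable ℝ f :=
    fun h => h.differentiable (by simp)
  have key : ∀ a : STn n, dirD a (fun p => dirD a u p * v p - u p * dirD a v p) p =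
      dirD a (dirD a u) p * v p - u p * dirD a (dirD a v) p := by
    intro a
    have hua := contDiff_dirD hu a
    have hva := contDiff_dirD hv a
    rw [dirD_sub (dd (hua.mul hv)) (dd (hu.mul hva)), dirD_mul (dd hua) (dd hv),
      dirD_mul (dd hu) (dd hva)]
    ring
  have e1 : dtD (fun p => dtD u p * v p - u p * dtD v p) p =
    dtD (dtD u) p * v p - u p * dtD (dtD v) p := key _
  have e2 : ∀ j, dxD j (fun p => dxD j u p * v p - u p * dxD j v p) p =
    dxD j (dxD j u) p * v p - u p * dxD j (dxD j v) p := fun j => key _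
  rw [e1, Finset.sum_congr rfl fun j _ => e2 j, Finset.sum_sub_distrib, ← Finset.sum_mul,
    ← Finset.mul_sum, boxD, boxD, lapD, lapD]
  ring

lemma dtD_translate_Wv {n : ℕ} (hn : 2 ≤ n) (L : ℂ →L[ℝ] ℝ) (P : SchwartzMap (Spc n) ℂ) (t : ℝ) :
    dtD (fun p : STn n => L (Wv P (p - (t, 0)))) = fun p => L (Wt P (p - (t, 0))) := by
  have := dirD_translate (fun p => L (Wv P p)) (1, 0) (t, 0)
  rw [dtD, this]
  have h2 := dtD_Wv hn L P
  rw [dtD] at h2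
  rw [h2]

lemma boxD_translate_Wv {n : ℕ} (hn : 2 ≤ n) (L : ℂ →L[ℝ] ℝ) (P : SchwartzMap (Spc n) ℂ) (t : ℝ)
    (p : STn n) : boxD (fun p : STn n => L (Wv P (p - (t, 0)))) p = 0 := by
  have h := boxD_U2 L (mom_hSym hn P) (mom_neg_hSym hn P) (p - (t, 0))
  rw [← h, boxD, boxD, lapD, lapD]
  have h2 : ∀ a : STn n, dirD a (dirD a (fun p : STn n => L (Wv P (p - (t, 0))))) p =
      dirD a (dirD a (fun p : STn n => L (Wv P p))) (p - (t, 0)) := by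
    intro a
    rw [dirD_translate (fun p => L (Wv P p)), dirD_translate]
  simp only [dtD, dxD, h2]
  rfl

/-- Integrated Green identity between a solution `u` and the free wave with data `(0, L ψ)` posed
at time `t`, where `ψ = 𝓕⁻ P` has compact support. -/
lemma pairing_real {n : ℕ} (hn : 2 ≤ n) (L : ℂ →L[ℝ] ℝ) (P : SchwartzMap (Spc n) ℂ) {R : ℝ}
    (hR : ∀ x, R < ‖x‖ → 𝓕⁻ P x = 0) {F u : STn n → ℝ} (hF : ContDiff ℝ ∞ F)
    (hu : ContDiff ℝ ∞ u) (hbox : ∀ z : STn n, 0 ≤ z.1 → boxD u z = F z) {t : ℝ} (ht : 0 ≤ t) :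
    ∫ x, u (t, x) * L (𝓕⁻ P x) = (∫ x, u (0, x) * L (Wt P (-t, x))) -
      (∫ x, dtD u (0, x) * L (Wv P (-t, x))) -
      ∫ τ in (0 : ℝ)..t, ∫ x, F (τ, x) * L (Wv P (τ - t, x)) := by
  set v : STn n → ℝ := fun p => L (Wv P (p - (t, 0))) with hvdef
  have hv : ContDiff ℝ ∞ v := (contDiff_Wv hn L P).comp (contDiff_id.sub contDiff_const)
  have hl : LocSupp v := locSupp_Wv hn L P hR t
  have hvt : dtD v = fun p => L (Wt P (p - (t, 0))) := dtD_translate_Wv hn L P t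
  have le1 : (1 : WithTop ℕ∞) ≤ ((⊤ : ℕ∞) : WithTop ℕ∞) :=
    WithTop.coe_le_coe.2 (le_top : (1 : ℕ∞) ≤ ⊤)
  have hvd := fun a => contDiff_dirD hv a
  have hud := fun a => contDiff_dirD hu a
  have i1 : ∀ s, Integrable fun x => dtD u (s, x) * v (s, x) := fun s =>
    (hl.mul_right (dtD u)).integrable ((hud (1, 0)).continuous.mul hv.continuous) s
  have i2 : ∀ s, Integrable fun x => u (s, x) * dtD v (s, x) := fun s =>
    ((hl.dirD (1, 0)).mul_right u).integrable (hu.continuous.mul (hvd (1, 0)).continuous) s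
  have hder : ∀ τ, 0 ≤ τ → HasDerivAt
      (fun s => ∫ x, (dtD u (s, x) * v (s, x) - u (s, x) * dtD v (s, x)))
      (∫ x, F (τ, x) * v (τ, x)) τ := by
    intro τ hτ
    have h := hasDerivAt_divergence (H := fun p => dtD u p * v p - u p * dtD v p)
      (K := fun j p => dxD j u p * v p - u p * dxD j v p)
      ((((hud _).mul hv).sub (hu.mul (hvd _))).of_le le1)
      ((hl.mul_right _).sub ((hl.dirD _).mul_right _))
      (fun j => (((hud _).mul hv).sub (hu.mul (hvd _))).of_le le1)
      (fun j => (hl.mul_right _).sub ((hl.dirD _).mul_right _)) τ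
    convert h using 3 with x
    rw [pairing_pointwise hu hv, hbox _ hτ, boxD_translate_Wv hn L P t]
    simp
  have hcont : Continuous fun τ => ∫ x, F (τ, x) * v (τ, x) :=
    continuous_iff_continuousAt.2 fun τ =>
      (hasDerivAt_integral_space ((hF.mul hv).of_le le1) (hl.mul_right F) τ).continuousAt
  have hftc := intervalIntegral.integral_eq_sub_of_hasDerivAt (a := 0) (b := t)
    (fun τ hτ => hder τ (by rw [Set.uIcc_of_le ht] at hτ; exact hτ.1))
    (hcont.intervalIntegrable _ _)
  rw [integral_sub (i1 t) (i2 t), integral_sub (i1 0) (i2 0)] at hftc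
  rw [hvt] at hftc
  simp only [hvdef, Prod.mk_sub_mk, sub_zero, sub_self, zero_sub, Wv_zero hn, Wt_zero, map_zero,
    mul_zero, integral_zero] at hftc
  linarith

lemma norm_synth_le {n : ℕ} {G : Spc n → ℂ} (x : Spc n) : ‖synth G x‖ ≤ ∫ ξ, ‖G ξ‖ := by
  refine (norm_integral_le_integral_norm _).trans (le_of_eq ?_)
  simp [norm_ek]

lemma integrable_mul_synth {n : ℕ} (f : SchwartzMap (Spc n) ℝ) {G : Spc n → ℂ}
    (hG : Integrable G) : Integrable fun x => (f x : ℂ) * synth G x := by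
  have h : Integrable fun x => (f x : ℂ) := f.integrable.ofReal
  exact h.mul_bdd (c := ∫ ξ, ‖G ξ‖) (continuous_synth hG).aestronglyMeasurable
    (.of_forall fun x => norm_synth_le x)

/-- The real-linear functional `z ↦ Re (c z)`. -/
noncomputable def rotL (c : ℂ) : ℂ →L[ℝ] ℝ :=
  Complex.reCLM.comp ((ContinuousLinearMap.mul ℝ ℂ) c)

lemma rotL_apply (c z : ℂ) : rotL c z = (c * z).re := rfl

lemma rotL_real_mul (c z : ℂ) (a : ℝ) : rotL c (a * z) = a * rotL c z := by
  rw [rotL_apply, rotL_apply, ← Complex.re_ofReal_mul]; congr 1; ring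

lemma abs_rotL_le {c : ℂ} (hc : ‖c‖ = 1) (z : ℂ) : |rotL c z| ≤ ‖z‖ := by
  rw [rotL_apply]
  refine (Complex.abs_re_le_norm _).trans ?_
  rw [norm_mul, hc, one_mul]

lemma exists_rot (z : ℂ) : ∃ c : ℂ, ‖c‖ = 1 ∧ rotL c z = ‖z‖ := by
  by_cases h : z = 0
  · exact ⟨1, by simp, by simp [h]⟩
  · have hz : (‖z‖ : ℂ) ≠ 0 := by exact_mod_cast norm_ne_zero_iff.2 h
    refine ⟨(starRingEnd ℂ) z / ‖z‖, ?_, ?_⟩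
    · rw [norm_div, RCLike.norm_conj, Complex.norm_real, norm_norm, div_self (norm_ne_zero_iff.2 h)]
    · have : (starRingEnd ℂ) z / ‖z‖ * z = ‖z‖ := by
        rw [div_mul_eq_mul_div, mul_comm, Complex.mul_conj, Complex.normSq_eq_norm_sq]
        push_cast
        field_simp
      rw [rotL_apply, this, Complex.ofReal_re]

lemma integral_rotL {n : ℕ} (c : ℂ) (f : Spc n → ℝ) {W : Spc n → ℂ}
    (h : Integrable fun x => (f x : ℂ) * W x) :
    ∫ x, f x * rotL c (W x) = rotL c (∫ x, (f x : ℂ) * W x) := by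
  rw [← ContinuousLinearMap.integral_comp_comm _ h]
  simp only [rotL_real_mul]

/-- Triangle inequality in `pairing_real`; the complex pairing on the left is reduced to a real one
by rotating it to the positive real axis. -/
lemma pairing_bound {n : ℕ} (hn : 2 ≤ n) (P : SchwartzMap (Spc n) ℂ) {R : ℝ}
    (hR : ∀ x, R < ‖x‖ → 𝓕⁻ P x = 0) (f g φ : SchwartzMap (Spc n) ℝ) {F u : STn n → ℝ}
    (hF : ContDiff ℝ ∞ F)
    (hu : ContDiff ℝ ∞ u) (hbox : ∀ z : STn n, 0 ≤ z.1 → boxD u z = F z)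
    (hf : ∀ x, u (0, x) = f x) (hg : ∀ x, dtD u (0, x) = g x) {t : ℝ} (ht : 0 ≤ t)
    (hφ : ∀ x, u (t, x) = φ x) :
    ‖∫ x, (u (t, x) : ℂ) * 𝓕⁻ P x‖ₑ ≤ ‖∫ x, (f x : ℂ) * synth (Gc P (-t)) x‖ₑ +
      ‖∫ x, (g x : ℂ) * synth (Gs P (-t)) x‖ₑ +
      ∫⁻ τ in Set.Ioc 0 t, ∫⁻ x, ‖F (τ, x)‖ₑ * ‖synth (Gs P (τ - t)) x‖ₑ := by
  obtain ⟨c, hc, hcz⟩ := exists_rot (∫ x, (u (t, x) : ℂ) * 𝓕⁻ P x)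
  have i0 : Integrable fun x => (u (t, x) : ℂ) * 𝓕⁻ P x := by
    have := integrable_mul_synth φ (integrable_Gc P 0)
    simpa only [← Wt_eq_synth, Wt_zero, ← hφ] using this
  have h := pairing_real hn (rotL c) P hR hF hu hbox ht
  simp only [hf, hg, Wv_eq_synth hn, Wt_eq_synth] at h
  rw [integral_rotL c (fun x => u (t, x)) i0, hcz,
    integral_rotL c _ (integrable_mul_synth f (integrable_Gc P (-t))),
    integral_rotL c _ (integrable_mul_synth g (integrable_Gs hn P (-t)))] at h
  have e0 : ‖∫ x, (u (t, x) : ℂ) * 𝓕⁻ P x‖ₑ = ‖(‖∫ x, (u (t, x) : ℂ) * 𝓕⁻ P x‖ : ℝ)‖ₑ := by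
    rw [enorm_norm]
  have hle : ∀ z, ‖rotL c z‖ₑ ≤ ‖z‖ₑ := fun z =>
    enorm_le_iff_norm_le.2 (abs_rotL_le hc z)
  rw [e0, h]
  refine (enorm_sub_le).trans (add_le_add ((enorm_sub_le).trans (add_le_add (hle _) (hle _))) ?_)
  rw [intervalIntegral.integral_of_le ht]
  refine (enorm_integral_le_lintegral_enorm _).trans (lintegral_mono fun τ => ?_)
  refine (enorm_integral_le_lintegral_enorm _).trans (lintegral_mono fun x => ?_)
  rw [enorm_mul]
  gcongr
  exact hle _

/-! ### Bounds for the terms of the pairing -/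

lemma fourierS_neg_eq {n : ℕ} (f : Spc n → ℝ) (ξ : Spc n) :
    fourierS f (-ξ) = ∫ x, (f x : ℂ) * ek x ξ := by
  rw [fourierS, Real.fourier_eq']
  refine integral_congr_ae (.of_forall fun x => ?_)
  simp only [ek, smul_eq_mul, inner_neg_right]
  rw [mul_comm]; congr 2; push_cast; ring

lemma continuous_fourierS {n : ℕ} (f : SchwartzMap (Spc n) ℝ) : Continuous (fourierS f) := by
  have h : Integrable fun x => (f x : ℂ) := f.integrable.ofReal
  have h2 : Continuous fun ξ => fourierS f (-ξ) := by
    simp only [fourierS_neg_eq]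
    refine continuous_of_dominated (bound := fun x => ‖(f x : ℂ)‖) ?_ ?_ h.norm ?_
    · intro ξ
      exact h.1.mul (continuous_ek.comp (Continuous.prodMk_left ξ)).aestronglyMeasurable
    · intro ξ; refine .of_forall fun x => ?_
      rw [norm_mul, norm_ek, mul_one]
    · refine .of_forall fun x => continuous_const.mul (continuous_ek.comp (Continuous.prodMk_right x))
  have h3 := h2.comp continuous_neg
  have e : (fun ξ => fourierS f (-ξ)) ∘ (fun a => -a) = fourierS f := by ext ξ; simp
  rwa [e] at h3

/-- Parseval identity in the form `∫ f Ǧ = ∫ G f̌`. -/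
lemma integral_synth_swap {n : ℕ} {f G : Spc n → ℂ} (hf : Integrable f) (hG : Integrable G) :
    ∫ x, f x * synth G x = ∫ ξ, G ξ * synth f ξ := by
  have hi : Integrable (Function.uncurry fun (x ξ : Spc n) => f x * (G ξ * ek x ξ))
      (volume.prod volume) := by
    have := (hf.mul_prod hG).mul_bdd (c := 1) (g := fun p : Spc n × Spc n => ek p.1 p.2)
      continuous_ek.aestronglyMeasurable
      (.of_forall fun p => by rw [norm_ek])
    refine this.congr (.of_forall fun p => ?_)
    simp only [Function.uncurry]; ring
  simp only [synth, ← integral_const_mul]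
  rw [integral_integral_swap hi]
  refine integral_congr_ae (.of_forall fun ξ => ?_)
  refine integral_congr_ae (.of_forall fun x => ?_)
  simp only [ek, real_inner_comm x ξ]; ring

lemma integral_mul_synth {n : ℕ} (f : SchwartzMap (Spc n) ℝ) {G : Spc n → ℂ} (hG : Integrable G) :
    ∫ x, (f x : ℂ) * synth G x = ∫ ξ, G ξ * fourierS f (-ξ) := by
  have h : Integrable fun x => (f x : ℂ) := f.integrable.ofReal
  rw [integral_synth_swap h hG]
  refine integral_congr_ae (.of_forall fun ξ => ?_)
  simp only [fourierS_neg_eq, synth]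
  congr 1
  refine integral_congr_ae (.of_forall fun x => ?_)
  simp only [ek, real_inner_comm x ξ]

lemma DsN_sq {n : ℕ} (a : ℝ) (f : Spc n → ℝ) :
    DsN a f ^ 2 = ∫⁻ ξ, (ENNReal.ofReal (‖ξ‖ ^ a) * ‖fourierS f ξ‖ₑ) ^ 2 := by
  have := eLpNorm_nnreal_pow_eq_lintegral (μ := (volume : Measure (Spc n))) (p := 2)
    (f := fun ξ : Spc n => ‖ξ‖ ^ a * ‖fourierS f ξ‖) two_ne_zero
  have e : ((2 : NNReal) : ℝ) = 2 := rfl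
  simp only [e, ENNReal.rpow_two] at this
  rw [DsN]
  refine this.trans (lintegral_congr fun ξ => ?_)
  rw [enorm_mul, enorm_norm, Real.enorm_of_nonneg (by positivity)]

/-- Cauchy–Schwarz between `Ḣ^a` and `Ḣ^(-a)` on the Fourier side. -/
lemma norm_pairing_le {n : ℕ} (hn : 1 ≤ n) (f : SchwartzMap (Spc n) ℝ) {G : Spc n → ℂ}
    (hGm : Measurable G) (hG : Integrable G) {a M : ℝ} (hM : 0 < M)
    (hGM : ∫⁻ ξ, ‖G ξ‖ₑ ^ 2 * ENNReal.ofReal (‖ξ‖ ^ (-(2 * a))) ≤ ENNReal.ofReal (M ^ 2)) :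
    ‖∫ x, (f x : ℂ) * synth G x‖ₑ ≤ ENNReal.ofReal M * DsN a f := by
  have hfm : Measurable (fourierS f) := (continuous_fourierS f).measurable
  have h1 : ‖∫ x, (f x : ℂ) * synth G x‖ₑ ≤
      ∫⁻ ξ, (‖G ξ‖ₑ * ENNReal.ofReal (‖ξ‖ ^ (-a))) *
        (ENNReal.ofReal (‖ξ‖ ^ a) * ‖fourierS f (-ξ)‖ₑ) := by
    rw [integral_mul_synth f hG]
    refine (enorm_integral_le_lintegral_enorm _).trans (lintegral_mono_ae ?_)
    filter_upwards [ae_ne_zero hn] with ξ hξ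
    have hpos : 0 < ‖ξ‖ := norm_pos_iff.2 hξ
    have : ENNReal.ofReal (‖ξ‖ ^ (-a)) * ENNReal.ofReal (‖ξ‖ ^ a) = 1 := by
      rw [← ENNReal.ofReal_mul (by positivity), ← Real.rpow_add hpos]; simp
    rw [enorm_mul, mul_assoc, ← mul_assoc (ENNReal.ofReal _) (ENNReal.ofReal _), this, one_mul]
  have h2 : (∫⁻ ξ, (‖G ξ‖ₑ * ENNReal.ofReal (‖ξ‖ ^ (-a))) *
      (ENNReal.ofReal (‖ξ‖ ^ a) * ‖fourierS f (-ξ)‖ₑ)) ^ 2 ≤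
      (ENNReal.ofReal M * DsN a f) ^ 2 := by
    refine (lintegral_cs (by fun_prop) (by fun_prop)).trans ?_
    rw [mul_pow]
    refine mul_le_mul' ?_ (le_of_eq ?_)
    · rw [← ENNReal.ofReal_pow hM.le]
      refine le_trans (le_of_eq (lintegral_congr fun ξ => ?_)) hGM
      rw [mul_pow, ← ENNReal.ofReal_pow (by positivity), ← Real.rpow_natCast, ← Real.rpow_mul
        (norm_nonneg _)]
      congr 3; push_cast; ring
    · rw [DsN_sq, ← lintegral_neg_eq_self]
      refine lintegral_congr fun ξ => ?_
      rw [norm_neg, neg_neg]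
  exact h1.trans ((ENNReal.pow_le_pow_left_iff two_ne_zero).1 h2)

lemma weight_Gs {n : ℕ} (hn : 1 ≤ n) (P : Spc n → ℂ) (s a : ℝ) :
    ∫⁻ ξ, ‖Gs P s ξ‖ₑ ^ 2 * ENNReal.ofReal (‖ξ‖ ^ (a + 2)) ≤
      ∫⁻ ξ, ‖P ξ‖ₑ ^ 2 * ENNReal.ofReal (‖ξ‖ ^ a) := by
  refine lintegral_mono_ae ?_
  filter_upwards [ae_ne_zero hn] with ξ hξ
  have hpos : 0 < ‖ξ‖ := norm_pos_iff.2 hξ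
  rw [← ofReal_norm, ← ofReal_norm, ← ENNReal.ofReal_pow (norm_nonneg _),
    ← ENNReal.ofReal_pow (norm_nonneg _), ← ENNReal.ofReal_mul (by positivity),
    ← ENNReal.ofReal_mul (by positivity)]
  refine ENNReal.ofReal_le_ofReal ?_
  calc ‖Gs P s ξ‖ ^ 2 * ‖ξ‖ ^ (a + 2) ≤ (‖ξ‖⁻¹ * ‖P ξ‖) ^ 2 * ‖ξ‖ ^ (a + 2) := by
        gcongr; exact norm_Gs_le P s ξ
    _ = ‖P ξ‖ ^ 2 * ‖ξ‖ ^ a := by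
        rw [Real.rpow_add hpos, Real.rpow_two]; field_simp

lemma weight_Gc {n : ℕ} (P : Spc n → ℂ) (s a : ℝ) :
    ∫⁻ ξ, ‖Gc P s ξ‖ₑ ^ 2 * ENNReal.ofReal (‖ξ‖ ^ a) ≤
      ∫⁻ ξ, ‖P ξ‖ₑ ^ 2 * ENNReal.ofReal (‖ξ‖ ^ a) := by
  refine lintegral_mono fun ξ => ?_
  gcongr
  exact enorm_le_iff_norm_le.2 (norm_Gc_le P s ξ)

lemma measurable_eLpNorm_indicator {n : ℕ} {F : STn n → ℝ} (hF : Continuous F) {p : ℝ}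
    (hp : 0 < p) : Measurable fun τ : ℝ => eLpNorm (Set.indicator {x : Spc n | ‖x‖ < (1 + τ) / 2}
      (fun x => F (τ, x))) (ENNReal.ofReal p) volume := by
  have hS : MeasurableSet {q : STn n | ‖q.2‖ < (1 + q.1) / 2} :=
    measurableSet_lt (by fun_prop) (by fun_prop)
  have h : Measurable (Set.indicator {q : STn n | ‖q.2‖ < (1 + q.1) / 2} F) :=
    hF.measurable.indicator hS
  have e : ∀ τ : ℝ, Set.indicator {x : Spc n | ‖x‖ < (1 + τ) / 2} (fun x => F (τ, x)) =
      fun x => Set.indicator {q : STn n | ‖q.2‖ < (1 + q.1) / 2} F (τ, x) := fun τ => rfl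
  simp only [e, eLpNorm_eq_lintegral_rpow_enorm_toReal (ENNReal.ofReal_pos.2 hp).ne'
    ENNReal.ofReal_ne_top]
  refine Measurable.pow_const ?_ _
  exact Measurable.lintegral_prod_right' (f := fun q : STn n =>
    ‖Set.indicator {q : STn n | ‖q.2‖ < (1 + q.1) / 2} F q‖ₑ ^ (ENNReal.ofReal p).toReal)
    (h.enorm.pow_const _)

/-- The estimate of the theorem, tested against `ψ = 𝓕⁻ P` of compact support. -/
lemma tested_bound {n : ℕ} (hn : 2 ≤ n) {σ : ℝ}
    (hσ1 : 1/2 < 1 - σ) (hσ2 : 1 - σ < (n : ℝ)/2)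
    {p₁ p₂ : ℝ} (hp₁ : 1/p₁ = 1/2 + (1 - σ)/(n : ℝ))
    (hp₂ : 1/p₂ = 1/2 + (1/2 - σ)/((n : ℝ) - 1)) :
    ∃ C > (0 : ℝ), ∀ (f g φ : SchwartzMap (Spc n) ℝ) (F u : STn n → ℝ),
      ContDiff ℝ ∞ F → ContDiff ℝ ∞ u →
      (∀ z : STn n, 0 ≤ z.1 → boxD u z = F z) →
      (∀ x, u (0, x) = f x) → (∀ x, dtD u (0, x) = g x) →
      ∀ t : ℝ, 0 ≤ t → (∀ x, u (t, x) = φ x) →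
      ∀ (P : SchwartzMap (Spc n) ℂ) (R : ℝ), (∀ x, R < ‖x‖ → 𝓕⁻ P x = 0) → ∀ M : ℝ, 0 < M →
      ∫⁻ ξ, ‖P ξ‖ₑ ^ 2 * ENNReal.ofReal (‖ξ‖ ^ (-(2 * σ))) ≤ ENNReal.ofReal (M ^ 2) →
        ‖∫ x, (u (t, x) : ℂ) * 𝓕⁻ P x‖ₑ ≤ ENNReal.ofReal M * (
          DsN σ f + DsN (σ - 1) g +
          ENNReal.ofReal C *
            (∫⁻ τ in Set.Ioc (0 : ℝ) t,
              eLpNorm (Set.indicator {x : Spc n | ‖x‖ < (1 + τ)/2} (fun x => F (τ, x)))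
                (ENNReal.ofReal p₁) volume) +
          ENNReal.ofReal C *
            (∫⁻ τ in Set.Ioc (0 : ℝ) t,
              ENNReal.ofReal ((Real.sqrt (1 + τ ^ 2)) ^ (-(n : ℝ)/2 + 1 - σ)) *
                mixN n 1 p₂
                  (Set.indicator {x : Spc n | (1 + τ)/2 ≤ ‖x‖} (fun x => F (τ, x))))) := by
  obtain ⟨C₁, hC₁, H₁⟩ := dual_ball hn hσ1 hσ2 hp₁
  obtain ⟨C₂, hC₂, H₂⟩ := dual_sphere (p := p₂) hn hσ1 hσ2 (by rw [hp₂]; congr 2; ring)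
  have hp0 : 0 < p₁ := by
    have : 0 < 1 / p₁ := by rw [hp₁]; positivity
    exact one_div_pos.1 this
  refine ⟨max C₁ C₂, lt_max_of_lt_left hC₁, ?_⟩
  intro f g φ F u hF hu hbox hf hg t ht hφ P R hR M hM hPM
  refine (pairing_bound hn P hR f g φ hF hu hbox hf hg ht hφ).trans ?_
  have hPm : Measurable P := P.continuous.measurable
  have hGsw : ∀ s, ∫⁻ ξ, ‖Gs P s ξ‖ₑ ^ 2 * ENNReal.ofReal (‖ξ‖ ^ (2 * (1 - σ))) ≤
      ENNReal.ofReal (M ^ 2) := by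
    intro s
    have e : 2 * (1 - σ) = -(2 * σ) + 2 := by ring
    rw [e]
    exact (weight_Gs (by omega) P s _).trans hPM
  rw [add_assoc (DsN σ f + _), mul_add, mul_add]
  refine add_le_add (add_le_add ?_ ?_) ?_
  · exact norm_pairing_le (by omega) f (measurable_Gc hPm _) (integrable_Gc P _) hM
      ((weight_Gc _ _ _).trans hPM)
  · refine norm_pairing_le (by omega) g (measurable_Gs hPm _) (integrable_Gs hn P _) hM ?_
    have e : -(2 * (σ - 1)) = 2 * (1 - σ) := by ring
    rw [e]
    exact hGsw _
  · rw [← mul_add, ← lintegral_add_left (measurable_eLpNorm_indicator hF.continuous hp0),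
      ← mul_assoc, ← ENNReal.ofReal_mul hM.le, ← lintegral_const_mul' _ _ ENNReal.ofReal_ne_top]
    refine setLIntegral_mono' measurableSet_Ioc fun τ hτ => ?_
    set Ft : Spc n → ℝ := fun x => F (τ, x) with hFt
    have hFm : Measurable Ft := (hF.continuous.comp (Continuous.prodMk_right τ)).measurable
    have hS : MeasurableSet {x : Spc n | ‖x‖ < (1 + τ) / 2} :=
      measurableSet_lt measurable_norm measurable_const
    set G := Gs P (τ - t) with hG
    have hGm : Measurable G := measurable_Gs hPm _
    have hGi : Integrable G := integrable_Gs hn P _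
    have hsm : Measurable (synth G) := (continuous_synth hGi).measurable
    have hsplit : ∫⁻ x, ‖Ft x‖ₑ * ‖synth G x‖ₑ ≤
        (∫⁻ x, ‖Set.indicator {x : Spc n | ‖x‖ < (1 + τ) / 2} Ft x‖ₑ * ‖synth G x‖ₑ) +
        ∫⁻ x, ‖Set.indicator {x : Spc n | (1 + τ) / 2 ≤ ‖x‖} Ft x‖ₑ * ‖synth G x‖ₑ := by
      have hm : Measurable fun x => ‖Set.indicator {x : Spc n | ‖x‖ < (1 + τ) / 2} Ft x‖ₑ *
          ‖synth G x‖ₑ := (hFm.indicator hS).enorm.mul hsm.enorm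
      rw [← lintegral_add_left hm]
      refine lintegral_mono fun x => ?_
      rcases lt_or_ge ‖x‖ ((1 + τ) / 2) with h | h
      · rw [Set.indicator_of_mem (show x ∈ {x : Spc n | ‖x‖ < (1 + τ) / 2} from h)]
        exact le_self_add
      · rw [Set.indicator_of_mem (show x ∈ {x : Spc n | (1 + τ) / 2 ≤ ‖x‖} from h)]
        exact le_add_self
    refine hsplit.trans ?_
    rw [mul_add]
    refine add_le_add ?_ ?_
    · refine (H₁ G hGm hGi M hM (hGsw _) _ (hFm.indicator hS)).trans ?_
      gcongr ENNReal.ofReal ?_ * _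
      rw [mul_comm]
      gcongr
      exact le_max_left _ _
    · refine (H₂ G hGm hGi M hM (hGsw _) Ft hFm τ hτ.1.le).trans ?_
      have e : -((n : ℝ) / 2 - (1 - σ)) = -(n : ℝ) / 2 + 1 - σ := by ring
      rw [e]
      gcongr ENNReal.ofReal ?_ * _
      rw [mul_comm]
      gcongr
      exact le_max_right _ _

/-! ### Duality -/

lemma synth_schwartz {n : ℕ} (P : SchwartzMap (Spc n) ℂ) (x : Spc n) : synth P x = 𝓕⁻ P x := by
  rw [SchwartzMap.fourierInv_coe, Real.fourierInv_eq', synth]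
  refine integral_congr_ae (.of_forall fun ξ => ?_)
  simp only [ek, smul_eq_mul, real_inner_comm ξ x]
  rw [mul_comm]

/-- An integrable function with vanishing Fourier transform vanishes almost everywhere. -/
lemma ae_zero_of_synth {n : ℕ} {m : Spc n → ℂ} (hm : Integrable m) (h : ∀ x, synth m x = 0) :
    ∀ᵐ ξ, m ξ = 0 := by
  refine ae_eq_zero_of_integral_contDiff_smul_eq_zero hm.locallyIntegrable fun g hg hgc => ?_
  have hgc' : HasCompactSupport fun x => (g x : ℂ) := hgc.comp_left (g := fun y : ℝ => (y : ℂ)) rfl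
  have hg' : ContDiff ℝ ∞ fun x => (g x : ℂ) := Complex.ofRealCLM.contDiff.comp hg
  set θ : SchwartzMap (Spc n) ℂ := hgc'.toSchwartzMap hg' with hθ
  have h1 := integral_synth_swap (𝓕 θ).integrable hm
  simp only [h, mul_zero, integral_zero, synth_schwartz, FourierTransform.fourierInv_fourier_eq]
    at h1
  rw [h1]
  refine integral_congr_ae (.of_forall fun ξ => ?_)
  simp [hθ, mul_comm]

lemma memLp_weight {n : ℕ} (hn : 1 ≤ n) (P : SchwartzMap (Spc n) ℂ) {a : ℝ}
    (ha : -(n : ℝ) < 2 * a) : MemLp (fun ξ => ((‖ξ‖ ^ a : ℝ) : ℂ) * P ξ) 2 volume := by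
  have hPm : Measurable P := P.continuous.measurable
  have hm : Measurable fun ξ => ((‖ξ‖ ^ a : ℝ) : ℂ) * P ξ := by fun_prop
  rw [memLp_two_iff_integrable_sq_norm hm.aestronglyMeasurable]
  obtain ⟨C, hC⟩ := P.decay 0 0
  have hC' : ∀ ξ, ‖P ξ‖ ≤ C := fun ξ => by simpa using hC.2 ξ
  refine ((schwartz_rpow_integrable hn P ha).const_mul C).mono' (by fun_prop)
    (.of_forall fun ξ => ?_)
  rw [Real.norm_of_nonneg (by positivity), norm_mul, Complex.norm_real,
    Real.norm_of_nonneg (by positivity), mul_pow, ← Real.rpow_natCast, ← Real.rpow_mul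
    (norm_nonneg _)]
  push_cast
  rw [mul_comm a 2]
  have : 0 ≤ ‖ξ‖ ^ (2 * a) := by positivity
  nlinarith [mul_le_mul_of_nonneg_left (mul_le_mul_of_nonneg_right (hC' ξ) (norm_nonneg (P ξ)))
    this]

/-- The bump function used as a test function. -/
noncomputable def bump0 (n : ℕ) : ContDiffBump (0 : Spc n) := ⟨1, 2, by norm_num, by norm_num⟩

/-- A bump function translated by `a` and modulated to frequency `ξ₀`. -/
noncomputable def bumpM {n : ℕ} (a ξ₀ x : Spc n) : ℂ := (bump0 n (x - a) : ℂ) * ek x ξ₀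

lemma bumpM_supp {n : ℕ} (a ξ₀ x : Spc n) (hx : 2 + ‖a‖ < ‖x‖) : bumpM a ξ₀ x = 0 := by
  have : bump0 n (x - a) = 0 := by
    refine (bump0 n).zero_of_le_dist ?_
    have h1 := norm_sub_norm_le x a
    have h2 : (bump0 n).rOut = 2 := rfl
    rw [dist_zero_right, h2]; linarith
  simp [bumpM, this]

lemma bumpM_compact {n : ℕ} (a ξ₀ : Spc n) : HasCompactSupport (bumpM a ξ₀) :=
  HasCompactSupport.intro (isCompact_closedBall 0 (2 + ‖a‖)) fun x hx =>
    bumpM_supp a ξ₀ x (by simpa using hx)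

lemma contDiff_bumpM {n : ℕ} (a ξ₀ : Spc n) : ContDiff ℝ ∞ (bumpM a ξ₀) := by
  have h1 : ContDiff ℝ ∞ fun x : Spc n => bump0 n (x - a) :=
    (bump0 n).contDiff.comp (contDiff_id.sub contDiff_const)
  have h2 : ContDiff ℝ ∞ fun x : Spc n => (2 * π * inner ℝ x ξ₀ : ℝ) :=
    contDiff_const.mul (contDiff_id.inner ℝ contDiff_const)
  have h3 : ContDiff ℝ ∞ fun x : Spc n => ek x ξ₀ :=
    ((Complex.ofRealCLM.contDiff.comp h2).mul contDiff_const).cexp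
  exact (Complex.ofRealCLM.contDiff.comp h1).mul h3

/-- The Fourier transform of `bumpM a ξ₀`. -/
noncomputable def bumpP {n : ℕ} (a ξ₀ : Spc n) : SchwartzMap (Spc n) ℂ :=
  𝓕 ((bumpM_compact a ξ₀).toSchwartzMap (contDiff_bumpM a ξ₀))

lemma bumpP_supp {n : ℕ} (a ξ₀ x : Spc n) (hx : 2 + ‖a‖ < ‖x‖) : 𝓕⁻ (bumpP a ξ₀) x = 0 := by
  rw [bumpP, FourierTransform.fourierInv_fourier_eq]
  exact bumpM_supp a ξ₀ x hx

lemma ek_add_right {n : ℕ} (x ξ η : Spc n) : ek x (ξ + η) = ek x ξ * ek x η := by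
  unfold ek
  rw [← Complex.exp_add, inner_add_right]
  push_cast; ring_nf

lemma bumpP_eq {n : ℕ} (a ξ₀ ξ : Spc n) :
    bumpP a ξ₀ ξ = ek a (ξ₀ - ξ) * ∫ x, (bump0 n x : ℂ) * ek x (ξ₀ - ξ) := by
  rw [bumpP, SchwartzMap.fourier_coe, Real.fourier_eq', ← integral_const_mul,
    ← integral_sub_right_eq_self
      (fun x => ek a (ξ₀ - ξ) * ((bump0 n x : ℂ) * ek x (ξ₀ - ξ))) a]
  refine integral_congr_ae (.of_forall fun x => ?_)
  have e1 : Complex.exp (((-2 * π * inner ℝ x ξ : ℝ) : ℂ) * Complex.I) = ek x (-ξ) := by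
    rw [ek, inner_neg_right]; congr 2; push_cast; ring
  simp only [HasCompactSupport.toSchwartzMap_toFun, smul_eq_mul]
  change Complex.exp (((-2 * π * inner ℝ x ξ : ℝ) : ℂ) * Complex.I) * bumpM a ξ₀ x = _
  rw [e1, bumpM]
  have e2 : ek a (ξ₀ - ξ) * ek (x - a) (ξ₀ - ξ) = ek x ξ₀ * ek x (-ξ) := by
    rw [ek_mul_ek, ← ek_add_right]; congr 1
    · abel
  linear_combination (-(bump0 n (x - a) : ℂ)) * e2

lemma ek_zero_left {n : ℕ} (ξ : Spc n) : ek 0 ξ = 1 := by simp [ek]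

lemma bumpP_mod {n : ℕ} (a ξ₀ ξ : Spc n) : bumpP a ξ₀ ξ = ek a ξ₀ * ek (-a) ξ * bumpP 0 ξ₀ ξ := by
  rw [bumpP_eq, bumpP_eq 0, ek_zero_left, one_mul]
  congr 1
  rw [sub_eq_add_neg, ek_add_right]
  congr 1
  simp [ek]

lemma bumpP_trans {n : ℕ} (ξ₀ ξ : Spc n) : bumpP 0 ξ₀ ξ = bumpP 0 0 (ξ - ξ₀) := by
  rw [bumpP_eq, bumpP_eq, ek_zero_left, ek_zero_left]; simp

lemma bumpP_zero_ne {n : ℕ} : bumpP (0 : Spc n) 0 0 ≠ 0 := by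
  rw [bumpP_eq, ek_zero_left, one_mul]
  have e : ∀ x : Spc n, ek x (0 - 0) = 1 := fun x => by simp [ek]
  simp only [e, mul_one]
  rw [integral_complex_ofReal]
  exact_mod_cast ((bump0 n).integral_pos (μ := volume)).ne'

/-- The functions in `L²` of the form `|ξ|^a ψ̂(ξ)` with `ψ` smooth of compact support. -/
noncomputable def wSub (n : ℕ) (a : ℝ) : Submodule ℂ (Lp ℂ 2 (volume : Measure (Spc n))) where
  carrier := {v | ∃ (P : SchwartzMap (Spc n) ℂ) (R : ℝ), (∀ x, R < ‖x‖ → 𝓕⁻ P x = 0) ∧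
    v =ᵐ[volume] fun ξ => ((‖ξ‖ ^ a : ℝ) : ℂ) * P ξ}
  add_mem' := by
    rintro v w ⟨P, R, hR, hP⟩ ⟨Q, T, hT, hQ⟩
    refine ⟨P + Q, max R T, fun x hx => ?_, ?_⟩
    · rw [FourierTransform.fourierInv_add, add_apply,
        hR x ((le_max_left _ _).trans_lt hx), hT x ((le_max_right _ _).trans_lt hx), add_zero]
    · filter_upwards [Lp.coeFn_add v w, hP, hQ] with ξ h1 h2 h3
      rw [h1, Pi.add_apply, h2, h3, add_apply, mul_add]
  zero_mem' := by
    refine ⟨0, 0, fun x _ => ?_, ?_⟩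
    · rw [FourierTransform.fourierInv_zero]; rfl
    · filter_upwards [Lp.coeFn_zero ℂ 2 (volume : Measure (Spc n))] with ξ h1
      rw [h1]; simp
  smul_mem' := by
    rintro c v ⟨P, R, hR, hP⟩
    refine ⟨c • P, R, fun x hx => ?_, ?_⟩
    · rw [FourierTransform.fourierInv_smul, smul_apply, hR x hx, smul_zero]
    · filter_upwards [Lp.coeFn_smul c v, hP] with ξ h1 h2
      rw [h1, Pi.smul_apply, h2, smul_apply, smul_eq_mul, smul_eq_mul]; ring

/-- `wSub n a` is dense. If `h` is orthogonal to it, then translating the test function shows that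
the Fourier transform of `h̄ |ξ|^a ψ̂` vanishes, so `h |ξ|^a ψ̂ = 0`; modulating the test function
moves `ψ̂` to a neighbourhood of any frequency where it does not vanish. -/
lemma wSub_orthogonal {n : ℕ} (hn : 1 ≤ n) {a : ℝ} (ha : -(n : ℝ) < 2 * a) : (wSub n a)ᗮ = ⊥ := by
  rw [Submodule.eq_bot_iff]
  intro h hh
  rw [Submodule.mem_orthogonal'] at hh
  have key : ∀ ξ₀ : Spc n, ∀ᵐ ξ, (starRingEnd ℂ) (h ξ) * (((‖ξ‖ ^ a : ℝ) : ℂ) * bumpP 0 ξ₀ ξ) = 0 := by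
    intro ξ₀
    have hco : ∀ b, (memLp_weight hn (bumpP b ξ₀) ha).toLp =ᵐ[volume]
      fun ξ => ((‖ξ‖ ^ a : ℝ) : ℂ) * bumpP b ξ₀ ξ := fun b => MemLp.coeFn_toLp _
    refine ae_zero_of_synth ?_ fun x => ?_
    · refine (L2.integrable_inner (𝕜 := ℂ) h (memLp_weight hn (bumpP 0 ξ₀) ha).toLp).congr ?_
      filter_upwards [hco 0] with ξ h1
      rw [h1, RCLike.inner_apply, mul_comm]
    · have h0 := hh _ (⟨bumpP (-x) ξ₀, _, bumpP_supp (-x) ξ₀, hco (-x)⟩ :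
        (memLp_weight hn (bumpP (-x) ξ₀) ha).toLp ∈ wSub n a)
      rw [L2.inner_def] at h0
      have h1 : ek (-x) ξ₀ * synth (fun ξ => (starRingEnd ℂ) (h ξ) *
          (((‖ξ‖ ^ a : ℝ) : ℂ) * bumpP 0 ξ₀ ξ)) x = 0 := by
        rw [← h0, synth, ← integral_const_mul]
        refine integral_congr_ae ?_
        filter_upwards [hco (-x)] with ξ h1
        rw [h1, RCLike.inner_apply, bumpP_mod (-x), neg_neg]; ring
      refine (mul_eq_zero.1 h1).resolve_left fun h2 => ?_
      have := norm_ek (-x) ξ₀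
      rw [h2, norm_zero] at this
      exact zero_ne_one this
  have key2 : ∀ᵐ ξ, ∀ j : ℕ, (starRingEnd ℂ) (h ξ) *
      (((‖ξ‖ ^ a : ℝ) : ℂ) * bumpP 0 (TopologicalSpace.denseSeq (Spc n) j) ξ) = 0 :=
    ae_all_iff.2 fun j => key _
  refine Lp.ext ?_
  filter_upwards [key2, ae_ne_zero hn, Lp.coeFn_zero ℂ 2 (volume : Measure (Spc n))] with ξ h1 h2 h3
  rw [h3, Pi.zero_apply]
  have ho : IsOpen {ζ : Spc n | bumpP 0 0 (ξ - ζ) ≠ 0} :=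
    isOpen_ne_fun ((bumpP 0 0).continuous.comp (continuous_const.sub continuous_id))
      continuous_const
  obtain ⟨j, hj⟩ := (TopologicalSpace.denseRange_denseSeq (Spc n)).exists_mem_open ho
    ⟨ξ, by simpa using bumpP_zero_ne⟩
  have h4 := h1 j
  rw [bumpP_trans] at h4
  have h5 : ((‖ξ‖ ^ a : ℝ) : ℂ) ≠ 0 := by
    exact_mod_cast (Real.rpow_pos_of_pos (norm_pos_iff.2 h2) a).ne'
  have h6 := (mul_eq_zero.1 h4).resolve_right (mul_ne_zero h5 hj)
  simpa using h6

lemma fourierS_conj {n : ℕ} (f : Spc n → ℝ) (ξ : Spc n) :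
    (starRingEnd ℂ) (fourierS f ξ) = fourierS f (-ξ) := by
  have h := fourierS_neg_eq f (-ξ)
  rw [neg_neg] at h
  rw [h, fourierS_neg_eq, ← integral_conj]
  refine integral_congr_ae (.of_forall fun x => ?_)
  simp only [map_mul, Complex.conj_ofReal, conj_ek]
  congr 1
  simp [ek]

/-- A bound for the pairings with compactly supported test functions controls the homogeneous
Sobolev norm. -/
lemma DsN_le_of_tested {n : ℕ} (hn : 1 ≤ n) {σ : ℝ} (h1 : -(n : ℝ) < 2 * σ)
    (h2 : -(n : ℝ) < 2 * (-σ)) (φ : SchwartzMap (Spc n) ℝ) {K : ℝ≥0∞}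
    (H : ∀ (P : SchwartzMap (Spc n) ℂ) (R : ℝ), (∀ x, R < ‖x‖ → 𝓕⁻ P x = 0) → ∀ M : ℝ, 0 < M →
      ∫⁻ ξ, ‖P ξ‖ₑ ^ 2 * ENNReal.ofReal (‖ξ‖ ^ (-(2 * σ))) ≤ ENNReal.ofReal (M ^ 2) →
      ‖∫ x, (φ x : ℂ) * 𝓕⁻ P x‖ₑ ≤ ENNReal.ofReal M * K) :
    DsN σ φ ≤ K := by
  rcases eq_or_ne K ⊤ with hK | hK
  · rw [hK]; exact le_top
  set Φ : SchwartzMap (Spc n) ℂ := 𝓕 (φ.postcompCLM (𝕜 := ℝ) Complex.ofRealCLM) with hΦ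
  have hΦe : ∀ ξ, Φ ξ = fourierS φ ξ := fun ξ => rfl
  set κ : Lp ℂ 2 (volume : Measure (Spc n)) := (memLp_weight hn Φ h1).toLp with hκ
  have hκe : κ =ᵐ[volume] fun ξ => ((‖ξ‖ ^ σ : ℝ) : ℂ) * Φ ξ := MemLp.coeFn_toLp _
  have hinner : ∀ v ∈ wSub n (-σ), ‖inner ℂ κ v‖ ≤ ‖v‖ * K.toReal := by
    intro v hv
    rcases eq_or_ne v 0 with h0 | h0
    · simp [h0]
    obtain ⟨P, R, hR, hP⟩ := hv
    have hvpos : 0 < ‖v‖ := norm_pos_iff.2 h0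
    have e1 : inner ℂ κ v = ∫ x, (φ x : ℂ) * 𝓕⁻ P x := by
      simp only [← synth_schwartz]
      rw [integral_mul_synth φ P.integrable, L2.inner_def]
      refine integral_congr_ae ?_
      filter_upwards [hP, hκe, ae_ne_zero hn] with ξ g1 g2 g3
      have hpos : 0 < ‖ξ‖ := norm_pos_iff.2 g3
      have g4 : ((‖ξ‖ ^ (-σ) : ℝ) : ℂ) * ((‖ξ‖ ^ σ : ℝ) : ℂ) = 1 := by
        rw [← Complex.ofReal_mul, ← Real.rpow_add hpos]; simp
      rw [g1, g2, RCLike.inner_apply, map_mul, hΦe, fourierS_conj, Complex.conj_ofReal]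
      linear_combination (P ξ * fourierS φ (-ξ)) * g4
    have e2 : ∫⁻ ξ, ‖P ξ‖ₑ ^ 2 * ENNReal.ofReal (‖ξ‖ ^ (-(2 * σ))) ≤ ENNReal.ofReal (‖v‖ ^ 2) := by
      refine le_of_eq ?_
      have := eLpNorm_nnreal_pow_eq_lintegral (μ := (volume : Measure (Spc n))) (p := 2)
        (f := v) two_ne_zero
      have e : ((2 : NNReal) : ℝ) = 2 := rfl
      simp only [e, ENNReal.rpow_two] at this
      have e3 : ENNReal.ofReal (‖v‖ ^ 2) = eLpNorm v 2 volume ^ 2 := by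
        rw [ENNReal.ofReal_pow (norm_nonneg _), Lp.norm_def, ENNReal.ofReal_toReal (Lp.eLpNorm_ne_top v)]
      rw [e3]
      refine Eq.trans (lintegral_congr_ae ?_) this.symm
      filter_upwards [hP] with ξ g1
      have g2 : ‖((‖ξ‖ ^ (-σ) : ℝ) : ℂ)‖ₑ = ENNReal.ofReal (‖ξ‖ ^ (-σ)) := by
        rw [← ofReal_norm, Complex.norm_real, Real.norm_of_nonneg (by positivity)]
      rw [g1, enorm_mul, mul_pow, mul_comm, g2,
        ← ENNReal.ofReal_pow (by positivity), ← Real.rpow_natCast, ← Real.rpow_mul (norm_nonneg _)]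
      congr 3; push_cast; ring
    have e3 := H P R hR ‖v‖ hvpos e2
    rw [← e1, ← ofReal_norm, ← ENNReal.ofReal_toReal hK, ← ENNReal.ofReal_mul hvpos.le] at e3
    exact (ENNReal.ofReal_le_ofReal_iff (by positivity)).1 e3
  have hdense : (wSub n (-σ)).topologicalClosure = ⊤ :=
    (Submodule.topologicalClosure_eq_top_iff).2 (wSub_orthogonal hn h2)
  have hcl : IsClosed {v : Lp ℂ 2 (volume : Measure (Spc n)) | ‖inner ℂ κ v‖ ≤ ‖v‖ * K.toReal} :=
    isClosed_le (by fun_prop) (by fun_prop)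
  have hmem : κ ∈ closure (wSub n (-σ) : Set (Lp ℂ 2 (volume : Measure (Spc n)))) := by
    rw [← Submodule.topologicalClosure_coe, hdense]; trivial
  have hfin : ‖inner ℂ κ κ‖ ≤ ‖κ‖ * K.toReal := closure_minimal hinner hcl hmem
  rw [inner_self_eq_norm_sq_to_K] at hfin
  have hk : ‖κ‖ ≤ K.toReal := by
    rcases eq_or_ne ‖κ‖ 0 with h0 | h0
    · rw [h0]; positivity
    · have hpos : 0 < ‖κ‖ := lt_of_le_of_ne (norm_nonneg _) (Ne.symm h0)
      rw [norm_pow, RCLike.norm_ofReal, abs_of_pos hpos, sq] at hfin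
      exact le_of_mul_le_mul_left hfin hpos
  have hD : DsN σ φ = ENNReal.ofReal ‖κ‖ := by
    rw [Lp.norm_def, ENNReal.ofReal_toReal (Lp.eLpNorm_ne_top κ), eLpNorm_congr_ae hκe, DsN]
    refine eLpNorm_congr_norm_ae (.of_forall fun ξ => ?_)
    rw [hΦe, norm_mul, norm_mul, Complex.norm_real, norm_norm]
  rw [hD, ← ENNReal.ofReal_toReal hK]
  exact ENNReal.ofReal_le_ofReal hk

/-- The Li–Zhou inequality (Lemma 3.5). -/
theorem li_zhou_inequality (n : ℕ) (hn : 2 ≤ n) (σ : ℝ)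
    (hσ1 : 1/2 < 1 - σ) (hσ2 : 1 - σ < (n : ℝ)/2)
    (p₁ p₂ : ℝ) (hp₁ : 1/p₁ = 1/2 + (1 - σ)/(n : ℝ))
    (hp₂ : 1/p₂ = 1/2 + (1/2 - σ)/((n : ℝ) - 1)) :
    ∃ C > (0 : ℝ), ∀ (f g : SchwartzMap (Spc n) ℝ) (F u : STn n → ℝ),
      ContDiff ℝ ∞ F → SchwartzInX F → ContDiff ℝ ∞ u → SchwartzInX u →
      (∀ z : STn n, 0 ≤ z.1 → boxD u z = F z) →
      (∀ x, u (0, x) = f x) → (∀ x, dtD u (0, x) = g x) →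
      ∀ t : ℝ, 0 ≤ t →
        DsN σ (fun x => u (t, x)) ≤
          DsN σ f + DsN (σ - 1) g +
          ENNReal.ofReal C *
            (∫⁻ τ in Set.Ioc (0 : ℝ) t,
              eLpNorm (Set.indicator {x : Spc n | ‖x‖ < (1 + τ)/2} (fun x => F (τ, x)))
                (ENNReal.ofReal p₁) volume) +
          ENNReal.ofReal C *
            (∫⁻ τ in Set.Ioc (0 : ℝ) t,
              ENNReal.ofReal ((Real.sqrt (1 + τ ^ 2)) ^ (-(n : ℝ)/2 + 1 - σ)) *
                mixN n 1 p₂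
                  (Set.indicator {x : Spc n | (1 + τ)/2 ≤ ‖x‖} (fun x => F (τ, x)))) := by
  obtain ⟨C, hC, H⟩ := tested_bound hn hσ1 hσ2 hp₁ hp₂
  refine ⟨C, hC, fun f g F u hF _ hu hus hbox hf hg t ht => ?_⟩
  obtain ⟨φ, hφ⟩ := hus t
  have e : (fun x => u (t, x)) = φ := funext hφ
  have hn' : (2 : ℝ) ≤ n := by exact_mod_cast hn
  rw [e]
  refine DsN_le_of_tested (by omega) (by linarith) (by linarith) φ fun P R hR M hM hPM => ?_
  have := H f g φ F u hF hu hbox hf hg t ht hφ P R hR M hM hPM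
  simpa only [hφ] using this
end

section
/- Suppose the real coefficients {A^{αβ} : α, β = 0,1,2,3} satisfy the null condition. Then for each Klainerman vector field Γ_l (l = 0, …, 10) on ℝ × ℝ³ there exists a set of real coefficients {Ã_l^{αβ} : α, β = 0,1,2,3} also satisfying the null condition such that for all C^∞ functions v, w on ℝ × ℝ³: Γ_l( A^{αβ}(∂_α v)(∂_β w) ) = A^{αβ}(∂_α Γ_l v)(∂_β w) + A^{αβ}(∂_α v)(∂_β Γ_l w) + Ã_l^{αβ}(∂_α v)(∂_β w), with summation over repeated indices α, β ∈ {0,1,2,3}. -/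
/-!
Every Klainerman field is an affine vector field `Γ = ∑_γ (c_γ + ∑_α M_{αγ} x_α) ∂_γ` with
constant `c` and `M`, so `[∂_α, Γ] = ∑_γ M_{αγ} ∂_γ` (`pd4_affField`).  By the Leibniz rule the
defect in commuting `Γ` with the form `A` is again a constant-coefficient bilinear form in the
gradients, whose value on `(X, X)` is `-(A(MX, X) + A(X, MX))`.

The null condition forces the symmetric part of `A` to be a multiple of the Minkowski form
(`NullCond.symm_eq`).  Hence the new form is null as soon as the Minkowski product of `MX` and `X`
vanishes for every null `X`, i.e. `M` is tangent to the light cone (`affField_commutes`).  This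
holds for translations (`M = 0`), for boosts and rotations (`M` is in the Lorentz Lie algebra) and
for scaling (`M` is the identity).
-/

open MeasureTheory Real ENNReal FourierTransform
open scoped ContDiff

/-- Spacetime coordinates: `coord4 0` is `t`, `coord4 j` is `x_j` for `j = 1, 2, 3`. -/
noncomputable def coord4 (α : Fin 4) (p : STn 3) : ℝ := Fin.cases p.1 (fun j => p.2 j) α

/-- The coordinate basis of spacetime, with the time direction at index `0`. -/
noncomputable def basis4 (α : Fin 4) : STn 3 :=
  Fin.cases (1, 0) (fun j => (0, EuclideanSpace.single j 1)) α

/-- The Minkowski bilinear form, with signature `(+, −, −, −)`. -/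
def mink (X Y : Fin 4 → ℝ) : ℝ := X 0 * Y 0 - X 1 * Y 1 - X 2 * Y 2 - X 3 * Y 3

lemma pd4_eq (α : Fin 4) (f : STn 3 → ℝ) (p : STn 3) : pd4 α f p = fderiv ℝ f p (basis4 α) := by
  refine Fin.cases ?_ (fun j => ?_) α <;> simp [pd4, basis4, dtD, dxD, dirD]

lemma coord4_basis4 (α β : Fin 4) : coord4 α (basis4 β) = if β = α then 1 else 0 := by
  fin_cases α <;> fin_cases β <;> simp [coord4, basis4, Fin.cases, Fin.induction, Fin.induction.go]

lemma hasFDerivAt_coord4 (α : Fin 4) :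
    ∃ L : STn 3 →L[ℝ] ℝ, (∀ p, L p = coord4 α p) ∧ ∀ p, HasFDerivAt (coord4 α) L p := by
  refine Fin.cases ?_ (fun j => ?_) α
  · exact ⟨ContinuousLinearMap.fst ℝ ℝ _, fun p => rfl,
      fun p => (ContinuousLinearMap.fst ℝ ℝ (Spc 3)).hasFDerivAt⟩
  · exact ⟨(EuclideanSpace.proj j).comp (ContinuousLinearMap.snd ℝ ℝ _), fun p => rfl,
      fun p => ((EuclideanSpace.proj j).comp
        (ContinuousLinearMap.snd ℝ ℝ (Spc 3))).hasFDerivAt⟩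

lemma differentiableAt_coord4 (α : Fin 4) (p : STn 3) : DifferentiableAt ℝ (coord4 α) p := by
  obtain ⟨L, -, hL⟩ := hasFDerivAt_coord4 α
  exact (hL p).differentiableAt

lemma pd4_coord4 (α β : Fin 4) (p : STn 3) :
    pd4 β (coord4 α) p = if β = α then 1 else 0 := by
  obtain ⟨L, hL, hd⟩ := hasFDerivAt_coord4 α
  rw [pd4_eq, (hd p).fderiv, hL, coord4_basis4]

lemma pd4_mul (α : Fin 4) {f g : STn 3 → ℝ} {p : STn 3} (hf : DifferentiableAt ℝ f p)
    (hg : DifferentiableAt ℝ g p) :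
    pd4 α (fun y => f y * g y) p = pd4 α f p * g p + f p * pd4 α g p := by
  simp only [pd4_eq]
  rw [fderiv_fun_mul hf hg]
  simp
  ring

lemma pd4_sum (α : Fin 4) {f : Fin 4 → STn 3 → ℝ} {p : STn 3}
    (hf : ∀ i, DifferentiableAt ℝ (f i) p) :
    pd4 α (fun y => ∑ i, f i y) p = ∑ i, pd4 α (f i) p := by
  simp only [pd4_eq]
  rw [fderiv_fun_sum (fun i _ => hf i)]
  simp

lemma pd4_const_mul (α : Fin 4) (c : ℝ) {f : STn 3 → ℝ} {p : STn 3}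
    (hf : DifferentiableAt ℝ f p) : pd4 α (fun y => c * f y) p = c * pd4 α f p := by
  simp only [pd4_eq]
  rw [fderiv_const_mul hf]
  simp

lemma contDiff_pd4 (α : Fin 4) {f : STn 3 → ℝ} (hf : ContDiff ℝ ∞ f) :
    ContDiff ℝ ∞ (pd4 α f) := by
  have h : pd4 α f = fun p => fderiv ℝ f p (basis4 α) := funext (pd4_eq α f)
  rw [h]
  exact (hf.fderiv_right (m := ∞) (by simp)).clm_apply contDiff_const

lemma differentiableAt_pd4 (α : Fin 4) {f : STn 3 → ℝ} (hf : ContDiff ℝ ∞ f) (p : STn 3) :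
    DifferentiableAt ℝ (pd4 α f) p :=
  (contDiff_pd4 α hf).differentiable (by simp) p

lemma pd4_comm (α β : Fin 4) {f : STn 3 → ℝ} (hf : ContDiff ℝ ∞ f) (p : STn 3) :
    pd4 α (pd4 β f) p = pd4 β (pd4 α f) p := by
  have hd : DifferentiableAt ℝ (fderiv ℝ f) p :=
    (hf.fderiv_right (m := ∞) (by simp)).differentiable (by simp) p
  have key : ∀ α β, pd4 α (pd4 β f) p = fderiv ℝ (fderiv ℝ f) p (basis4 α) (basis4 β) := by
    intro α β
    rw [pd4_eq, show pd4 β f = fun p => fderiv ℝ f p (basis4 β) from funext (pd4_eq β f),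
      fderiv_clm_apply hd (differentiableAt_const _)]
    simp
  rw [key, key]
  exact (hf.contDiffAt.isSymmSndFDerivAt (by
    simpa using WithTop.coe_le_coe.2 (le_top : (2 : ℕ∞) ≤ ⊤))).eq _ _

/-- The coefficient `c_γ + ∑_α M_{αγ} x_α` of `∂_γ` in an affine vector field; `M` is indexed so
that `∂_α` of this coefficient is `M_{αγ}`. -/
noncomputable def affCoeff (c : Fin 4 → ℝ) (M : Fin 4 → Fin 4 → ℝ) (γ : Fin 4) (p : STn 3) : ℝ :=
  c γ + ∑ α, M α γ * coord4 α p

lemma differentiableAt_affCoeff (c : Fin 4 → ℝ) (M : Fin 4 → Fin 4 → ℝ) (γ : Fin 4) (p : STn 3) :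
    DifferentiableAt ℝ (affCoeff c M γ) p := by
  unfold affCoeff
  exact (DifferentiableAt.fun_sum
    fun i _ => (differentiableAt_coord4 i p).const_mul _).const_add _

lemma pd4_affCoeff (c : Fin 4 → ℝ) (M : Fin 4 → Fin 4 → ℝ) (α γ : Fin 4) (p : STn 3) :
    pd4 α (affCoeff c M γ) p = M α γ := by
  have h1 : pd4 α (affCoeff c M γ) p = pd4 α (fun y => ∑ i, M i γ * coord4 i y) p := by
    simp only [pd4_eq]
    unfold affCoeff
    rw [fderiv_const_add]
  rw [h1, pd4_sum _ fun i => (differentiableAt_coord4 i p).const_mul _]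
  simp [pd4_const_mul _ _ (differentiableAt_coord4 _ p), pd4_coord4]

/-- Commuting `∂_α` past an affine vector field `Γ` costs the first-order term `M_{αγ} ∂_γ`. -/
lemma pd4_affField (c : Fin 4 → ℝ) (M : Fin 4 → Fin 4 → ℝ) (α : Fin 4) {f : STn 3 → ℝ}
    (hf : ContDiff ℝ ∞ f) (p : STn 3) :
    pd4 α (fun y => ∑ γ, affCoeff c M γ y * pd4 γ f y) p =
      ∑ γ, M α γ * pd4 γ f p + ∑ γ, affCoeff c M γ p * pd4 γ (pd4 α f) p := by
  rw [pd4_sum _ fun γ => (differentiableAt_affCoeff c M γ p).fun_mul (differentiableAt_pd4 γ hf p),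
    ← Finset.sum_add_distrib]
  refine Finset.sum_congr rfl fun γ _ => ?_
  rw [pd4_mul _ (differentiableAt_affCoeff c M γ p) (differentiableAt_pd4 γ hf p), pd4_affCoeff,
    pd4_comm α γ hf]

lemma pd4_QF (A : Fin 4 → Fin 4 → ℝ) (γ : Fin 4) {v w : STn 3 → ℝ} (hv : ContDiff ℝ ∞ v)
    (hw : ContDiff ℝ ∞ w) (p : STn 3) :
    pd4 γ (fun y => QF A v w y) p =
      ∑ α, ∑ β, A α β * (pd4 γ (pd4 α v) p * pd4 β w p + pd4 α v p * pd4 γ (pd4 β w) p) := by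
  have hd : ∀ α β, DifferentiableAt ℝ (fun y => pd4 α v y * pd4 β w y) p := fun α β =>
    (differentiableAt_pd4 α hv p).mul (differentiableAt_pd4 β hw p)
  simp only [QF, mul_assoc]
  rw [pd4_sum _ fun α => DifferentiableAt.fun_sum fun β _ => (hd α β).const_mul _]
  refine Finset.sum_congr rfl fun α _ => ?_
  rw [pd4_sum _ fun β => (hd α β).const_mul _]
  refine Finset.sum_congr rfl fun β _ => ?_
  rw [pd4_const_mul _ _ (hd α β),
    pd4_mul _ (differentiableAt_pd4 α hv p) (differentiableAt_pd4 β hw p)]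

/-- The symmetric part of a null form is a multiple of the Minkowski form: test the null
condition on `e₀ ± e_j` and on `5 e₀ + 3 e_i + 4 e_j`. -/
lemma NullCond.symm_eq {A : Fin 4 → Fin 4 → ℝ} (hA : NullCond A) (X Y : Fin 4 → ℝ) :
    ∑ α, ∑ β, A α β * (X α * Y β + Y α * X β) = 2 * A 0 0 * mink X Y := by
  have a1 := hA ![1, 1, 0, 0] (by simp)
  have b1 := hA ![1, -1, 0, 0] (by simp)
  have a2 := hA ![1, 0, 1, 0] (by simp)
  have b2 := hA ![1, 0, -1, 0] (by simp)
  have a3 := hA ![1, 0, 0, 1] (by simp)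
  have b3 := hA ![1, 0, 0, -1] (by simp)
  have c12 := hA ![5, 3, 4, 0] (by simp; norm_num)
  have c13 := hA ![5, 3, 0, 4] (by simp; norm_num)
  have c23 := hA ![5, 0, 3, 4] (by simp; norm_num)
  simp [Fin.sum_univ_four] at a1 b1 a2 b2 a3 b3 c12 c13 c23
  have h11 : A 1 1 = -A 0 0 := by linarith
  have h22 : A 2 2 = -A 0 0 := by linarith
  have h33 : A 3 3 = -A 0 0 := by linarith
  have h01 : A 1 0 = -A 0 1 := by linarith
  have h02 : A 2 0 = -A 0 2 := by linarith
  have h03 : A 3 0 = -A 0 3 := by linarith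
  have h12 : A 2 1 = -A 1 2 := by linarith
  have h13 : A 3 1 = -A 1 3 := by linarith
  have h23 : A 3 2 = -A 2 3 := by linarith
  simp only [Fin.sum_univ_four, mink, h11, h22, h33, h01, h02, h03, h12, h13, h23]
  ring

/-- The result for an affine vector field whose linear part `X ↦ MX` is tangent to the light
cone. -/
lemma affField_commutes (A : Fin 4 → Fin 4 → ℝ) (hA : NullCond A) (c : Fin 4 → ℝ)
    (M : Fin 4 → Fin 4 → ℝ)
    (hM : ∀ X : Fin 4 → ℝ, mink X X = 0 → mink (fun α => ∑ γ, M α γ * X γ) X = 0)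
    (Γ : (STn 3 → ℝ) → STn 3 → ℝ)
    (hΓ : ∀ f p, Γ f p = ∑ γ, affCoeff c M γ p * pd4 γ f p) :
    ∃ At : Fin 4 → Fin 4 → ℝ, NullCond At ∧
      ∀ v w : STn 3 → ℝ, ContDiff ℝ ∞ v → ContDiff ℝ ∞ w → ∀ z : STn 3,
        Γ (fun y => QF A v w y) z = QF A (Γ v) w z + QF A v (Γ w) z + QF At v w z := by
  refine ⟨fun γ δ => -(∑ α, A α δ * M α γ) - ∑ β, A γ β * M β δ, fun X hX => ?_,
    fun v w hv hw z => ?_⟩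
  · have h := hA.symm_eq (fun α => ∑ γ, M α γ * X γ) X
    rw [hM X (by simp only [mink]; linarith)] at h
    simp only [Fin.sum_univ_four] at h ⊢
    linear_combination -h
  · have hΓ' : ∀ f, Γ f = fun p => ∑ γ, affCoeff c M γ p * pd4 γ f p := fun f => funext (hΓ f)
    rw [hΓ, hΓ' v, hΓ' w]
    simp only [pd4_QF A _ hv hw]
    simp only [QF, pd4_affField c M _ hv, pd4_affField c M _ hw]
    generalize hva : (fun α => pd4 α v z) = V
    generalize hwa : (fun α => pd4 α w z) = W
    generalize hvb : (fun γ α => pd4 γ (pd4 α v) z) = VV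
    generalize hwb : (fun γ α => pd4 γ (pd4 α w) z) = WW
    generalize hab : (fun γ => affCoeff c M γ z) = a
    simp only [fun α => congrFun hva α, fun α => congrFun hwa α, fun γ => congrFun hab γ,
      fun γ α => congrFun (congrFun hvb γ) α, fun γ α => congrFun (congrFun hwb γ) α]
    simp only [Fin.sum_univ_four]
    ring

/-- The null condition is preserved under differentiation by the Klainerman
vector fields (Lemma 5.3). -/
theorem null_condition_commutes (A : Fin 4 → Fin 4 → ℝ) (hA : NullCond A) (l : GIdx 3) :
    ∃ At : Fin 4 → Fin 4 → ℝ, NullCond At ∧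
      ∀ v w : STn 3 → ℝ, ContDiff ℝ ∞ v → ContDiff ℝ ∞ w → ∀ z : STn 3,
        Gop l (fun y => QF A v w y) z =
          QF A (Gop l v) w z + QF A v (Gop l w) z + QF At v w z := by
  have hc : ∀ p : STn 3, coord4 0 p = p.1 ∧ coord4 1 p = p.2 0 ∧ coord4 2 p = p.2 1 ∧
    coord4 3 p = p.2 2 := fun p => ⟨rfl, rfl, rfl, rfl⟩
  have hp : pd4 0 = dtD ∧ pd4 1 = dxD 0 ∧ pd4 2 = dxD 1 ∧ pd4 3 = dxD 2 :=
    ⟨rfl, rfl, rfl, rfl⟩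
  rcases l with (_ | j) | j | ⟨j, k⟩ | _
  · refine affField_commutes A hA (Pi.single 0 1) 0 (fun X hX => by simp [mink]) _ fun f p => ?_
    simp [Gop, affCoeff, Fin.sum_univ_four, hp]
  · refine affField_commutes A hA (Pi.single j.succ 1) 0 (fun X hX => by simp [mink]) _
      fun f p => ?_
    fin_cases j <;> simp [Gop, affCoeff, hp, Pi.single_apply]
  · refine affField_commutes A hA 0
      (fun α γ => (if α = 0 ∧ γ = j.succ then 1 else 0) + (if α = j.succ ∧ γ = 0 then 1 else 0))
      (fun X hX => ?_) _ fun f p => ?_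
    · fin_cases j <;> simp [mink] <;> ring
    · fin_cases j <;> simp [Gop, LD, affCoeff, Fin.sum_univ_four, hp, hc] <;> ring
  · refine affField_commutes A hA 0
      (fun α γ => (if α = j.succ ∧ γ = k.succ then 1 else 0) -
        (if α = k.succ ∧ γ = j.succ then 1 else 0))
      (fun X hX => ?_) _ fun f p => ?_
    · fin_cases j <;> fin_cases k <;> simp [mink] <;> ring
    · fin_cases j <;> fin_cases k <;>
        simp [Gop, RotD, affCoeff, Fin.sum_univ_four, hp, hc] <;> ring
  · refine affField_commutes A hA 0 (fun α γ => if α = γ then 1 else 0)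
      (fun X hX => ?_) _ fun f p => ?_
    · simpa using hX
    · simp [Gop, SD, affCoeff, Fin.sum_univ_four, Fin.sum_univ_three, hp, hc]
      ring
end
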